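/- arXiv:2110.12549 — 3 statements merged into one kernel-verified Lean document; each statement's English description precedes it below -/
import Mathlib

section
/- Fix ε ∈ (0, 1/2). For N ≥ 2 and 1 ≤ i ≤ N, define b*_{i,N}(x) = a_i(x)·a_{i+1}(x) if a_i(x)·a_{i+1}(x) ≤ N (log N)^{3/2+ε}, and 0 otherwise, and S*_N(x) = ∑_{i=1}^{N} b*_{i,N}(x). Then for Lebesgue almost every x ∈ (0,1), lim_{N→∞} S*_N(x)/(N (log N)^2) = 1/(2 log 2). -/
/-!
The Gauss measure `dx / ((1 + x) log 2)` is a `T`-invariant probability measure on `(0,1)`, so it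
suffices to prove the convergence almost surely for it. Write `φ_m (n) = n` for `n ≤ m` and `0`
otherwise; the sum in question is the Birkhoff sum of `φ_m (a₁ a₂)` with `m = ⌊N (log N)^(3/2+ε)⌋`.

*Mixing.* The transfer operator `U` of `T` with respect to the Gauss measure contracts the
Lipschitz constant of a function by the factor `7/8` (`LipIoo.transfer`): in `U f x - U f y`, the
variation of the branches and, after an Abel summation, the variation of the branch weights
contribute `5/8` and `1/4`. Since `U²` turns a function of the cylinders `(a₁, a₂)` into a Lipschitz
function, correlations of `φ_m (a₁ a₂)` decay exponentially, and the Birkhoff sum of length `N` has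
variance at most `16 N C` with `C = O(m log m + (log m)⁴)` (`variance_bound`,
`corrConst_trunc_le`); the main part of `C` is the second moment `∑_{ab ≤ m} 1`.

*Mean.* The mean of `φ_m (a₁ a₂)` is `(1 / log 2) ∑_{ab ≤ m} 1 / (ab) + O(log m)`, that is
`(log m)² / (2 log 2) + O(log m)` (`truncMean_asymp`), and `log m ∼ log N`.

*Conclusion.* The variance divided by `(N (log N)²)²` is `O((log N)^(-(3/2 - ε)))`, and
`3/2 - ε > 1`. Hence for some `α < 1` it is summable along `N = ⌈exp (k^α)⌉`, and the convergence
holds almost surely along this sequence. As `α < 1`, the values of `N (log N)²` at consecutive terms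
have ratio tending to `1`; the sums are nonnegative and increase with `N`, because the truncation
level does, so the convergence extends to all `N` (`tendsto_of_sparse`).
-/

open MeasureTheory Filter Real Set

/-- The Gauss map `T(x) = 1/x - ⌊1/x⌋`, with `T(0) = 0`. -/
noncomputable def gaussMap (x : ℝ) : ℝ := if x = 0 then 0 else 1 / x - ⌊1 / x⌋

/-- The `n`-th partial quotient `a_n(x) = ⌊1 / T^{n-1}(x)⌋` (for `n ≥ 1`). -/
noncomputable def pq (n : ℕ) (x : ℝ) : ℕ := ⌊1 / (gaussMap^[n - 1] x)⌋₊

/-- `S_n(x) = ∑_{i=1}^n a_i(x) a_{i+1}(x)`. -/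
noncomputable def S (n : ℕ) (x : ℝ) : ℕ := ∑ i ∈ Finset.Icc 1 n, pq i x * pq (i + 1) x

/-! ### The Gauss measure and the transfer operator -/

/-- The density `1 / ((1 + x) log 2)` of the Gauss measure. -/
noncomputable def gaussDensity (x : ℝ) : ENNReal := ENNReal.ofReal (1 / (Real.log 2 * (1 + x)))

/-- The Gauss measure, as a measure on `ℝ` carried by `(0,1)`. -/
noncomputable def gaussMeasure : Measure ℝ :=
  (volume.restrict (Ioo (0:ℝ) 1)).withDensity gaussDensity

/-- The weight of the inverse branch `y ↦ 1 / (a + 1 + y)` in the transfer operator; the index is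
shifted so that the partial quotient is `a + 1`. -/
noncomputable def branchWeight (a : ℕ) (y : ℝ) : ℝ := (1 + y) / ((a + 1 + y) * (a + 2 + y))

/-- The transfer operator of the Gauss map with respect to the Gauss measure, acting on
functions with values in `[0, ∞]`. -/
noncomputable def transferE (F : ℝ → ENNReal) (y : ℝ) : ENNReal :=
  ∑' a : ℕ, ENNReal.ofReal (branchWeight a y) * F (1 / (a + 1 + y))

/-- The transfer operator acting on real functions. -/
noncomputable def transfer (f : ℝ → ℝ) (y : ℝ) : ℝ :=
  ∑' a : ℕ, branchWeight a y * f (1 / (a + 1 + y))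

lemma measurable_gaussMap : Measurable gaussMap := by
  unfold gaussMap
  refine Measurable.ite (measurableSet_singleton 0) measurable_const ?_
  have h : Measurable fun x : ℝ => 1 / x := by fun_prop
  exact h.sub ((measurable_from_top (f := fun n : ℤ => (n : ℝ))).comp h.floor)

lemma measurable_pq (n : ℕ) : Measurable (pq n) := by
  unfold pq
  exact ((measurable_const (a := (1:ℝ))).div (measurable_gaussMap.iterate _)).nat_floor

lemma measurable_gaussDensity : Measurable gaussDensity := by
  unfold gaussDensity; fun_prop

lemma branch_mem {a : ℕ} {y : ℝ} (hy : y ∈ Ioo (0:ℝ) 1) : 1 / (a + 1 + y) ∈ Ioo (0:ℝ) 1 := by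
  have ha : (0:ℝ) ≤ a := a.cast_nonneg
  obtain ⟨h0, h1⟩ := hy
  constructor
  · positivity
  · rw [div_lt_one (by positivity)]; linarith

lemma branch_floor {a : ℕ} {y : ℝ} (hy : y ∈ Ioo (0:ℝ) 1) :
    ⌊1 / (1 / ((a:ℝ) + 1 + y))⌋₊ = a + 1 := by
  have ha : (0:ℝ) ≤ a := a.cast_nonneg
  obtain ⟨h0, h1⟩ := hy
  rw [one_div_one_div, Nat.floor_eq_iff (by positivity)]
  push_cast
  constructor <;> linarith

lemma gaussMap_branch {a : ℕ} {y : ℝ} (hy : y ∈ Ioo (0:ℝ) 1) :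
    gaussMap (1 / ((a:ℝ) + 1 + y)) = y := by
  have ha : (0:ℝ) ≤ a := a.cast_nonneg
  obtain ⟨h0, h1⟩ := hy
  have hpos : (0:ℝ) < 1 / ((a:ℝ) + 1 + y) := by positivity
  unfold gaussMap
  rw [if_neg hpos.ne', one_div_one_div]
  have : ⌊(a:ℝ) + 1 + y⌋ = (a:ℤ) + 1 := by
    rw [Int.floor_eq_iff]; push_cast; constructor <;> linarith
  rw [this]; push_cast; ring

lemma branchWeight_nonneg {a : ℕ} {y : ℝ} (hy : y ∈ Ioo (0:ℝ) 1) : 0 ≤ branchWeight a y := by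
  have := hy.1
  unfold branchWeight; positivity

lemma measurable_transferE {F : ℝ → ENNReal} (hF : Measurable F) : Measurable (transferE F) := by
  unfold transferE
  refine Measurable.tsum fun a => ?_
  unfold branchWeight
  refine Measurable.mul (by fun_prop) (hF.comp (by fun_prop))

lemma image_branch (a : ℕ) : (fun y : ℝ => 1 / ((a:ℝ) + 1 + y)) '' Ioo 0 1
    = Ioo (1 / ((a:ℝ) + 2)) (1 / ((a:ℝ) + 1)) := by
  have ha : (0:ℝ) ≤ a := a.cast_nonneg
  ext x
  constructor
  · rintro ⟨y, ⟨h0, h1⟩, rfl⟩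
    constructor
    · exact one_div_lt_one_div_of_lt (by positivity) (by linarith)
    · exact one_div_lt_one_div_of_lt (by positivity) (by linarith)
  · rintro ⟨h0, h1⟩
    have hx : 0 < x := lt_trans (by positivity) h0
    refine ⟨1 / x - (a + 1), ⟨?_, ?_⟩, ?_⟩
    · rw [lt_div_iff₀ (by positivity)] at h1
      rw [sub_pos, lt_div_iff₀ hx]; linarith
    · rw [div_lt_iff₀ (by positivity)] at h0
      rw [sub_lt_iff_lt_add, div_lt_iff₀ hx]; linarith
    · simp

/-- Up to a countable set, `(0,1)` is the disjoint union of the images of the inverse branches. -/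
lemma Ioo_ae_eq_iUnion : (Ioo (0:ℝ) 1) =ᵐ[volume]
    ⋃ a : ℕ, Ioo (1 / ((a:ℝ) + 2)) (1 / ((a:ℝ) + 1)) := by
  have hc : (range fun a : ℕ => 1 / ((a:ℝ) + 1)).Countable := countable_range _
  have h0 := hc.ae_notMem (volume : Measure ℝ)
  filter_upwards [h0] with x hx
  apply propext
  change x ∈ Ioo (0:ℝ) 1 ↔ x ∈ ⋃ a : ℕ, Ioo (1 / ((a:ℝ) + 2)) (1 / ((a:ℝ) + 1))
  rw [mem_iUnion]
  constructor
  · rintro ⟨h0, h1⟩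
    have h1x : 1 < 1 / x := by rwa [lt_div_iff₀ h0, one_mul]
    have hfl : 1 ≤ ⌊1 / x⌋₊ := Nat.le_floor (by exact_mod_cast h1x.le)
    obtain ⟨a, ha⟩ : ∃ a, ⌊1 / x⌋₊ = a + 1 := ⟨⌊1 / x⌋₊ - 1, by omega⟩
    have h2 := Nat.floor_le (a := 1 / x) (by positivity)
    have h3 := Nat.lt_floor_add_one (1 / x)
    rw [ha] at h2 h3
    push_cast at h2 h3
    refine ⟨a, ?_, ?_⟩
    · rw [div_lt_iff₀ (by positivity)]
      rw [div_lt_iff₀ h0] at h3; linarith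
    · have : x ≤ 1 / ((a:ℝ) + 1) := by
        rw [le_div_iff₀ (by positivity)]; rw [le_div_iff₀ h0] at h2; linarith
      exact lt_of_le_of_ne this fun h => hx ⟨a, h.symm⟩
  · rintro ⟨a, h0, h1⟩
    have ha : (0:ℝ) ≤ a := a.cast_nonneg
    refine ⟨lt_trans (by positivity) h0, lt_of_lt_of_le h1 ?_⟩
    rw [div_le_one (by positivity)]; linarith

lemma lintegral_branches (F : ℝ → ENNReal) :
    ∫⁻ x in Ioo (0:ℝ) 1, F x = ∑' a : ℕ, ∫⁻ y in Ioo (0:ℝ) 1,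
      ENNReal.ofReal (1 / ((a:ℝ) + 1 + y) ^ 2) * F (1 / ((a:ℝ) + 1 + y)) := by
  rw [setLIntegral_congr Ioo_ae_eq_iUnion, lintegral_iUnion (fun a => measurableSet_Ioo)]
  · congr 1; ext a
    have ha : (0:ℝ) ≤ a := a.cast_nonneg
    rw [← image_branch, lintegral_image_eq_lintegral_abs_deriv_mul
      (f' := fun y => -1 / ((a:ℝ) + 1 + y) ^ 2) measurableSet_Ioo]
    · refine setLIntegral_congr_fun measurableSet_Ioo fun y hy => ?_
      have := hy.1
      rw [abs_div, abs_neg, abs_one, abs_of_pos (by positivity)]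
    · intro y hy
      have := hy.1
      have h := ((hasDerivAt_id y).const_add ((a:ℝ) + 1)).inv (by simp; positivity)
      simp only [one_div]
      exact h.hasDerivWithinAt
    · intro x hx y hy h
      have := hx.1
      have := hy.1
      simp only at h
      have := one_div_one_div ((a:ℝ) + 1 + x)
      rw [h, one_div_one_div] at this
      linarith
  · intro i j hij
    wlog h : i < j generalizing i j
    · exact (this hij.symm (by omega)).symm
    refine Set.disjoint_left.2 fun x hx hx' => ?_
    have h1 := hx.1
    have h2 := hx'.2
    have h3 : 1 / ((j:ℝ) + 1) ≤ 1 / ((i:ℝ) + 2) := by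
      apply one_div_le_one_div_of_le (by positivity)
      have : (i:ℝ) + 1 ≤ j := by exact_mod_cast h
      linarith
    linarith

lemma lintegral_gauss {F : ℝ → ENNReal} (hF : Measurable F) :
    ∫⁻ x, F x ∂gaussMeasure = ∫⁻ x in Ioo (0:ℝ) 1, gaussDensity x * F x := by
  unfold gaussMeasure
  rw [lintegral_withDensity_eq_lintegral_mul _ measurable_gaussDensity hF]
  rfl

lemma lintegral_gauss_mono {F G : ℝ → ENNReal} (hF : Measurable F) (hG : Measurable G)
    (h : ∀ x ∈ Ioo (0:ℝ) 1, F x ≤ G x) : ∫⁻ x, F x ∂gaussMeasure ≤ ∫⁻ x, G x ∂gaussMeasure := by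
  rw [lintegral_gauss hF, lintegral_gauss hG]
  exact setLIntegral_mono' measurableSet_Ioo fun x hx => by gcongr; exact h x hx

lemma lintegral_gauss_congr {F G : ℝ → ENNReal} (hF : Measurable F) (hG : Measurable G)
    (h : ∀ x ∈ Ioo (0:ℝ) 1, F x = G x) : ∫⁻ x, F x ∂gaussMeasure = ∫⁻ x, G x ∂gaussMeasure :=
  le_antisymm (lintegral_gauss_mono hF hG fun x hx => (h x hx).le)
    (lintegral_gauss_mono hG hF fun x hx => (h x hx).ge)

/-- Duality between the transfer operator and composition with the Gauss map. -/
lemma lintegral_transferE {F h : ℝ → ENNReal} (hF : Measurable F) (hh : Measurable h) :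
    ∫⁻ x, F x * h (gaussMap x) ∂gaussMeasure = ∫⁻ y, transferE F y * h y ∂gaussMeasure := by
  rw [lintegral_gauss (F := fun x => F x * h (gaussMap x))
      (hF.mul (hh.comp measurable_gaussMap)),
    lintegral_gauss (F := fun x => transferE F x * h x)
      ((measurable_transferE hF).mul hh), lintegral_branches]
  rw [← lintegral_tsum]
  · refine setLIntegral_congr_fun measurableSet_Ioo fun y hy => ?_
    have hy0 := hy.1
    simp only [transferE]
    rw [← ENNReal.tsum_mul_right, ← ENNReal.tsum_mul_left]
    congr 1; ext a
    rw [gaussMap_branch hy]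
    simp only [← mul_assoc]
    congr 2
    unfold gaussDensity branchWeight
    have hl : 0 < Real.log 2 := Real.log_pos (by norm_num)
    rw [← ENNReal.ofReal_mul (by positivity), ← ENNReal.ofReal_mul (by positivity)]
    congr 1
    have : (a:ℝ) + 1 + y + 1 ≠ 0 := by positivity
    have : (a:ℝ) + 2 + y ≠ 0 := by positivity
    have : (a:ℝ) + 1 + y ≠ 0 := by positivity
    have : 1 + y ≠ 0 := by positivity
    field_simp
    ring
  · intro a
    refine Measurable.aemeasurable (Measurable.mul (by fun_prop) ?_)
    have hm : Measurable fun y : ℝ => 1 / ((a:ℝ) + 1 + y) := by fun_prop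
    exact (measurable_gaussDensity.mul (hF.mul (hh.comp measurable_gaussMap))).comp hm

lemma measurable_transferE_iterate {F : ℝ → ENNReal} (hF : Measurable F) (n : ℕ) :
    Measurable (transferE^[n] F) := by
  induction n with
  | zero => exact hF
  | succ n ih => rw [Function.iterate_succ_apply']; exact measurable_transferE ih

lemma lintegral_transferE_iterate (n : ℕ) {F h : ℝ → ENNReal} (hF : Measurable F)
    (hh : Measurable h) :
    ∫⁻ x, F x * h (gaussMap^[n] x) ∂gaussMeasure
      = ∫⁻ y, (transferE^[n] F) y * h y ∂gaussMeasure := by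
  induction n generalizing F with
  | zero => rfl
  | succ n ih =>
    simp only [Function.iterate_succ_apply]
    rw [lintegral_transferE (h := fun x => h (gaussMap^[n] x)) hF
      (hh.comp (measurable_gaussMap.iterate n)), ih (measurable_transferE hF)]

lemma sum_branchWeight (K : ℕ) {y : ℝ} (hy : y ∈ Ioo (0:ℝ) 1) :
    ∑ a ∈ Finset.range K, branchWeight a y = K / (K + 1 + y) := by
  have hy0 := hy.1
  induction K with
  | zero => simp
  | succ K ih =>
    rw [Finset.sum_range_succ, ih]
    unfold branchWeight
    push_cast
    have : (K:ℝ) + 2 + y ≠ 0 := by positivity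
    have : (K:ℝ) + 1 + y ≠ 0 := by positivity
    have : (K:ℝ) + 1 + 1 + y ≠ 0 := by positivity
    field_simp
    ring

lemma hasSum_branchWeight {y : ℝ} (hy : y ∈ Ioo (0:ℝ) 1) :
    HasSum (fun a => branchWeight a y) 1 := by
  rw [hasSum_iff_tendsto_nat_of_nonneg (fun a => branchWeight_nonneg hy)]
  simp only [sum_branchWeight _ hy]
  simp only [add_assoc]
  exact tendsto_natCast_div_add_atTop (1 + y)

lemma transferE_one {y : ℝ} (hy : y ∈ Ioo (0:ℝ) 1) : transferE (fun _ => 1) y = 1 := by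
  unfold transferE
  simp only [mul_one]
  rw [← ENNReal.ofReal_tsum_of_nonneg (fun a => branchWeight_nonneg hy)
    (hasSum_branchWeight hy).summable, (hasSum_branchWeight hy).tsum_eq, ENNReal.ofReal_one]

lemma measurePreserving_gaussMap : MeasurePreserving gaussMap gaussMeasure gaussMeasure := by
  refine ⟨measurable_gaussMap, ?_⟩
  ext s hs
  have hi : Measurable (s.indicator (1 : ℝ → ENNReal)) := measurable_one.indicator hs
  rw [← lintegral_indicator_one hs, lintegral_map hi measurable_gaussMap,
    ← lintegral_indicator_one hs]
  have := lintegral_transferE (F := fun _ => 1) measurable_const hi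
  simp only [one_mul] at this
  rw [this]
  refine lintegral_gauss_congr ((measurable_transferE measurable_const).mul hi) hi fun x hx => ?_
  rw [transferE_one hx, one_mul]

lemma lintegral_gauss_linear (t : ℝ) :
    ∫⁻ y, ENNReal.ofReal ((1 + y) * t) ∂gaussMeasure = ENNReal.ofReal (t / Real.log 2) := by
  have hl : 0 < Real.log 2 := Real.log_pos (by norm_num)
  rw [lintegral_gauss (by fun_prop)]
  have : ∫⁻ y in Ioo (0:ℝ) 1, gaussDensity y * ENNReal.ofReal ((1 + y) * t)
      = ∫⁻ y in Ioo (0:ℝ) 1, ENNReal.ofReal (t / Real.log 2) := by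
    refine setLIntegral_congr_fun measurableSet_Ioo fun y hy => ?_
    have hy0 := hy.1
    simp only [gaussDensity]
    rw [← ENNReal.ofReal_mul (by positivity)]
    congr 1
    field_simp
  rw [this]
  simp

instance : IsProbabilityMeasure gaussMeasure := by
  have hl : 0 < Real.log 2 := Real.log_pos (by norm_num)
  constructor
  rw [← lintegral_one, lintegral_gauss measurable_const]
  simp only [mul_one, gaussDensity]
  have h_int : IntervalIntegrable (fun x : ℝ => 1 / (Real.log 2 * (1 + x))) volume 0 1 := by
    apply ContinuousOn.intervalIntegrable
    intro x hx
    rw [uIcc_of_le zero_le_one] at hx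
    have := hx.1
    have h2 : Real.log 2 * (1 + x) ≠ 0 := by positivity
    exact ContinuousAt.continuousWithinAt (by fun_prop (disch := assumption))
  have hev : ∫ x in (0:ℝ)..1, 1 / (Real.log 2 * (1 + x)) = 1 := by
    rw [intervalIntegral.integral_eq_sub_of_hasDerivAt
      (f := fun x => Real.log (1 + x) / Real.log 2) _ h_int]
    · norm_num
    · intro x hx
      rw [uIcc_of_le zero_le_one] at hx
      have := hx.1
      have h := (((hasDerivAt_id' x).const_add 1).log (by positivity)).div_const (Real.log 2)
      rwa [div_div, mul_comm] at h
  rw [intervalIntegral.integral_of_le zero_le_one, integral_Ioc_eq_integral_Ioo] at hev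
  rw [← ofReal_integral_eq_lintegral_ofReal, hev, ENNReal.ofReal_one]
  · exact ((intervalIntegrable_iff_integrableOn_Ioo_of_le zero_le_one).1 h_int)
  · filter_upwards [ae_restrict_mem measurableSet_Ioo] with x hx
    have := hx.1
    simp only [Pi.zero_apply]
    positivity

/-- A Gauss-almost sure property holds Lebesgue-almost everywhere on `(0,1)`, the Gauss density
being positive there. -/
lemma ae_of_ae_gauss {p : ℝ → Prop} (h : ∀ᵐ x ∂gaussMeasure, p x) :
    ∀ᵐ x ∂(volume.restrict (Ioo (0:ℝ) 1)), p x := by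
  unfold gaussMeasure at h
  rw [ae_withDensity_iff measurable_gaussDensity] at h
  filter_upwards [h, ae_restrict_mem measurableSet_Ioo] with x hx hm
  apply hx
  have hl : 0 < Real.log 2 := Real.log_pos (by norm_num)
  have := hm.1
  unfold gaussDensity
  simp only [ne_eq, ENNReal.ofReal_eq_zero, not_le]
  positivity

/-! ### Contraction of Lipschitz constants -/

/-- `f` is Lipschitz on `(0,1)` with constant `L`. -/
def LipIoo (L : ℝ) (f : ℝ → ℝ) : Prop :=
  ∀ x ∈ Ioo (0:ℝ) 1, ∀ y ∈ Ioo (0:ℝ) 1, |f x - f y| ≤ L * |x - y|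

/-- The `[0, ∞]`-valued function `F` agrees on `(0,1)` with a nonnegative real function that is
Lipschitz there with constant `L`. -/
def RealLip (L : ℝ) (F : ℝ → ENNReal) : Prop :=
  ∃ f : ℝ → ℝ, (∀ x ∈ Ioo (0:ℝ) 1, 0 ≤ f x ∧ F x = ENNReal.ofReal (f x)) ∧ LipIoo L f

lemma LipIoo.bounded {L : ℝ} (hL : 0 ≤ L) {f : ℝ → ℝ} (hf : LipIoo L f) :
    ∃ B, 0 ≤ B ∧ ∀ x ∈ Ioo (0:ℝ) 1, |f x| ≤ B := by
  have hm : (1/2:ℝ) ∈ Ioo (0:ℝ) 1 := by constructor <;> norm_num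
  refine ⟨|f (1/2)| + L, by positivity, fun x hx => ?_⟩
  have h1 := hf x hx _ hm
  have h2 : |x - 1/2| ≤ 1 := by rw [abs_le]; constructor <;> linarith [hx.1, hx.2]
  have h3 : L * |x - 1/2| ≤ L := mul_le_of_le_one_right hL h2
  have h4 := abs_sub_abs_le_abs_sub (f x) (f (1/2))
  linarith

lemma summable_transfer {L : ℝ} (hL : 0 ≤ L) {f : ℝ → ℝ} (hf : LipIoo L f) {y : ℝ}
    (hy : y ∈ Ioo (0:ℝ) 1) : Summable fun a : ℕ => branchWeight a y * f (1 / (a + 1 + y)) := by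
  obtain ⟨B, hB, hb⟩ := hf.bounded hL
  refine Summable.of_norm_bounded ((hasSum_branchWeight hy).summable.mul_right B) fun a => ?_
  rw [norm_mul, Real.norm_eq_abs, Real.norm_eq_abs, abs_of_nonneg (branchWeight_nonneg hy)]
  exact mul_le_mul_of_nonneg_left (hb _ (branch_mem hy)) (branchWeight_nonneg hy)

/-- The part of the difference `U f x - U f y` (with `U = transfer`) in which the branch weights
stay fixed. The first branch has Lipschitz constant at most `1` and carries mass at most `1/2`; the
others have Lipschitz constant at most `1/4`. -/
lemma sum_branch_variation {L : ℝ} (hL : 0 ≤ L) {f : ℝ → ℝ} (hf : LipIoo L f) {x y : ℝ}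
    (hx : x ∈ Ioo (0:ℝ) 1) (hy : y ∈ Ioo (0:ℝ) 1) (K : ℕ) :
    |∑ a ∈ Finset.range K, branchWeight a x * (f (1 / (a + 1 + x)) - f (1 / (a + 1 + y)))|
      ≤ 5 / 8 * L * |x - y| := by
  have hx0 := hx.1
  have hy0 := hy.1
  have hterm : ∀ a : ℕ,
      |branchWeight a x * (f (1 / (a + 1 + x)) - f (1 / (a + 1 + y)))|
        ≤ L * |x - y| * (1 / 4 * branchWeight a x + if a = 0 then 3 / 8 else 0) := by
    intro a
    have ha : (0:ℝ) ≤ a := a.cast_nonneg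
    have hw := branchWeight_nonneg (a := a) hx
    have h1 := hf _ (branch_mem (a := a) hx) _ (branch_mem (a := a) hy)
    have h2 : |1 / ((a:ℝ) + 1 + x) - 1 / (a + 1 + y)|
        = |x - y| / ((a + 1 + x) * (a + 1 + y)) := by
      rw [div_sub_div _ _ (by positivity) (by positivity), abs_div,
        abs_of_pos (a := ((a:ℝ) + 1 + x) * (a + 1 + y)) (by positivity), abs_sub_comm x y]
      congr 2; ring
    rw [h2] at h1
    rw [abs_mul, abs_of_nonneg hw]
    have h3 : branchWeight a x / ((a + 1 + x) * (a + 1 + y))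
        ≤ 1 / 4 * branchWeight a x + if a = 0 then 3 / 8 else 0 := by
      rcases Nat.eq_zero_or_pos a with rfl | hpos
      · simp only [branchWeight, Nat.cast_zero, if_true]
        have e1 : (1 + x) / ((0 + 1 + x) * (0 + 2 + x)) = 1 / (2 + x) := by
          have : 1 + x ≠ 0 := by positivity
          have : 2 + x ≠ 0 := by positivity
          field_simp; ring
        rw [e1]
        have e2 : 1 / (2 + x) / ((0 + 1 + x) * (0 + 1 + y)) ≤ 1 / (2 + x) := by
          apply div_le_self (by positivity); nlinarith
        have e3 : 1 / (2 + x) ≤ 1 / 2 := by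
          apply one_div_le_one_div_of_le <;> linarith
        linarith
      · have ha1 : (1:ℝ) ≤ a := by exact_mod_cast hpos
        rw [if_neg (by omega), add_zero, one_div_mul_eq_div]
        apply div_le_div_of_nonneg_left hw (by norm_num)
        nlinarith
    calc branchWeight a x * |f (1 / (a + 1 + x)) - f (1 / (a + 1 + y))|
        ≤ branchWeight a x * (L * (|x - y| / ((a + 1 + x) * (a + 1 + y)))) := by gcongr
      _ = L * |x - y| * (branchWeight a x / ((a + 1 + x) * (a + 1 + y))) := by ring
      _ ≤ _ := by gcongr
  refine (Finset.abs_sum_le_sum_abs _ _).trans ((Finset.sum_le_sum fun a _ => hterm a).trans ?_)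
  rw [← Finset.mul_sum, Finset.sum_add_distrib, ← Finset.mul_sum, sum_branchWeight K hx]
  have h5 : (K:ℝ) / (K + 1 + x) ≤ 1 := by
    rw [div_le_one (by positivity)]; linarith
  have h6 : (∑ a ∈ Finset.range K, if a = 0 then (3/8:ℝ) else 0) ≤ 3 / 8 := by
    rw [Finset.sum_ite_eq']; split_ifs <;> norm_num
  have h7 : 0 ≤ L * |x - y| := by positivity
  nlinarith

/-- Abel summation for the part of `U f x - U f y` in which only the branch weights vary. -/
lemma sum_weight_variation {L : ℝ} (hL : 0 ≤ L) {f : ℝ → ℝ} (hf : LipIoo L f) {x y : ℝ}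
    (hx : x ∈ Ioo (0:ℝ) 1) (hy : y ∈ Ioo (0:ℝ) 1) (K : ℕ) :
    |∑ a ∈ Finset.range K, (branchWeight a x - branchWeight a y) *
        (f (1 / (a + 1 + y)) - f (1 / (K + 1 + y)))|
      ≤ L * |x - y| * (1 / 4 - 1 / (2 * (K + 1) * (K + 2))) := by
  have hx0 := hx.1
  have hy0 := hy.1
  induction K with
  | zero => simp; norm_num
  | succ K ih =>
    set F : ℕ → ℝ := fun a => f (1 / (a + 1 + y)) with hF
    have hK : (0:ℝ) ≤ K := K.cast_nonneg
    have e : ∑ a ∈ Finset.range (K + 1), (branchWeight a x - branchWeight a y) *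
        (F a - F (K + 1))
        = ∑ a ∈ Finset.range K, (branchWeight a x - branchWeight a y) * (F a - F K)
          + (((K + 1 : ℕ):ℝ) / ((K + 1 : ℕ) + 1 + x) - ((K + 1 : ℕ):ℝ) / ((K + 1 : ℕ) + 1 + y))
            * (F K - F (K + 1)) := by
      rw [← sum_branchWeight (K + 1) hx, ← sum_branchWeight (K + 1) hy, ← Finset.sum_sub_distrib,
        Finset.sum_mul, Finset.sum_range_succ, Finset.sum_range_succ, ← add_assoc,
        ← Finset.sum_add_distrib]
      congr 1
      refine Finset.sum_congr rfl fun a _ => ?_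
      ring
    have h1 : |F K - F (K + 1)| ≤ L * (1 / ((K + 1) * (K + 2))) := by
      refine (hf _ (branch_mem hy) _ (branch_mem hy)).trans ?_
      gcongr
      push_cast
      rw [div_sub_div _ _ (by positivity) (by positivity), abs_of_nonneg (by
        apply div_nonneg _ (by positivity); linarith)]
      apply div_le_div₀ (by norm_num) (by linarith) (by positivity)
      apply mul_le_mul <;> linarith
    have h2 : |((K + 1 : ℕ):ℝ) / ((K + 1 : ℕ) + 1 + x) - ((K + 1 : ℕ):ℝ) / ((K + 1 : ℕ) + 1 + y)|
        ≤ |x - y| * (1 / (K + 3)) := by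
      push_cast
      rw [div_sub_div _ _ (by positivity) (by positivity), abs_div,
        abs_of_pos (a := ((K:ℝ) + 1 + 1 + x) * (K + 1 + 1 + y)) (by positivity)]
      have : ((K:ℝ) + 1) * (K + 1 + 1 + y) - (K + 1 + 1 + x) * (K + 1) = (K + 1) * (y - x) := by
        ring
      rw [this, abs_mul, abs_of_pos (a := (K:ℝ) + 1) (by positivity), abs_sub_comm y x,
        mul_comm ((K:ℝ) + 1) |x - y|, mul_div_assoc]
      refine mul_le_mul_of_nonneg_left ?_ (abs_nonneg _)
      rw [div_le_div_iff₀ (by positivity) (by positivity)]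
      nlinarith [mul_pos hx0 hy0, mul_nonneg hK hx0.le, mul_nonneg hK hy0.le]
    have hg : ∑ a ∈ Finset.range (K + 1), (branchWeight a x - branchWeight a y) *
        (f (1 / (a + 1 + y)) - f (1 / ((K + 1 : ℕ) + 1 + y)))
        = ∑ a ∈ Finset.range (K + 1), (branchWeight a x - branchWeight a y) *
        (F a - F (K + 1)) := rfl
    rw [hg, e]
    refine (abs_add_le _ _).trans ?_
    rw [abs_mul]
    have h3 := mul_le_mul h2 h1 (abs_nonneg _) (by positivity)
    have h4 : |x - y| * (1 / ((K:ℝ) + 3)) * (L * (1 / ((K + 1) * (K + 2))))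
        = L * |x - y| * (1 / (2 * (K + 1) * (K + 2)) - 1 / (2 * (((K + 1 : ℕ):ℝ) + 1) *
          (((K + 1 : ℕ):ℝ) + 2))) := by
      push_cast
      have a1 : (K:ℝ) + 1 ≠ 0 := by positivity
      have a2 : (K:ℝ) + 2 ≠ 0 := by positivity
      have a3 : (K:ℝ) + 3 ≠ 0 := by positivity
      have b1 : (K:ℝ) + 1 + 1 = K + 2 := by ring
      have b2 : (K:ℝ) + 1 + 2 = K + 3 := by ring
      rw [b1, b2]
      field_simp
      ring
    rw [h4] at h3
    have := add_le_add ih h3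
    refine this.trans (le_of_eq ?_)
    ring

/-- The transfer operator contracts Lipschitz constants by the factor `7/8`. -/
lemma LipIoo.transfer {L : ℝ} (hL : 0 ≤ L) {f : ℝ → ℝ} (hf : LipIoo L f) :
    LipIoo (7 / 8 * L) (transfer f) := by
  intro x hx y hy
  have hx0 := hx.1
  have hy0 := hy.1
  obtain ⟨B, hB, hb⟩ := hf.bounded hL
  have hpart : ∀ K : ℕ,
      |∑ a ∈ Finset.range K, branchWeight a x * f (1 / (a + 1 + x))
        - ∑ a ∈ Finset.range K, branchWeight a y * f (1 / (a + 1 + y))|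
      ≤ 7 / 8 * L * |x - y| + B * (1 / ((K:ℝ) + 1)) := by
    intro K
    have hK : (0:ℝ) ≤ K := K.cast_nonneg
    have e : ∑ a ∈ Finset.range K, branchWeight a x * f (1 / (a + 1 + x))
        - ∑ a ∈ Finset.range K, branchWeight a y * f (1 / (a + 1 + y))
        = ∑ a ∈ Finset.range K, branchWeight a x * (f (1 / (a + 1 + x)) - f (1 / (a + 1 + y)))
        + (∑ a ∈ Finset.range K, (branchWeight a x - branchWeight a y) *
            (f (1 / (a + 1 + y)) - f (1 / (K + 1 + y)))
        + (K / (K + 1 + x) - K / (K + 1 + y)) * f (1 / (K + 1 + y))) := by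
      rw [← sum_branchWeight K hx, ← sum_branchWeight K hy, ← Finset.sum_sub_distrib,
        ← Finset.sum_sub_distrib, Finset.sum_mul, ← Finset.sum_add_distrib,
        ← Finset.sum_add_distrib]
      refine Finset.sum_congr rfl fun a _ => ?_
      ring
    have h1 := sum_branch_variation hL hf hx hy K
    have h2 := sum_weight_variation hL hf hx hy K
    have h2' : L * |x - y| * (1 / 4 - 1 / (2 * (K + 1) * (K + 2))) ≤ L * |x - y| * (1 / 4) := by
      gcongr
      have : 0 ≤ 1 / (2 * ((K:ℝ) + 1) * (K + 2)) := by positivity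
      linarith
    have h3 : |(K:ℝ) / (K + 1 + x) - K / (K + 1 + y)| ≤ 1 / (K + 1) := by
      have u1 : (K:ℝ) / (K + 1 + x) ≤ 1 := by rw [div_le_one (by positivity)]; linarith
      have u2 : (K:ℝ) / (K + 1 + y) ≤ 1 := by rw [div_le_one (by positivity)]; linarith
      rw [div_sub_div _ _ (by positivity) (by positivity), abs_div,
        abs_of_pos (a := ((K:ℝ) + 1 + x) * (K + 1 + y)) (by positivity)]
      have : (K:ℝ) * (K + 1 + y) - (K + 1 + x) * K = K * (y - x) := by ring
      rw [this, abs_mul, abs_of_nonneg hK, div_le_div_iff₀ (by positivity) (by positivity)]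
      have hd : |y - x| ≤ 1 := by rw [abs_le]; constructor <;> linarith [hx.2, hy.2]
      have : (K:ℝ) * |y - x| ≤ K := mul_le_of_le_one_right hK hd
      nlinarith [mul_pos hx0 hy0, mul_nonneg hK hx0.le, mul_nonneg hK hy0.le]
    have h4 : |((K:ℝ) / (K + 1 + x) - K / (K + 1 + y)) * f (1 / (K + 1 + y))|
        ≤ B * (1 / (K + 1)) := by
      rw [abs_mul, mul_comm]
      exact mul_le_mul (hb _ (branch_mem hy)) h3 (abs_nonneg _) hB
    rw [e]
    refine (abs_add_le _ _).trans ?_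
    have := abs_add_le (∑ a ∈ Finset.range K, (branchWeight a x - branchWeight a y) *
            (f (1 / (a + 1 + y)) - f (1 / (K + 1 + y))))
        ((K / (K + 1 + x) - K / (K + 1 + y)) * f (1 / (K + 1 + y)))
    linarith
  have l1 := (summable_transfer hL hf hx).hasSum.tendsto_sum_nat
  have l2 := (summable_transfer hL hf hy).hasSum.tendsto_sum_nat
  have l3 := (tendsto_one_div_add_atTop_nhds_zero_nat (𝕜 := ℝ)).const_mul B
  have l4 := l3.const_add (7 / 8 * L * |x - y|)
  rw [mul_zero, add_zero] at l4
  exact le_of_tendsto_of_tendsto' (l1.sub l2).abs l4 hpart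

lemma RealLip.transferE {L : ℝ} (hL : 0 ≤ L) {F : ℝ → ENNReal} (hF : RealLip L F) :
    RealLip (7 / 8 * L) (transferE F) := by
  obtain ⟨f, h, hf⟩ := hF
  refine ⟨_root_.transfer f, fun y hy => ⟨?_, ?_⟩, hf.transfer hL⟩
  · exact tsum_nonneg fun a => mul_nonneg (branchWeight_nonneg hy) (h _ (branch_mem hy)).1
  · unfold _root_.transferE _root_.transfer
    rw [ENNReal.ofReal_tsum_of_nonneg
      (fun a => mul_nonneg (branchWeight_nonneg hy) (h _ (branch_mem hy)).1)
      (summable_transfer hL hf hy)]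
    congr 1; ext a
    rw [(h _ (branch_mem hy)).2, ENNReal.ofReal_mul (branchWeight_nonneg hy)]

lemma RealLip.transferE_iterate {L : ℝ} (hL : 0 ≤ L) {F : ℝ → ENNReal} (hF : RealLip L F) (n : ℕ) :
    RealLip ((7 / 8) ^ n * L) (_root_.transferE^[n] F) := by
  induction n with
  | zero => simpa using hF
  | succ n ih =>
    rw [Function.iterate_succ_apply', pow_succ', mul_assoc]
    exact ih.transferE (by positivity)

/-- A function of oscillation at most `L` exceeds its Gauss mean by at most `L`. -/
lemma RealLip.le_lintegral_add {L : ℝ} (hL : 0 ≤ L) {F : ℝ → ENNReal} (hF : RealLip L F)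
    (hm : Measurable F) {y : ℝ} (hy : y ∈ Ioo (0:ℝ) 1) :
    F y ≤ ∫⁻ x, F x ∂gaussMeasure + ENNReal.ofReal L := by
  obtain ⟨f, h, hf⟩ := hF
  have h1 : ∫⁻ _, F y ∂gaussMeasure ≤ ∫⁻ x, (F x + ENNReal.ofReal L) ∂gaussMeasure := by
    refine lintegral_gauss_mono measurable_const (hm.add measurable_const) fun x hx => ?_
    rw [(h x hx).2, (h y hy).2, ← ENNReal.ofReal_add (h x hx).1 hL]
    apply ENNReal.ofReal_le_ofReal
    have h2 := (le_abs_self _).trans (hf y hy x hx)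
    have h3 : |y - x| ≤ 1 := by rw [abs_le]; constructor <;> linarith [hx.1, hx.2, hy.1, hy.2]
    have h4 : L * |y - x| ≤ L := mul_le_of_le_one_right hL h3
    linarith
  rw [lintegral_add_right _ measurable_const] at h1
  simpa using h1

/-- One-sided exponential mixing: if two applications of the transfer operator make `F` Lipschitz,
then `F` is almost uncorrelated with anything that happens at least two steps later. -/
lemma mixing_upper {L : ℝ} (hL : 0 ≤ L) {F h : ℝ → ENNReal} (hF : Measurable F)
    (hh : Measurable h) (hlip : RealLip L (transferE^[2] F)) (n : ℕ) :
    ∫⁻ x, F x * h (gaussMap^[n + 2] x) ∂gaussMeasure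
      ≤ (∫⁻ x, F x ∂gaussMeasure + ENNReal.ofReal ((7 / 8) ^ n * L))
        * ∫⁻ x, h x ∂gaussMeasure := by
  rw [lintegral_transferE_iterate _ hF hh, Function.iterate_add_apply]
  have hm2 := measurable_transferE_iterate hF 2
  have hmn := measurable_transferE_iterate hm2 n
  have hl := hlip.transferE_iterate hL n
  have h_int : ∫⁻ x, (transferE^[n] (transferE^[2] F)) x ∂gaussMeasure
      = ∫⁻ x, F x ∂gaussMeasure := by
    have := lintegral_transferE_iterate (n + 2) hF (measurable_const (a := (1 : ENNReal)))
    rw [Function.iterate_add_apply] at this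
    simpa using this.symm
  rw [← lintegral_const_mul _ hh]
  refine lintegral_gauss_mono (hmn.mul hh) (hh.const_mul _) fun y hy => ?_
  gcongr
  rw [← h_int]
  exact hl.le_lintegral_add (by positivity) hmn hy

/-! ### Functions of two consecutive partial quotients -/

/-- The function `φ (a₁ a₂)` of the first two partial quotients. -/
noncomputable def pairFun (φ : ℕ → ℝ) (x : ℝ) : ℝ := φ (pq 1 x * pq 2 x)

/-- The weight of the cylinder with partial quotients `a + 1`, `b + 1`: the Gauss density pulled
back along `y ↦ 1 / (a + 1 + 1 / (b + 1 + y))` is `cylWeight a b y / log 2`. -/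
noncomputable def cylWeight (a b : ℕ) (y : ℝ) : ℝ :=
  1 / ((((a:ℝ) + 1) * (b + 1 + y) + 1) * ((a + 2) * (b + 1 + y) + 1))

/-- The index set of cylinders with both partial quotients at most `m`. -/
def box (m : ℕ) : Finset (ℕ × ℕ) := Finset.range m ×ˢ Finset.range m

/-- The weighted sum `∑ φ(ab) / (ab)²` over partial quotients `a, b ≤ m`. -/
noncomputable def upperSum (φ : ℕ → ℝ) (m : ℕ) : ℝ :=
  ∑ p ∈ box m, φ ((p.1 + 1) * (p.2 + 1)) * (1 / (((p.1:ℝ) + 1) ^ 2 * ((p.2:ℝ) + 1) ^ 2))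

/-- The weighted sum `∑ φ(ab) / ((a + 2)² (b + 1)²)` over partial quotients `a, b ≤ m`. -/
noncomputable def lowerSum (φ : ℕ → ℝ) (m : ℕ) : ℝ :=
  ∑ p ∈ box m, φ ((p.1 + 1) * (p.2 + 1)) * (1 / (((p.1:ℝ) + 3) ^ 2 * ((p.2:ℝ) + 2) ^ 2))

lemma measurable_pairFun (φ : ℕ → ℝ) : Measurable (pairFun φ) := by
  unfold pairFun
  exact (measurable_from_top (f := φ)).comp ((measurable_pq 1).mul (measurable_pq 2))

lemma measurable_ofReal_pairFun (φ : ℕ → ℝ) :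
    Measurable (fun x => ENNReal.ofReal (pairFun φ x)) :=
  (measurable_pairFun φ).ennreal_ofReal

lemma pairFun_branch (φ : ℕ → ℝ) (a b : ℕ) {y : ℝ} (hy : y ∈ Ioo (0:ℝ) 1) :
    pairFun φ (1 / ((a:ℝ) + 1 + 1 / ((b:ℝ) + 1 + y))) = φ ((a + 1) * (b + 1)) := by
  have hz := branch_mem (a := b) hy
  unfold pairFun pq
  simp only [Nat.sub_self, Function.iterate_zero, id_eq, Nat.add_one_sub_one,
    Function.iterate_one]
  rw [gaussMap_branch hz, branch_floor hz, branch_floor hy]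

lemma branchWeight_mul (a b : ℕ) {y : ℝ} (hy : y ∈ Ioo (0:ℝ) 1) :
    branchWeight b y * branchWeight a (1 / ((b:ℝ) + 1 + y)) = (1 + y) * cylWeight a b y := by
  have hy0 := hy.1
  unfold branchWeight cylWeight
  have h1 : (b:ℝ) + 1 + y ≠ 0 := by positivity
  have h2 : (b:ℝ) + 2 + y ≠ 0 := by positivity
  have h3 : ((a:ℝ) + 1) * (b + 1 + y) + 1 ≠ 0 := by positivity
  have h4 : ((a:ℝ) + 2) * (b + 1 + y) + 1 ≠ 0 := by positivity
  have e1 : (a:ℝ) + 1 + 1 / (b + 1 + y) = ((a + 1) * (b + 1 + y) + 1) / (b + 1 + y) := by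
    field_simp
  have e2 : (a:ℝ) + 2 + 1 / (b + 1 + y) = ((a + 2) * (b + 1 + y) + 1) / (b + 1 + y) := by
    field_simp
  have e3 : 1 + 1 / ((b:ℝ) + 1 + y) = (b + 2 + y) / (b + 1 + y) := by
    field_simp; ring
  rw [e1, e2, e3]
  field_simp

/-- `U²` resolves the first two partial quotients: it turns `φ (a₁ a₂)` into a finite sum of
cylinder weights, which are smooth in `y`. -/
lemma transferE_two_pairFun {φ : ℕ → ℝ} (hφ : ∀ n, 0 ≤ φ n) {m : ℕ} (hm : ∀ n, m < n → φ n = 0)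
    {y : ℝ} (hy : y ∈ Ioo (0:ℝ) 1) :
    (transferE^[2] fun x => ENNReal.ofReal (pairFun φ x)) y
      = ENNReal.ofReal ((1 + y) * ∑ p ∈ box m, φ ((p.1 + 1) * (p.2 + 1)) *
          cylWeight p.1 p.2 y) := by
  have hy0 := hy.1
  simp only [Function.iterate_succ, Function.iterate_zero, Function.comp, id, transferE]
  have hz : ∀ a b : ℕ, m ≤ a ∨ m ≤ b → φ ((a + 1) * (b + 1)) = 0 := by
    intro a b h
    apply hm
    rcases h with h | h <;> nlinarith
  have hc : ∀ a b : ℕ, 0 ≤ cylWeight a b y := fun a b => by unfold cylWeight; positivity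
  rw [tsum_eq_sum (s := Finset.range m)]
  · rw [box, Finset.sum_product_right, Finset.mul_sum, ENNReal.ofReal_sum_of_nonneg]
    · refine Finset.sum_congr rfl fun b _ => ?_
      rw [tsum_eq_sum (s := Finset.range m)]
      · rw [Finset.mul_sum, Finset.mul_sum, ENNReal.ofReal_sum_of_nonneg]
        · refine Finset.sum_congr rfl fun a _ => ?_
          rw [pairFun_branch φ a b hy, ← mul_assoc,
            ← ENNReal.ofReal_mul (branchWeight_nonneg hy), branchWeight_mul a b hy,
            ← ENNReal.ofReal_mul (mul_nonneg (by positivity) (hc a b))]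
          congr 1; ring
        · intro a _
          exact mul_nonneg (by positivity) (mul_nonneg (hφ _) (hc _ _))
      · intro a ha
        rw [pairFun_branch φ a b hy, hz a b (Or.inl (by simpa using ha))]
        simp
    · intro b _
      exact mul_nonneg (by positivity) (Finset.sum_nonneg fun a _ => mul_nonneg (hφ _) (hc _ _))
  · intro b hb
    have : ∀ a : ℕ, ENNReal.ofReal (branchWeight a (1 / ((b:ℝ) + 1 + y))) *
        ENNReal.ofReal (pairFun φ (1 / ((a:ℝ) + 1 + 1 / ((b:ℝ) + 1 + y)))) = 0 := by
      intro a
      rw [pairFun_branch φ a b hy, hz a b (Or.inr (by simpa using hb))]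
      simp
    simp only [this, tsum_zero, mul_zero]

lemma cylWeight_le (a b : ℕ) {y : ℝ} (hy : y ∈ Ioo (0:ℝ) 1) :
    cylWeight a b y ≤ 1 / (((a:ℝ) + 1) ^ 2 * ((b:ℝ) + 1) ^ 2) := by
  have hy0 := hy.1
  have ha : (0:ℝ) ≤ a := a.cast_nonneg
  have hb : (0:ℝ) ≤ b := b.cast_nonneg
  unfold cylWeight
  apply one_div_le_one_div_of_le (by positivity)
  have h1 : ((a:ℝ) + 1) * (b + 1) ≤ (a + 1) * (b + 1 + y) + 1 := by nlinarith
  have h2 : ((a:ℝ) + 1) * (b + 1) ≤ (a + 2) * (b + 1 + y) + 1 := by nlinarith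
  calc ((a:ℝ) + 1) ^ 2 * ((b:ℝ) + 1) ^ 2 = ((a:ℝ) + 1) * (b + 1) * ((a + 1) * (b + 1)) := by ring
    _ ≤ _ := mul_le_mul h1 h2 (by positivity) (by positivity)

lemma le_cylWeight (a b : ℕ) {y : ℝ} (hy : y ∈ Ioo (0:ℝ) 1) :
    1 / (((a:ℝ) + 3) ^ 2 * ((b:ℝ) + 2) ^ 2) ≤ cylWeight a b y := by
  have hy0 := hy.1
  have hy1 := hy.2
  have ha : (0:ℝ) ≤ a := a.cast_nonneg
  have hb : (0:ℝ) ≤ b := b.cast_nonneg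
  unfold cylWeight
  apply one_div_le_one_div_of_le (by positivity)
  have h1 : ((a:ℝ) + 1) * (b + 1 + y) + 1 ≤ (a + 3) * (b + 2) := by nlinarith
  have h2 : ((a:ℝ) + 2) * (b + 1 + y) + 1 ≤ (a + 3) * (b + 2) := by nlinarith
  calc _ ≤ ((a:ℝ) + 3) * (b + 2) * ((a + 3) * (b + 2)) :=
        mul_le_mul h1 h2 (by positivity) (by positivity)
    _ = _ := by ring

lemma cylWeight_lip (a b : ℕ) {x y : ℝ} (hx : x ∈ Ioo (0:ℝ) 1) (hy : y ∈ Ioo (0:ℝ) 1) :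
    |(1 + x) * cylWeight a b x - (1 + y) * cylWeight a b y|
      ≤ 1 / (((a:ℝ) + 1) ^ 2 * ((b:ℝ) + 1) ^ 2) * (5 * |x - y|) := by
  have hx0 := hx.1
  have hy0 := hy.1
  have ha : (0:ℝ) ≤ a := a.cast_nonneg
  have hb : (0:ℝ) ≤ b := b.cast_nonneg
  have hxw := cylWeight_le a b hx
  have hyw := cylWeight_le a b hy
  have hx1 : 0 ≤ cylWeight a b x := by unfold cylWeight; positivity
  have hy1 : 0 ≤ cylWeight a b y := by unfold cylWeight; positivity
  set t := 1 / (((a:ℝ) + 1) ^ 2 * ((b:ℝ) + 1) ^ 2)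
  have ht : 0 ≤ t := by positivity
  have key : cylWeight a b x - cylWeight a b y
      = (y - x) * (cylWeight a b x * ((a + 2) / ((a + 2) * (b + 1 + y) + 1))
        + cylWeight a b y * ((a + 1) / ((a + 1) * (b + 1 + x) + 1))) := by
    unfold cylWeight
    have h1 : ((a:ℝ) + 1) * (b + 1 + y) + 1 ≠ 0 := by positivity
    have h2 : ((a:ℝ) + 2) * (b + 1 + y) + 1 ≠ 0 := by positivity
    have h3 : ((a:ℝ) + 1) * (b + 1 + x) + 1 ≠ 0 := by positivity
    have h4 : ((a:ℝ) + 2) * (b + 1 + x) + 1 ≠ 0 := by positivity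
    field_simp
    ring
  have r1 : ((a:ℝ) + 2) / ((a + 2) * (b + 1 + y) + 1) ≤ 1 := by
    rw [div_le_one (by positivity)]; nlinarith
  have r2 : ((a:ℝ) + 1) / ((a + 1) * (b + 1 + x) + 1) ≤ 1 := by
    rw [div_le_one (by positivity)]; nlinarith
  have hd : |cylWeight a b x - cylWeight a b y| ≤ |x - y| * (2 * t) := by
    rw [key, abs_mul, abs_sub_comm y x]
    gcongr
    rw [abs_of_nonneg (by positivity)]
    have := mul_le_mul hxw r1 (by positivity) ht
    have := mul_le_mul hyw r2 (by positivity) ht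
    linarith
  have e : (1 + x) * cylWeight a b x - (1 + y) * cylWeight a b y
      = (x - y) * cylWeight a b x + (1 + y) * (cylWeight a b x - cylWeight a b y) := by ring
  rw [e]
  refine (abs_add_le _ _).trans ?_
  rw [abs_mul, abs_mul, abs_of_nonneg hx1, abs_of_pos (a := 1 + y) (by positivity)]
  have h5 : |x - y| * cylWeight a b x ≤ |x - y| * t := by gcongr
  have h6 : (1 + y) * |cylWeight a b x - cylWeight a b y| ≤ 2 * (|x - y| * (2 * t)) :=
    mul_le_mul (by linarith [hy.2]) hd (abs_nonneg _) (by norm_num)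
  linarith

lemma upperSum_nonneg {φ : ℕ → ℝ} (hφ : ∀ n, 0 ≤ φ n) (m : ℕ) : 0 ≤ upperSum φ m :=
  Finset.sum_nonneg fun _ _ => mul_nonneg (hφ _) (by positivity)

lemma realLip_pairFun {φ : ℕ → ℝ} (hφ : ∀ n, 0 ≤ φ n) {m : ℕ} (hm : ∀ n, m < n → φ n = 0) :
    RealLip (5 * upperSum φ m) (transferE^[2] fun x => ENNReal.ofReal (pairFun φ x)) := by
  refine ⟨_, fun y hy => ⟨?_, transferE_two_pairFun hφ hm hy⟩, ?_⟩
  · have := hy.1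
    refine mul_nonneg (by positivity) (Finset.sum_nonneg fun p _ => mul_nonneg (hφ _) ?_)
    unfold cylWeight; positivity
  · intro x hx y hy
    dsimp only
    rw [Finset.mul_sum, Finset.mul_sum, ← Finset.sum_sub_distrib]
    refine (Finset.abs_sum_le_sum_abs _ _).trans ?_
    rw [upperSum, Finset.mul_sum, Finset.sum_mul]
    refine Finset.sum_le_sum fun p _ => ?_
    have h := mul_le_mul_of_nonneg_left (cylWeight_lip p.1 p.2 hx hy)
      (hφ ((p.1 + 1) * (p.2 + 1)))
    have e : (1 + x) * (φ ((p.1 + 1) * (p.2 + 1)) * cylWeight p.1 p.2 x)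
        - (1 + y) * (φ ((p.1 + 1) * (p.2 + 1)) * cylWeight p.1 p.2 y)
        = φ ((p.1 + 1) * (p.2 + 1))
          * ((1 + x) * cylWeight p.1 p.2 x - (1 + y) * cylWeight p.1 p.2 y) := by ring
    rw [e, abs_mul, abs_of_nonneg (hφ _)]
    exact h.trans (le_of_eq (by ring))

lemma lintegral_pairFun_eq {φ : ℕ → ℝ} (hφ : ∀ n, 0 ≤ φ n) {m : ℕ} (hm : ∀ n, m < n → φ n = 0) :
    ∫⁻ x, ENNReal.ofReal (pairFun φ x) ∂gaussMeasure
      = ∫⁻ y, ENNReal.ofReal ((1 + y) * ∑ p ∈ box m, φ ((p.1 + 1) * (p.2 + 1)) *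
          cylWeight p.1 p.2 y) ∂gaussMeasure := by
  have h := lintegral_transferE_iterate 2 (measurable_ofReal_pairFun φ)
    (measurable_const (a := (1 : ENNReal)))
  simp only [mul_one] at h
  rw [h]
  refine lintegral_gauss_congr (measurable_transferE_iterate (measurable_ofReal_pairFun φ) 2) ?_
    fun y hy => transferE_two_pairFun hφ hm hy
  unfold cylWeight
  fun_prop

lemma lintegral_pairFun_le {φ : ℕ → ℝ} (hφ : ∀ n, 0 ≤ φ n) {m : ℕ} (hm : ∀ n, m < n → φ n = 0) :
    ∫⁻ x, ENNReal.ofReal (pairFun φ x) ∂gaussMeasure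
      ≤ ENNReal.ofReal (upperSum φ m / Real.log 2) := by
  rw [lintegral_pairFun_eq hφ hm, ← lintegral_gauss_linear]
  refine lintegral_gauss_mono (by unfold cylWeight; fun_prop) (by fun_prop) fun y hy => ?_
  have := hy.1
  apply ENNReal.ofReal_le_ofReal
  refine mul_le_mul_of_nonneg_left (Finset.sum_le_sum fun p _ => ?_) (by positivity)
  exact mul_le_mul_of_nonneg_left (cylWeight_le _ _ hy) (hφ _)

lemma le_lintegral_pairFun {φ : ℕ → ℝ} (hφ : ∀ n, 0 ≤ φ n) {m : ℕ} (hm : ∀ n, m < n → φ n = 0) :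
    ENNReal.ofReal (lowerSum φ m / Real.log 2)
      ≤ ∫⁻ x, ENNReal.ofReal (pairFun φ x) ∂gaussMeasure := by
  rw [lintegral_pairFun_eq hφ hm, ← lintegral_gauss_linear]
  refine lintegral_gauss_mono (by fun_prop) (by unfold cylWeight; fun_prop) fun y hy => ?_
  have := hy.1
  apply ENNReal.ofReal_le_ofReal
  refine mul_le_mul_of_nonneg_left (Finset.sum_le_sum fun p _ => ?_) (by positivity)
  exact mul_le_mul_of_nonneg_left (le_cylWeight _ _ hy) (hφ _)

/-- Bounded functions of two partial quotients, read at any time, are Gauss-integrable. -/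
lemma integrable_pairFun {φ : ℕ → ℝ} {B : ℝ} (hB : ∀ n, |φ n| ≤ B) (i : ℕ) :
    Integrable (fun x => pairFun φ (gaussMap^[i] x)) gaussMeasure :=
  Integrable.of_bound
    ((measurable_pairFun φ).comp (measurable_gaussMap.iterate i)).aestronglyMeasurable B
    (ae_of_all _ fun _ => hB _)

lemma integral_pairFun_le {φ : ℕ → ℝ} (hφ : ∀ n, 0 ≤ φ n) {m : ℕ} (hm : ∀ n, m < n → φ n = 0) :
    ∫ x, pairFun φ x ∂gaussMeasure ≤ upperSum φ m / Real.log 2 := by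
  have hl : 0 < Real.log 2 := Real.log_pos (by norm_num)
  rw [integral_eq_lintegral_of_nonneg_ae (f := pairFun φ) (ae_of_all _ fun x => hφ _)
    (measurable_pairFun φ).aestronglyMeasurable]
  exact ENNReal.toReal_le_of_le_ofReal (div_nonneg (upperSum_nonneg hφ m) hl.le)
    (lintegral_pairFun_le hφ hm)

lemma le_integral_pairFun {φ : ℕ → ℝ} (hφ : ∀ n, 0 ≤ φ n) {m : ℕ} (hm : ∀ n, m < n → φ n = 0) :
    lowerSum φ m / Real.log 2 ≤ ∫ x, pairFun φ x ∂gaussMeasure := by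
  rw [integral_eq_lintegral_of_nonneg_ae (f := pairFun φ) (ae_of_all _ fun x => hφ _)
    (measurable_pairFun φ).aestronglyMeasurable]
  refine (ENNReal.ofReal_le_iff_le_toReal ?_).1 (le_lintegral_pairFun hφ hm)
  exact ne_top_of_le_ne_top ENNReal.ofReal_ne_top (lintegral_pairFun_le hφ hm)

/-! ### The variance of the truncated sums -/

lemma integral_comp_iterate {f : ℝ → ℝ} (hf : Measurable f) (i : ℕ) :
    ∫ x, f (gaussMap^[i] x) ∂gaussMeasure = ∫ x, f x ∂gaussMeasure := by
  have h := measurePreserving_gaussMap.iterate i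
  conv_rhs => rw [← h.map_eq]
  rw [integral_map h.measurable.aemeasurable hf.aestronglyMeasurable]

lemma integrable_pairFun_mul {φ : ℕ → ℝ} {B : ℝ} (hB : ∀ n, |φ n| ≤ B) (i j : ℕ) :
    Integrable (fun x => pairFun φ (gaussMap^[i] x) * pairFun φ (gaussMap^[j] x))
      gaussMeasure := by
  refine Integrable.of_bound (C := B * B) (Measurable.aestronglyMeasurable ?_) (ae_of_all _ ?_)
  · exact ((measurable_pairFun φ).comp (measurable_gaussMap.iterate i)).mul
      ((measurable_pairFun φ).comp (measurable_gaussMap.iterate j))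
  · intro x
    rw [norm_mul]
    exact mul_le_mul (hB _) (hB _) (norm_nonneg _) ((abs_nonneg _).trans (hB 0))

lemma integral_mul_far {φ : ℕ → ℝ} {B : ℝ} (hφ : ∀ n, 0 ≤ φ n) (hB : ∀ n, |φ n| ≤ B) {m : ℕ}
    (hm : ∀ n, m < n → φ n = 0) (n : ℕ) :
    ∫ x, pairFun φ x * pairFun φ (gaussMap^[n + 2] x) ∂gaussMeasure
      ≤ (∫ x, pairFun φ x ∂gaussMeasure + (7 / 8) ^ n * (5 * upperSum φ m))
        * ∫ x, pairFun φ x ∂gaussMeasure := by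
  have h_int := integrable_pairFun_mul hB 0 (n + 2)
  have h_int1 := integrable_pairFun hB 0
  simp only [Function.iterate_zero, id_eq] at h_int h_int1
  have hc : 0 ≤ ∫ x, pairFun φ x ∂gaussMeasure := integral_nonneg fun x => hφ _
  have hW := upperSum_nonneg hφ m
  rw [← ENNReal.ofReal_le_ofReal_iff (by positivity),
    ofReal_integral_eq_lintegral_ofReal h_int (ae_of_all _ fun x => mul_nonneg (hφ _) (hφ _)),
    ENNReal.ofReal_mul (by positivity), ENNReal.ofReal_add hc (by positivity),
    ofReal_integral_eq_lintegral_ofReal h_int1 (ae_of_all _ fun x => hφ _)]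
  have := mixing_upper (L := 5 * upperSum φ m) (by positivity) (measurable_ofReal_pairFun φ)
    (measurable_ofReal_pairFun φ) (realLip_pairFun hφ hm) n
  refine le_trans (le_of_eq ?_) this
  refine lintegral_congr fun x => ?_
  rw [ENNReal.ofReal_mul (p := pairFun φ x) (hφ _)]

/-- The constant bounding the decay of correlations of `pairFun φ`. -/
noncomputable def corrConst (φ : ℕ → ℝ) (m : ℕ) : ℝ :=
  2 * (upperSum (fun n => φ n ^ 2) m / Real.log 2)
    + 10 * upperSum φ m * (upperSum φ m / Real.log 2)

/-- Correlations at distance at least `2` are controlled by mixing, the remaining ones by the second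
moment. -/
lemma integral_mul_le {φ : ℕ → ℝ} {B : ℝ} (hφ : ∀ n, 0 ≤ φ n) (hB : ∀ n, |φ n| ≤ B) {m : ℕ}
    (hm : ∀ n, m < n → φ n = 0) (d : ℕ) :
    ∫ x, pairFun φ x * pairFun φ (gaussMap^[d] x) ∂gaussMeasure
      ≤ (∫ x, pairFun φ x ∂gaussMeasure) ^ 2 + corrConst φ m * (7 / 8) ^ d := by
  have hl : 0 < Real.log 2 := Real.log_pos (by norm_num)
  have hc : 0 ≤ ∫ x, pairFun φ x ∂gaussMeasure := integral_nonneg fun x => hφ _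
  have hW := upperSum_nonneg hφ m
  have hW2 := upperSum_nonneg (φ := fun n => φ n ^ 2) (fun n => sq_nonneg _) m
  have hcW := integral_pairFun_le hφ hm
  have hA : 0 ≤ upperSum (fun n => φ n ^ 2) m / Real.log 2 := by positivity
  have hD : 0 ≤ upperSum φ m * (upperSum φ m / Real.log 2) := by positivity
  unfold corrConst
  rcases lt_or_ge d 2 with hd | hd
  · have hq : ∫ x, pairFun φ x ^ 2 ∂gaussMeasure
        ≤ upperSum (fun n => φ n ^ 2) m / Real.log 2 :=
      integral_pairFun_le (φ := fun n => φ n ^ 2) (fun n => sq_nonneg _)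
        (fun n hn => by rw [hm n hn]; norm_num)
    have hm2 : Measurable fun x => pairFun φ x ^ 2 := (measurable_pairFun φ).pow_const 2
    have hi0 := integrable_pairFun_mul hB 0 0
    have hid := integrable_pairFun_mul hB d d
    simp only [Function.iterate_zero, id_eq, ← sq] at hi0 hid
    have h1 : ∫ x, pairFun φ x * pairFun φ (gaussMap^[d] x) ∂gaussMeasure
        ≤ ∫ x, (pairFun φ x ^ 2 / 2 + pairFun φ (gaussMap^[d] x) ^ 2 / 2) ∂gaussMeasure := by
      refine integral_mono (integrable_pairFun_mul hB 0 d)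
        ((hi0.div_const 2).add (hid.div_const 2)) fun x => ?_
      have := two_mul_le_add_sq (pairFun φ x) (pairFun φ (gaussMap^[d] x))
      linarith
    rw [integral_add (hi0.div_const 2) (hid.div_const 2), integral_div, integral_div,
      integral_comp_iterate hm2 d] at h1
    have h2 : (7 / 8 : ℝ) ≤ (7 / 8) ^ d := by interval_cases d <;> norm_num
    nlinarith [sq_nonneg (∫ x, pairFun φ x ∂gaussMeasure)]
  · obtain ⟨n, rfl⟩ : ∃ n, d = n + 2 := ⟨d - 2, by omega⟩
    refine (integral_mul_far hφ hB hm n).trans ?_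
    have h1 : (7 / 8 : ℝ) ^ (n + 2) = (7 / 8) ^ n * (49 / 64) := by rw [pow_add]; norm_num
    rw [h1]
    have hp : (0:ℝ) < (7 / 8) ^ n := by positivity
    have h2 : (7 / 8 : ℝ) ^ n * (5 * upperSum φ m) * ∫ x, pairFun φ x ∂gaussMeasure
        ≤ (7 / 8) ^ n * (5 * upperSum φ m) * (upperSum φ m / Real.log 2) := by gcongr
    have h3 := mul_nonneg hp.le hA
    have h4 := mul_nonneg hp.le hD
    nlinarith

lemma integral_mul_le' {φ : ℕ → ℝ} {B : ℝ} (hφ : ∀ n, 0 ≤ φ n) (hB : ∀ n, |φ n| ≤ B) {m : ℕ}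
    (hm : ∀ n, m < n → φ n = 0) (i j : ℕ) :
    ∫ x, pairFun φ (gaussMap^[i] x) * pairFun φ (gaussMap^[j] x) ∂gaussMeasure
      ≤ (∫ x, pairFun φ x ∂gaussMeasure) ^ 2
        + corrConst φ m * (7 / 8) ^ ((j - i) + (i - j)) := by
  wlog h : i ≤ j generalizing i j
  · have := this j i (by omega)
    rw [add_comm (j - i)]
    simpa only [mul_comm] using this
  · obtain ⟨d, rfl⟩ := Nat.exists_eq_add_of_le h
    have hf : Measurable fun x => pairFun φ x * pairFun φ (gaussMap^[d] x) :=
      (measurable_pairFun φ).mul ((measurable_pairFun φ).comp (measurable_gaussMap.iterate d))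
    have e := integral_comp_iterate hf i
    simp only [← Function.iterate_add_apply] at e
    rw [add_comm i d, e]
    simpa using integral_mul_le hφ hB hm d

lemma geom_sum_le (n : ℕ) : ∑ k ∈ Finset.range n, (7 / 8 : ℝ) ^ k ≤ 8 := by
  rw [geom_sum_eq (by norm_num)]
  have : (0:ℝ) ≤ (7 / 8) ^ n := by positivity
  norm_num
  linarith

lemma two_sided_geom_sum_le (N i : ℕ) :
    ∑ j ∈ Finset.range N, (7 / 8 : ℝ) ^ ((j - i) + (i - j)) ≤ 16 := by
  have h1 : ∑ j ∈ Finset.range N, (7 / 8 : ℝ) ^ ((j - i) + (i - j))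
      ≤ ∑ j ∈ Finset.range (i + N), (7 / 8 : ℝ) ^ ((j - i) + (i - j)) :=
    Finset.sum_le_sum_of_subset_of_nonneg (Finset.range_mono (by omega))
      fun _ _ _ => by positivity
  rw [Finset.sum_range_add] at h1
  have h2 : ∑ j ∈ Finset.range i, (7 / 8 : ℝ) ^ ((j - i) + (i - j)) ≤ 8 := by
    rw [← Finset.sum_range_reflect]
    refine le_trans (Finset.sum_le_sum fun j hj => ?_) (geom_sum_le i)
    rw [Finset.mem_range] at hj
    apply pow_le_pow_of_le_one (by norm_num) (by norm_num)
    omega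
  have h3 : ∑ j ∈ Finset.range N, (7 / 8 : ℝ) ^ ((i + j - i) + (i - (i + j))) ≤ 8 := by
    refine le_trans (Finset.sum_le_sum fun j hj => le_of_eq ?_) (geom_sum_le N)
    congr 1; omega
  linarith

/-- The second moment of the centred Birkhoff sum of `pairFun φ`: the correlations are summable, so
each of the `N` rows of the covariance matrix contributes a bounded amount. -/
lemma variance_bound {φ : ℕ → ℝ} {B : ℝ} (hφ : ∀ n, 0 ≤ φ n) (hB : ∀ n, |φ n| ≤ B) {m : ℕ}
    (hm : ∀ n, m < n → φ n = 0) (N : ℕ) :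
    ∫ x, (∑ i ∈ Finset.range N, pairFun φ (gaussMap^[i] x)
      - N * ∫ x, pairFun φ x ∂gaussMeasure) ^ 2 ∂gaussMeasure ≤ 16 * N * corrConst φ m := by
  have hl : 0 < Real.log 2 := Real.log_pos (by norm_num)
  have hE : 0 ≤ corrConst φ m := by
    have hW := upperSum_nonneg hφ m
    have hW2 := upperSum_nonneg (φ := fun n => φ n ^ 2) (fun n => sq_nonneg _) m
    unfold corrConst; positivity
  set c := ∫ x, pairFun φ x ∂gaussMeasure with hc
  have e : ∀ x, (∑ i ∈ Finset.range N, pairFun φ (gaussMap^[i] x) - N * c) ^ 2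
      = (∑ i ∈ Finset.range N, ∑ j ∈ Finset.range N,
          pairFun φ (gaussMap^[i] x) * pairFun φ (gaussMap^[j] x))
        - ((2 * N * c) * ∑ i ∈ Finset.range N, pairFun φ (gaussMap^[i] x) - (N * c) ^ 2) := by
    intro x
    rw [← Finset.sum_mul_sum]; ring
  simp only [e]
  have i1 : ∀ i ∈ Finset.range N, Integrable (fun x => ∑ j ∈ Finset.range N,
      pairFun φ (gaussMap^[i] x) * pairFun φ (gaussMap^[j] x)) gaussMeasure :=
    fun i _ => integrable_finsetSum _ fun j _ => integrable_pairFun_mul hB i j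
  have i2 : Integrable (fun x => ∑ i ∈ Finset.range N, pairFun φ (gaussMap^[i] x))
      gaussMeasure := integrable_finsetSum _ fun i _ => integrable_pairFun hB i
  have i3 : Integrable (fun x => 2 * N * c * ∑ i ∈ Finset.range N, pairFun φ (gaussMap^[i] x)
      - (N * c) ^ 2) gaussMeasure := (i2.const_mul _).sub (integrable_const _)
  rw [integral_sub (integrable_finsetSum _ i1) i3,
    integral_sub (i2.const_mul _) (integrable_const _), integral_const_mul,
    integral_finsetSum _ i1, integral_finsetSum _ fun i _ => integrable_pairFun hB i]
  simp only [integral_comp_iterate (measurable_pairFun φ), ← hc]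
  have h1 : ∑ i ∈ Finset.range N, ∫ x, ∑ j ∈ Finset.range N,
      pairFun φ (gaussMap^[i] x) * pairFun φ (gaussMap^[j] x) ∂gaussMeasure
      ≤ ∑ _i ∈ Finset.range N, (N * c ^ 2 + corrConst φ m * 16) := by
    refine Finset.sum_le_sum fun i _ => ?_
    rw [integral_finsetSum _ fun j _ => integrable_pairFun_mul hB i j]
    refine (Finset.sum_le_sum fun j _ => integral_mul_le' hφ hB hm i j).trans ?_
    rw [Finset.sum_add_distrib, ← Finset.mul_sum]
    have := mul_le_mul_of_nonneg_left (two_sided_geom_sum_le N i) hE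
    simp only [Finset.sum_const, Finset.card_range, nsmul_eq_mul, ← hc] at *
    linarith
  simp only [Finset.sum_const, Finset.card_range, nsmul_eq_mul] at h1 ⊢
  simp only [integral_const, probReal_univ, one_smul]
  nlinarith

/-! ### Asymptotics of the truncated mean -/

/-- The identity truncated at `m`: the value `n` if `n ≤ m` and `0` otherwise. -/
noncomputable def trunc (m n : ℕ) : ℝ := if n ≤ m then (n : ℝ) else 0

lemma trunc_nonneg (m n : ℕ) : 0 ≤ trunc m n := by unfold trunc; positivity

lemma trunc_of_lt (m n : ℕ) (h : m < n) : trunc m n = 0 := if_neg (by omega)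

lemma abs_trunc_le (m n : ℕ) : |trunc m n| ≤ m := by
  rw [abs_of_nonneg (trunc_nonneg m n)]
  unfold trunc
  split_ifs with h
  · exact_mod_cast h
  · positivity

/-- The real harmonic sum `∑_{a ≤ m} 1 / a`. -/
noncomputable def harm (m : ℕ) : ℝ := ∑ a ∈ Finset.range m, 1 / ((a:ℝ) + 1)

lemma harm_eq (m : ℕ) : harm m = (harmonic m : ℝ) := by
  unfold harm harmonic
  push_cast
  simp

lemma harm_le (m : ℕ) : harm m ≤ 1 + Real.log m := by
  rw [harm_eq]; exact harmonic_le_one_add_log m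

lemma le_harm (m : ℕ) : Real.log (m + 1) ≤ harm m := by
  rw [harm_eq]; exact_mod_cast log_add_one_le_harmonic m

lemma harm_nonneg (m : ℕ) : 0 ≤ harm m := Finset.sum_nonneg fun _ _ => by positivity

lemma sum_one_div_sq_le (m : ℕ) : ∑ a ∈ Finset.range m, 1 / ((a:ℝ) + 1) ^ 2 ≤ 2 := by
  have h : ∑ a ∈ Finset.range m, 1 / ((a:ℝ) + 1) ^ 2 ≤ 2 - 1 / (m:ℝ) := by
    induction m with
    | zero => norm_num
    | succ m ih =>
      rw [Finset.sum_range_succ]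
      rcases Nat.eq_zero_or_pos m with rfl | hm
      · norm_num
      have hm0 : (0:ℝ) < m := by exact_mod_cast hm
      have h2 : 1 / ((m:ℝ) + 1) ^ 2 ≤ 1 / (m:ℝ) - 1 / ((m:ℝ) + 1) := by
        rw [div_sub_div _ _ (by positivity) (by positivity),
          div_le_div_iff₀ (by positivity) (by positivity)]
        nlinarith
      push_cast
      linarith
  have : (0:ℝ) ≤ 1 / (m:ℝ) := by positivity
  linarith

/-- The sum `∑ log a / a` over `a ≤ m`. -/
noncomputable def logSum (m : ℕ) : ℝ := ∑ a ∈ Finset.range m, Real.log (a + 1) / ((a:ℝ) + 1)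

lemma log_succ_sub_le {x : ℝ} (hx : 0 < x) : Real.log (x + 1) - Real.log x ≤ 1 / x := by
  rw [← Real.log_div (by positivity) (by positivity)]
  refine (Real.log_le_sub_one_of_pos (by positivity)).trans (le_of_eq ?_)
  field_simp; ring

lemma le_log_succ_sub {x : ℝ} (hx : 0 < x) : 1 / (x + 1) ≤ Real.log (x + 1) - Real.log x := by
  have h : Real.log x - Real.log (x + 1) ≤ -(1 / (x + 1)) := by
    rw [← Real.log_div (by positivity) (by positivity)]
    refine (Real.log_le_sub_one_of_pos (by positivity)).trans (le_of_eq ?_)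
    field_simp; ring
  linarith

lemma logSum_le (m : ℕ) : logSum m ≤ Real.log m ^ 2 / 2 + Real.log m / 2 := by
  induction m with
  | zero => simp [logSum]
  | succ m ih =>
    rcases Nat.eq_zero_or_pos m with rfl | hm
    · simp [logSum]
    have hm1 : (1:ℝ) ≤ m := by exact_mod_cast hm
    have h1 := log_succ_sub_le (x := m) (by positivity)
    have h2 := le_log_succ_sub (x := m) (by positivity)
    have h3 : 1 / (m:ℝ) ≤ 1 := by rw [div_le_one (by positivity)]; exact hm1
    have h4 : 0 ≤ Real.log ((m:ℝ) + 1) := Real.log_nonneg (by linarith)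
    have e : logSum (m + 1) = logSum m + Real.log (m + 1) / (m + 1) := by
      unfold logSum; rw [Finset.sum_range_succ]
    rw [e]
    push_cast
    have h5 : Real.log ((m:ℝ) + 1) / (m + 1)
        ≤ Real.log (m + 1) * (Real.log (m + 1) - Real.log m) := by
      rw [div_eq_mul_one_div]; gcongr
    have h0 : 0 ≤ 1 / ((m:ℝ) + 1) := by positivity
    nlinarith

lemma le_logSum (m : ℕ) : Real.log (m + 1) ^ 2 / 2 - Real.log (m + 1) / 2 ≤ logSum m := by
  induction m with
  | zero => simp [logSum]
  | succ m ih =>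
    have hm : (0:ℝ) ≤ m := m.cast_nonneg
    have h1 := log_succ_sub_le (x := (m:ℝ) + 1) (by positivity)
    have h2 := le_log_succ_sub (x := (m:ℝ) + 1) (by positivity)
    have h3 : 1 / ((m:ℝ) + 1) ≤ 1 := by rw [div_le_one (by positivity)]; linarith
    have h4 : 0 ≤ Real.log ((m:ℝ) + 1) := Real.log_nonneg (by linarith)
    have e : logSum (m + 1) = logSum m + Real.log (m + 1) / (m + 1) := by
      unfold logSum; rw [Finset.sum_range_succ]
    rw [e]
    push_cast
    have h5 : Real.log ((m:ℝ) + 1) * (Real.log (m + 1 + 1) - Real.log (m + 1))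
        ≤ Real.log ((m:ℝ) + 1) / (m + 1) := by
      rw [div_eq_mul_one_div (Real.log ((m:ℝ) + 1))]; gcongr
    have h0 : 0 ≤ 1 / ((m:ℝ) + 1 + 1) := by positivity
    nlinarith

lemma upperSum_trunc (m : ℕ) : upperSum (trunc m) m
    = ∑ p ∈ box m, if (p.1 + 1) * (p.2 + 1) ≤ m then 1 / (((p.1:ℝ) + 1) * (p.2 + 1)) else 0 := by
  refine Finset.sum_congr rfl fun p _ => ?_
  unfold trunc
  split_ifs
  · push_cast
    have : (p.1:ℝ) + 1 ≠ 0 := by positivity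
    have : (p.2:ℝ) + 1 ≠ 0 := by positivity
    field_simp
  · simp

/-- Summing over `b` first: `∑_{ab ≤ m} 1/(ab) = ∑_a (1/a) H(⌊m/a⌋)`. -/
lemma upperSum_trunc_eq (m : ℕ) : upperSum (trunc m) m
    = ∑ a ∈ Finset.range m, 1 / ((a:ℝ) + 1) * harm (m / (a + 1)) := by
  rw [upperSum_trunc, box, Finset.sum_product]
  refine Finset.sum_congr rfl fun a _ => ?_
  have h : Finset.range (m / (a + 1))
      = (Finset.range m).filter fun b => (a + 1) * (b + 1) ≤ m := by
    ext b
    simp only [Finset.mem_range, Finset.mem_filter]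
    rw [← Nat.succ_le_iff, Nat.le_div_iff_mul_le (by omega), mul_comm (b.succ)]
    constructor
    · intro h
      refine ⟨?_, h⟩
      have : b + 1 ≤ (a + 1) * (b + 1) := Nat.le_mul_of_pos_left _ (by omega)
      have h' : (a + 1) * (b + 1) ≤ m := h
      omega
    · exact fun h => h.2
  unfold harm
  rw [h, Finset.sum_filter, Finset.mul_sum]
  refine Finset.sum_congr rfl fun b _ => ?_
  split_ifs
  · rw [one_div_mul_one_div]
  · simp

lemma sum_log_div (m : ℕ) (hm : 0 < m) :
    ∑ a ∈ Finset.range m, 1 / ((a:ℝ) + 1) * Real.log ((m:ℝ) / (a + 1))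
      = Real.log m * harm m - logSum m := by
  unfold harm logSum
  rw [Finset.mul_sum, ← Finset.sum_sub_distrib]
  refine Finset.sum_congr rfl fun a _ => ?_
  rw [Real.log_div (by positivity) (by positivity)]
  ring

lemma upperSum_trunc_le {m : ℕ} (hm : 0 < m) :
    upperSum (trunc m) m ≤ Real.log m ^ 2 / 2 + 3 * Real.log m + 2 := by
  have hm1 : (1:ℝ) ≤ m := by exact_mod_cast hm
  have hL : 0 ≤ Real.log m := Real.log_nonneg hm1
  have h1 : upperSum (trunc m) m ≤ harm m + (Real.log m * harm m - logSum m) := by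
    rw [upperSum_trunc_eq, ← sum_log_div m hm]
    change _ ≤ (∑ a ∈ Finset.range m, 1 / ((a:ℝ) + 1)) + _
    rw [← Finset.sum_add_distrib]
    refine Finset.sum_le_sum fun a ha => ?_
    rw [Finset.mem_range] at ha
    have hpos : 0 < m / (a + 1) := Nat.div_pos (by omega) (by omega)
    have h2 : Real.log ((m / (a + 1) : ℕ) : ℝ) ≤ Real.log ((m:ℝ) / (a + 1)) := by
      apply Real.log_le_log (by exact_mod_cast hpos)
      have := Nat.cast_div_le (α := ℝ) (m := m) (n := a + 1)
      push_cast at this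
      exact this
    have h3 := harm_le (m / (a + 1))
    have h4 : (0:ℝ) ≤ 1 / ((a:ℝ) + 1) := by positivity
    nlinarith
  have h2 := harm_le m
  have h3 := le_logSum m
  have h4 := log_succ_sub_le (x := m) (by positivity)
  have h5 : 1 / (m:ℝ) ≤ 1 := by rw [div_le_one (by positivity)]; exact hm1
  have h6 : Real.log m ≤ Real.log (m + 1) := Real.log_le_log (by positivity) (by linarith)
  nlinarith

lemma le_upperSum_trunc {m : ℕ} (hm : 0 < m) :
    Real.log m ^ 2 / 2 - Real.log m / 2 ≤ upperSum (trunc m) m := by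
  have hm1 : (1:ℝ) ≤ m := by exact_mod_cast hm
  have hL : 0 ≤ Real.log m := Real.log_nonneg hm1
  have h1 : Real.log m * harm m - logSum m ≤ upperSum (trunc m) m := by
    rw [upperSum_trunc_eq, ← sum_log_div m hm]
    refine Finset.sum_le_sum fun a ha => ?_
    gcongr
    refine le_trans ?_ (le_harm _)
    apply Real.log_le_log (by positivity)
    rw [div_le_iff₀ (by positivity)]
    have := Nat.lt_mul_div_succ m (show 0 < a + 1 by omega)
    have h2 : (m:ℝ) < ((a + 1 : ℕ):ℝ) * ((m / (a + 1) + 1 : ℕ):ℝ) := by exact_mod_cast this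
    push_cast at h2
    linarith
  have h2 := le_harm m
  have h3 := logSum_le m
  have h6 : Real.log m ≤ Real.log (m + 1) := Real.log_le_log (by positivity) (by linarith)
  nlinarith

lemma le_lowerSum_trunc (m : ℕ) :
    upperSum (trunc m) m - 12 * harm m ≤ lowerSum (trunc m) m := by
  set Z := ∑ a ∈ Finset.range m, 1 / ((a:ℝ) + 1) ^ 2 with hZ
  have hZ2 : Z ≤ 2 := sum_one_div_sq_le m
  have e1 : Z * harm m = ∑ p ∈ box m, 1 / ((p.1:ℝ) + 1) ^ 2 * (1 / ((p.2:ℝ) + 1)) := by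
    rw [hZ, harm, Finset.sum_mul_sum, box, Finset.sum_product]
  have e2 : harm m * Z = ∑ p ∈ box m, 1 / ((p.1:ℝ) + 1) * (1 / ((p.2:ℝ) + 1) ^ 2) := by
    rw [hZ, harm, Finset.sum_mul_sum, box, Finset.sum_product]
  have h : upperSum (trunc m) m - (4 * (Z * harm m) + 2 * (harm m * Z))
      ≤ lowerSum (trunc m) m := by
    rw [e1, e2, upperSum, lowerSum, Finset.mul_sum, Finset.mul_sum, ← Finset.sum_add_distrib,
      ← Finset.sum_sub_distrib]
    refine Finset.sum_le_sum fun p _ => ?_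
    set u : ℝ := (p.1:ℝ) + 1 with hu
    set v : ℝ := (p.2:ℝ) + 1 with hv
    have hu1 : 1 ≤ u := by rw [hu]; linarith [(p.1.cast_nonneg : (0:ℝ) ≤ p.1)]
    have hv1 : 1 ≤ v := by rw [hv]; linarith [(p.2.cast_nonneg : (0:ℝ) ≤ p.2)]
    have eu : (p.1:ℝ) + 3 = u + 2 := by rw [hu]; ring
    have ev : (p.2:ℝ) + 2 = v + 1 := by rw [hv]; ring
    rw [eu, ev]
    unfold trunc
    split_ifs
    · have ec : (((p.1 + 1) * (p.2 + 1) : ℕ) : ℝ) = u * v := by push_cast; rfl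
      rw [ec]
      -- the ratio of the two weights is a product of factors at least `1 - 4 / u` and `1 - 2 / v`
      have a1 : 1 - 4 / u ≤ u ^ 2 / (u + 2) ^ 2 := by
        rw [sub_le_iff_le_add, ← sub_le_iff_le_add', one_sub_div (by positivity),
          div_le_div_iff₀ (by positivity) (by positivity)]
        nlinarith
      have a2 : u ^ 2 / (u + 2) ^ 2 ≤ 1 := by
        rw [div_le_one (by positivity)]; nlinarith
      have b1 : 1 - 2 / v ≤ v ^ 2 / (v + 1) ^ 2 := by
        rw [sub_le_iff_le_add, ← sub_le_iff_le_add', one_sub_div (by positivity),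
          div_le_div_iff₀ (by positivity) (by positivity)]
        nlinarith
      have b2 : v ^ 2 / (v + 1) ^ 2 ≤ 1 := by
        rw [div_le_one (by positivity)]; nlinarith
      have key : 1 - (4 / u + 2 / v) ≤ u ^ 2 / (u + 2) ^ 2 * (v ^ 2 / (v + 1) ^ 2) := by
        nlinarith [mul_nonneg (sub_nonneg.2 a2) (sub_nonneg.2 b2)]
      have := mul_le_mul_of_nonneg_left key (show 0 ≤ 1 / (u * v) by positivity)
      have f1 : 1 / (u * v) * (u ^ 2 / (u + 2) ^ 2 * (v ^ 2 / (v + 1) ^ 2))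
          = u * v * (1 / ((u + 2) ^ 2 * (v + 1) ^ 2)) := by
        field_simp
      have f2 : 1 / (u * v) * (1 - (4 / u + 2 / v)) = u * v * (1 / (u ^ 2 * v ^ 2))
          - (4 * (1 / u ^ 2 * (1 / v)) + 2 * (1 / u * (1 / v ^ 2))) := by
        field_simp
      rw [f1, f2] at this
      exact this
    · have : 0 ≤ 4 * (1 / u ^ 2 * (1 / v)) + 2 * (1 / u * (1 / v ^ 2)) := by positivity
      simp only [zero_mul]
      linarith
  have := harm_nonneg m
  nlinarith

lemma upperSum_trunc_sq_le (m : ℕ) : upperSum (fun n => trunc m n ^ 2) m ≤ m * harm m := by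
  rw [upperSum, box, Finset.sum_product, harm, Finset.mul_sum]
  refine Finset.sum_le_sum fun a _ => ?_
  have h : ∀ b ∈ Finset.range m, trunc m ((a + 1) * (b + 1)) ^ 2 *
      (1 / (((a:ℝ) + 1) ^ 2 * ((b:ℝ) + 1) ^ 2)) ≤ if b < m / (a + 1) then 1 else 0 := by
    intro b _
    have e : b < m / (a + 1) ↔ (a + 1) * (b + 1) ≤ m := by
      rw [← Nat.succ_le_iff, Nat.le_div_iff_mul_le (by omega), mul_comm]
    unfold trunc
    by_cases hb : (a + 1) * (b + 1) ≤ m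
    · rw [if_pos hb, if_pos (e.2 hb)]
      push_cast
      apply le_of_eq
      field_simp
    · rw [if_neg hb, if_neg (fun h => hb (e.1 h))]
      simp
  refine (Finset.sum_le_sum h).trans ?_
  rw [← Finset.sum_filter, Finset.sum_const, nsmul_eq_mul, mul_one]
  have h2 : ((Finset.range m).filter fun b => b < m / (a + 1)).card ≤ m / (a + 1) := by
    refine (Finset.card_le_card (t := Finset.range (m / (a + 1))) fun b hb => ?_).trans
      (by rw [Finset.card_range])
    exact Finset.mem_range.2 (Finset.mem_filter.1 hb).2
  have h3 := Nat.cast_div_le (α := ℝ) (m := m) (n := a + 1)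
  push_cast at h3
  rw [mul_one_div]
  exact le_trans (by exact_mod_cast h2) h3

/-- The Gauss mean of `a₁ a₂` truncated at `m`. -/
noncomputable def truncMean (m : ℕ) : ℝ := ∫ x, pairFun (trunc m) x ∂gaussMeasure

lemma truncMean_asymp {m : ℕ} (hm : 0 < m) :
    |truncMean m - Real.log m ^ 2 / (2 * Real.log 2)| ≤ 26 * (1 + Real.log m) := by
  have hm1 : (1:ℝ) ≤ m := by exact_mod_cast hm
  have hL : 0 ≤ Real.log m := Real.log_nonneg hm1
  have hl := Real.log_two_gt_d9
  have hl0 : 0 < Real.log 2 := by linarith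
  have h1 := integral_pairFun_le (trunc_nonneg m) (trunc_of_lt m)
  have h2 := le_integral_pairFun (trunc_nonneg m) (trunc_of_lt m)
  have h3 := upperSum_trunc_le hm
  have h4 := le_upperSum_trunc hm
  have h5 := le_lowerSum_trunc m
  have h6 := harm_le m
  rw [le_div_iff₀ hl0] at h1
  rw [div_le_iff₀ hl0] at h2
  change truncMean m * _ ≤ _ at h1
  change _ ≤ truncMean m * _ at h2
  have e : truncMean m - Real.log m ^ 2 / (2 * Real.log 2)
      = (truncMean m * Real.log 2 - Real.log m ^ 2 / 2) / Real.log 2 := by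
    field_simp
  rw [e, abs_div, abs_of_pos hl0, div_le_iff₀ hl0]
  have : |truncMean m * Real.log 2 - Real.log m ^ 2 / 2| ≤ 13 * (1 + Real.log m) := by
    rw [abs_le]; constructor <;> linarith
  nlinarith

lemma corrConst_trunc_le {m : ℕ} (hm : 0 < m) :
    corrConst (trunc m) m ≤ 20 * (m * (1 + Real.log m) + 16 * (1 + Real.log m) ^ 4) := by
  have hm1 : (1:ℝ) ≤ m := by exact_mod_cast hm
  have hL : 0 ≤ Real.log m := Real.log_nonneg hm1
  have hl := Real.log_two_gt_d9
  have hl0 : 0 < Real.log 2 := by linarith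
  have h1 := upperSum_trunc_sq_le m
  have h2 := harm_le m
  have h3 := upperSum_trunc_le hm
  have h0 := upperSum_nonneg (trunc_nonneg m) m
  have h4 : upperSum (trunc m) m ≤ 4 * (1 + Real.log m) ^ 2 := by nlinarith
  have h5 : upperSum (fun n => trunc m n ^ 2) m ≤ m * (1 + Real.log m) :=
    h1.trans (by gcongr)
  have hd : ∀ t : ℝ, 0 ≤ t → t / Real.log 2 ≤ 2 * t := by
    intro t ht
    rw [div_le_iff₀ hl0]; nlinarith
  have h6 : upperSum (fun n => trunc m n ^ 2) m / Real.log 2 ≤ 2 * (m * (1 + Real.log m)) :=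
    (div_le_div_of_nonneg_right h5 hl0.le).trans (hd _ (by positivity))
  have h7 : upperSum (trunc m) m * (upperSum (trunc m) m / Real.log 2)
      ≤ 4 * (1 + Real.log m) ^ 2 * (2 * (4 * (1 + Real.log m) ^ 2)) := by
    refine mul_le_mul h4 ?_ (by positivity) (by positivity)
    exact (div_le_div_of_nonneg_right h4 hl0.le).trans (hd _ (by positivity))
  have h8 : 0 ≤ (m:ℝ) * (1 + Real.log m) := by positivity
  unfold corrConst
  nlinarith

/-! ### Almost sure convergence along a sparse sequence -/

/-- The truncation level `N (log N)^s`. -/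
noncomputable def level (s : ℝ) (N : ℕ) : ℝ := N * Real.log N ^ s

/-- The normalisation `N (log N)²`. -/
noncomputable def scale (N : ℕ) : ℝ := N * Real.log N ^ 2

/-- The sum of the first `N` products `aᵢ aᵢ₊₁`, each truncated at `⌊N (log N)^s⌋`. -/
noncomputable def truncSum (s : ℝ) (N : ℕ) (x : ℝ) : ℝ :=
  ∑ i ∈ Finset.range N, pairFun (trunc ⌊level s N⌋₊) (gaussMap^[i] x)

lemma level_nonneg (s : ℝ) (N : ℕ) : 0 ≤ level s N := by
  have := Real.log_natCast_nonneg N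
  unfold level; positivity

lemma level_mono {s : ℝ} (hs : 0 ≤ s) {M N : ℕ} (hM : 0 < M) (h : M ≤ N) :
    level s M ≤ level s N := by
  have h1 := Real.log_natCast_nonneg M
  have hM' : (0:ℝ) < M := by exact_mod_cast hM
  have h2 : (M:ℝ) ≤ N := by exact_mod_cast h
  unfold level
  gcongr

lemma scale_mono : Monotone scale := by
  intro M N h
  rcases Nat.eq_zero_or_pos M with rfl | hM
  · unfold scale
    have : (0:ℝ) ≤ N := N.cast_nonneg
    simp only [Nat.cast_zero, zero_mul]
    positivity
  have h1 := Real.log_natCast_nonneg M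
  have hM' : (0:ℝ) < M := by exact_mod_cast hM
  have h2 : (M:ℝ) ≤ N := by exact_mod_cast h
  unfold scale
  gcongr

lemma sum_eq_truncSum (s : ℝ) (N : ℕ) (x : ℝ) :
    (∑ i ∈ Finset.Icc 1 N,
      if ((pq i x * pq (i + 1) x : ℕ) : ℝ) ≤ (N : ℝ) * Real.log N ^ s then
        ((pq i x * pq (i + 1) x : ℕ) : ℝ) else 0) = truncSum s N x := by
  unfold truncSum
  symm
  refine Finset.sum_nbij' (· + 1) (· - 1) (fun i hi => ?_) (fun i hi => ?_) (fun i _ => ?_)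
    (fun i hi => ?_) fun i _ => ?_
  · simp only [Finset.mem_range, Finset.mem_Icc] at *; omega
  · simp only [Finset.mem_range, Finset.mem_Icc] at *; omega
  · simp
  · simp only [Finset.mem_Icc] at *; omega
  have e1 : pq 1 (gaussMap^[i] x) = pq (i + 1) x := by
    unfold pq; simp
  have e2 : pq 2 (gaussMap^[i] x) = pq (i + 1 + 1) x := by
    unfold pq
    rw [← Function.iterate_add_apply, show 2 - 1 + i = i + 1 + 1 - 1 by omega]
  unfold pairFun trunc
  simp only [e1, e2, Nat.le_floor_iff (level_nonneg s N)]
  rfl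

lemma truncSum_nonneg (s : ℝ) (N : ℕ) (x : ℝ) : 0 ≤ truncSum s N x :=
  Finset.sum_nonneg fun _ _ => trunc_nonneg _ _

lemma trunc_mono {m m' : ℕ} (h : m ≤ m') (n : ℕ) : trunc m n ≤ trunc m' n := by
  unfold trunc
  split_ifs with h1 h2
  · exact le_rfl
  · omega
  · positivity
  · exact le_rfl

lemma truncSum_mono {s : ℝ} (hs : 0 ≤ s) (x : ℝ) : Monotone fun N => truncSum s N x := by
  intro M N h
  rcases Nat.eq_zero_or_pos M with rfl | hM
  · simpa [truncSum] using truncSum_nonneg s N x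
  refine (Finset.sum_le_sum fun i _ => trunc_mono (Nat.floor_le_floor (level_mono hs hM h)) _).trans
    (Finset.sum_le_sum_of_subset_of_nonneg (Finset.range_mono h) fun _ _ _ => trunc_nonneg _ _)

lemma measurable_truncSum (s : ℝ) (N : ℕ) : Measurable (truncSum s N) := by
  unfold truncSum
  exact Finset.measurable_sum _ fun i _ =>
    (measurable_pairFun _).comp (measurable_gaussMap.iterate i)

lemma truncSum_le (s : ℝ) (N : ℕ) (x : ℝ) : truncSum s N x ≤ N * ⌊level s N⌋₊ := by
  unfold truncSum
  refine (Finset.sum_le_sum fun i _ => (le_abs_self _).trans (abs_trunc_le _ _)).trans ?_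
  simp

/-- The truncated sum, centred and normalised. -/
noncomputable def fluct (s : ℝ) (N : ℕ) (x : ℝ) : ℝ :=
  (truncSum s N x - N * truncMean ⌊level s N⌋₊) / scale N

lemma measurable_fluct (s : ℝ) (N : ℕ) : Measurable (fluct s N) :=
  ((measurable_truncSum s N).sub_const _).div_const _

lemma integrable_fluct_sq (s : ℝ) (N : ℕ) :
    Integrable (fun x => fluct s N x ^ 2) gaussMeasure := by
  refine Integrable.of_bound
    (C := ((N * ⌊level s N⌋₊ + |N * truncMean ⌊level s N⌋₊|) / |scale N|) ^ 2)
    ((measurable_fluct s N).pow_const 2).aestronglyMeasurable (ae_of_all _ fun x => ?_)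
  rw [norm_pow, Real.norm_eq_abs]
  unfold fluct
  rw [abs_div]
  gcongr
  refine (abs_sub _ _).trans ?_
  rw [abs_of_nonneg (truncSum_nonneg s N x)]
  gcongr
  exact truncSum_le s N x

section
variable {s : ℝ} {N : ℕ}

lemma pos_of_one_le_log (hN : 1 ≤ Real.log N) : (1:ℝ) ≤ N := by
  rcases Nat.eq_zero_or_pos N with rfl | h
  · norm_num at hN
  · exact_mod_cast h

lemma le_floor_level (hs : 0 ≤ s) (hN : 1 ≤ Real.log N) : N ≤ ⌊level s N⌋₊ := by
  apply Nat.le_floor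
  unfold level
  exact le_mul_of_one_le_right (by positivity) (Real.one_le_rpow hN hs)

lemma log_floor_level_le (hs : 0 ≤ s) (hs2 : s ≤ 2) (hN : 1 ≤ Real.log N) :
    Real.log ⌊level s N⌋₊ ≤ Real.log N + 2 * Real.log (Real.log N) := by
  have h1 := pos_of_one_le_log hN
  have h2 : (N:ℝ) ≤ ⌊level s N⌋₊ := by exact_mod_cast le_floor_level hs hN
  have h3 : Real.log ⌊level s N⌋₊ ≤ Real.log (level s N) :=
    Real.log_le_log (by linarith) (Nat.floor_le (level_nonneg s N))
  have h4 : 0 ≤ Real.log (Real.log N) := Real.log_nonneg hN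
  unfold level at h3 ⊢
  rw [Real.log_mul (by positivity) (by positivity), Real.log_rpow (by positivity)] at h3
  nlinarith

/-- Variance divided by `N² (log N)⁴` is `O((log N)^(s-3))`. -/
lemma integral_fluct_sq_le (hs : 1 ≤ s) (hs2 : s ≤ 2) (hN : 1 ≤ Real.log N) :
    ∫ x, fluct s N x ^ 2 ∂gaussMeasure ≤ 320 * 8196 * Real.log N ^ (s - 3) := by
  have hs0 : 0 ≤ s := by linarith
  have h1 := pos_of_one_le_log hN
  have hm : (N:ℝ) ≤ ⌊level s N⌋₊ := by exact_mod_cast le_floor_level hs0 hN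
  have hm0 : 0 < ⌊level s N⌋₊ := by exact_mod_cast (by linarith : (0:ℝ) < ⌊level s N⌋₊)
  have hlog := log_floor_level_le hs0 hs2 hN
  have hle : (⌊level s N⌋₊ : ℝ) ≤ N * Real.log N ^ s := Nat.floor_le (level_nonneg s N)
  have hcorr := corrConst_trunc_le hm0
  have hvar := variance_bound (trunc_nonneg ⌊level s N⌋₊) (abs_trunc_le ⌊level s N⌋₊)
    (trunc_of_lt ⌊level s N⌋₊) N
  have hlm : 0 ≤ Real.log ⌊level s N⌋₊ := Real.log_natCast_nonneg _
  have e : ∫ x, fluct s N x ^ 2 ∂gaussMeasure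
      = (∫ x, (∑ i ∈ Finset.range N, pairFun (trunc ⌊level s N⌋₊) (gaussMap^[i] x)
          - N * ∫ x, pairFun (trunc ⌊level s N⌋₊) x ∂gaussMeasure) ^ 2 ∂gaussMeasure)
        / scale N ^ 2 := by
    rw [← integral_div]
    simp only [fluct, div_pow]
    rfl
  rw [e]
  set m := ⌊level s N⌋₊ with hmdef
  set L := Real.log N with hL
  have hL0 : 0 < L := by linarith
  have hLL : Real.log L ≤ L := by
    have := Real.log_le_sub_one_of_pos hL0
    linarith
  have h4 : 1 + Real.log m ≤ 4 * L := by linarith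
  have hc : corrConst (trunc m) m ≤ 20 * (N * L ^ s * (4 * L) + 16 * (4 * L) ^ 4) := by
    refine hcorr.trans ?_
    gcongr
  set R := L ^ (s - 3) with hR
  have hR0 : 0 < R := Real.rpow_pos_of_pos hL0 _
  have hRs : L ^ s = R * L ^ 3 := by
    rw [hR, ← Real.rpow_natCast, ← Real.rpow_add hL0]; norm_num
  have hpow : 1 ≤ 2 * (N * R) := by
    -- `N = exp L ≥ L² / 2` beats the negative power of `L`
    have hexp : (N:ℝ) = Real.exp L := by rw [hL, Real.exp_log (by linarith)]
    have h6 : L ^ 2 / 2 ≤ N := by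
      have := Real.quadratic_le_exp_of_nonneg hL0.le
      rw [hexp]; linarith
    have h7 : L ^ (-2:ℝ) ≤ R := Real.rpow_le_rpow_of_exponent_le hN (by linarith)
    have h8 : L ^ 2 * L ^ (-2:ℝ) = 1 := by
      rw [← Real.rpow_natCast, ← Real.rpow_add hL0]; norm_num
    have h9 : L ^ 2 / 2 * L ^ (-2:ℝ) ≤ N * R := by gcongr
    linarith
  have hsc : 0 < scale N ^ 2 := by
    unfold scale; positivity
  rw [div_le_iff₀ hsc]
  refine hvar.trans ?_
  have h10 : 16 * N * corrConst (trunc m) m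
      ≤ 16 * N * (20 * (N * L ^ s * (4 * L) + 16 * (4 * L) ^ 4)) := by gcongr
  refine h10.trans ?_
  rw [hRs]
  have h11 : 0 ≤ (N:ℝ) * L ^ 4 := by positivity
  have h12 := mul_le_mul_of_nonneg_left hpow h11
  have e3 : scale N ^ 2 = N * L ^ 4 * N := by unfold scale; rw [← hL]; ring
  rw [e3]
  nlinarith

/-- The explicit rate behind `truncMean ⌊N (log N)^s⌋ ∼ (log N)² / (2 log 2)`. -/
lemma truncMean_level (hs : 0 ≤ s) (hs2 : s ≤ 2) (hN : 1 ≤ Real.log N) :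
    |N * truncMean ⌊level s N⌋₊ / scale N - 1 / (2 * Real.log 2)|
      ≤ 104 * (1 / Real.log N) + 8 * (Real.log (Real.log N) / Real.log N) := by
  have h1 := pos_of_one_le_log hN
  have hm : (N:ℝ) ≤ ⌊level s N⌋₊ := by exact_mod_cast le_floor_level hs hN
  have hm0 : 0 < ⌊level s N⌋₊ := by exact_mod_cast (by linarith : (0:ℝ) < ⌊level s N⌋₊)
  have hlog := log_floor_level_le hs hs2 hN
  have has := truncMean_asymp hm0
  have hlog2 : Real.log N ≤ Real.log ⌊level s N⌋₊ := Real.log_le_log (by linarith) hm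
  have hl := Real.log_two_gt_d9
  set m := ⌊level s N⌋₊ with hmdef
  set L := Real.log N with hL
  set ℓ := Real.log m with hℓ
  have hL0 : 0 < L := by linarith
  have hLL0 : 0 ≤ Real.log L := Real.log_nonneg hN
  have hLL : Real.log L ≤ L := by
    have := Real.log_le_sub_one_of_pos hL0
    linarith
  have e : N * truncMean m / scale N - 1 / (2 * Real.log 2)
      = ((truncMean m - ℓ ^ 2 / (2 * Real.log 2)) + (ℓ ^ 2 - L ^ 2) / (2 * Real.log 2)) / L ^ 2 := by
    unfold scale
    rw [← hL]
    have : (N:ℝ) ≠ 0 := by linarith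
    have : Real.log 2 ≠ 0 := by linarith
    field_simp
    ring
  rw [e, abs_div, abs_of_pos (show 0 < L ^ 2 by positivity), div_le_iff₀ (by positivity)]
  have e2 : (104 * (1 / L) + 8 * (Real.log L / L)) * L ^ 2 = 104 * L + 8 * Real.log L * L := by
    field_simp
  rw [e2]
  refine (abs_add_le _ _).trans (add_le_add (has.trans (by linarith)) ?_)
  have h2 : 0 ≤ ℓ ^ 2 - L ^ 2 := by nlinarith
  rw [abs_of_nonneg (div_nonneg h2 (by linarith)), div_le_iff₀ (by linarith)]
  have h3 : ℓ ^ 2 - L ^ 2 ≤ 8 * Real.log L * L := by nlinarith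
  have h4 : 0 ≤ 8 * Real.log L * L := by positivity
  nlinarith

end

lemma tendsto_log_natCast : Tendsto (fun N : ℕ => Real.log N) atTop atTop :=
  Real.tendsto_log_atTop.comp tendsto_natCast_atTop_atTop

lemma tendsto_mean {s : ℝ} (hs : 0 ≤ s) (hs2 : s ≤ 2) :
    Tendsto (fun N : ℕ => N * truncMean ⌊level s N⌋₊ / scale N) atTop
      (nhds (1 / (2 * Real.log 2))) := by
  rw [tendsto_iff_norm_sub_tendsto_zero]
  have h1 : Tendsto (fun t : ℝ => 104 * (1 / t) + 8 * (Real.log t / t)) atTop (nhds 0) := by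
    have h2 : Tendsto (fun t : ℝ => 1 / t) atTop (nhds 0) := by
      simpa using tendsto_inv_atTop_zero (𝕜 := ℝ)
    have h3 := Real.isLittleO_log_id_atTop.tendsto_div_nhds_zero
    simpa using (h2.const_mul 104).add (h3.const_mul 8)
  refine squeeze_zero' (Eventually.of_forall fun N => norm_nonneg _) ?_
    (h1.comp tendsto_log_natCast)
  filter_upwards [tendsto_log_natCast.eventually_ge_atTop 1] with N hN
  exact truncMean_level hs hs2 hN

/-- A sequence of functions with summable second moments tends to zero almost surely. -/
lemma ae_tendsto_zero_of_summable {μ : Measure ℝ} {X : ℕ → ℝ → ℝ} {b : ℕ → ℝ}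
    (hm : ∀ k, Measurable (X k)) (hi : ∀ k, Integrable (fun x => X k x ^ 2) μ)
    (hb : ∀ k, ∫ x, X k x ^ 2 ∂μ ≤ b k) (hs : Summable b) :
    ∀ᵐ x ∂μ, Tendsto (fun k => X k x) atTop (nhds 0) := by
  have h1 : ∀ k, ∫⁻ x, ENNReal.ofReal (X k x ^ 2) ∂μ ≤ ENNReal.ofReal (b k) := fun k => by
    rw [← ofReal_integral_eq_lintegral_ofReal (hi k) (ae_of_all _ fun x => sq_nonneg _)]
    exact ENNReal.ofReal_le_ofReal (hb k)
  have hmE : ∀ k, Measurable fun x => ENNReal.ofReal (X k x ^ 2) := fun k =>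
    ((hm k).pow_const 2).ennreal_ofReal
  have h2 : ∫⁻ x, ∑' k, ENNReal.ofReal (X k x ^ 2) ∂μ ≠ ⊤ := by
    rw [lintegral_tsum fun k => (hmE k).aemeasurable]
    exact ne_top_of_le_ne_top hs.tsum_ofReal_ne_top (ENNReal.tsum_le_tsum h1)
  filter_upwards [ae_lt_top (Measurable.tsum hmE) h2] with x hx
  have h3 := ENNReal.tendsto_atTop_zero_of_tsum_ne_top hx.ne
  have h4 := (ENNReal.tendsto_toReal ENNReal.zero_ne_top).comp h3
  have h5 : Tendsto (fun k => X k x ^ 2) atTop (nhds 0) := by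
    refine (h4.congr fun k => ?_).trans (by simp)
    exact ENNReal.toReal_ofReal (sq_nonneg _)
  have h6 := h5.sqrt
  simp only [Real.sqrt_sq_eq_abs, Real.sqrt_zero] at h6
  exact (tendsto_zero_iff_abs_tendsto_zero _).2 h6

/-- The sparse sequence `⌈exp (k^α)⌉`. -/
noncomputable def sparse (α : ℝ) (k : ℕ) : ℕ := ⌈Real.exp ((k:ℝ) ^ α)⌉₊

lemma le_log_sparse (α : ℝ) (k : ℕ) : (k:ℝ) ^ α ≤ Real.log (sparse α k) := by
  rw [Real.le_log_iff_exp_le (by exact_mod_cast Nat.ceil_pos.2 (Real.exp_pos _))]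
  exact Nat.le_ceil _

lemma tendsto_rpow_natCast {α : ℝ} (hα : 0 < α) :
    Tendsto (fun k : ℕ => (k:ℝ) ^ α) atTop atTop :=
  (tendsto_rpow_atTop hα).comp tendsto_natCast_atTop_atTop

lemma tendsto_sparse {α : ℝ} (hα : 0 < α) : Tendsto (sparse α) atTop atTop :=
  tendsto_nat_ceil_atTop.comp (Real.tendsto_exp_atTop.comp (tendsto_rpow_natCast hα))

lemma ae_tendsto_fluct_sparse {s α : ℝ} (hs : 1 ≤ s) (hs2 : s ≤ 2) (hα : 0 < α)
    (hαs : 1 < α * (3 - s)) :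
    ∀ᵐ x ∂gaussMeasure, Tendsto (fun k => fluct s (sparse α k) x) atTop (nhds 0) := by
  have hsum : Summable fun k : ℕ => 320 * 8196 * ((k + 1 : ℕ):ℝ) ^ (α * (s - 3)) :=
    ((summable_nat_add_iff 1).2 (Real.summable_nat_rpow.2 (by linarith))).mul_left _
  have := ae_tendsto_zero_of_summable (X := fun k => fluct s (sparse α (k + 1)))
    (fun k => measurable_fluct s _) (fun k => integrable_fluct_sq s _) (fun k => ?_) hsum
  · filter_upwards [this] with x hx
    exact (tendsto_add_atTop_iff_nat 1).1 hx
  have hk : (1:ℝ) ≤ ((k + 1 : ℕ):ℝ) := by push_cast; linarith [(k.cast_nonneg : (0:ℝ) ≤ k)]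
  have h1 := le_log_sparse α (k + 1)
  have h2 : 1 ≤ ((k + 1 : ℕ):ℝ) ^ α := Real.one_le_rpow hk hα.le
  refine (integral_fluct_sq_le hs hs2 (h2.trans h1)).trans ?_
  rw [Real.rpow_mul (by positivity)]
  have h3 := Real.rpow_le_rpow_of_nonpos (by linarith) h1 (show s - 3 ≤ 0 by linarith)
  linarith

/-! ### Interpolation between consecutive terms of the sparse sequence -/

lemma tendsto_sparse_ratio {α : ℝ} (hα : 0 < α) (hα1 : α < 1) :
    Tendsto (fun k => (sparse α (k + 1) : ℝ) / sparse α k) atTop (nhds 1) := by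
  have h1 : Tendsto (fun k : ℕ => ((k + 1 : ℕ):ℝ) ^ α - (k:ℝ) ^ α) atTop (nhds 0) := by
    have hz : Tendsto (fun k : ℕ => α * (k:ℝ) ^ (-(1 - α))) atTop (nhds 0) := by
      simpa using ((tendsto_rpow_neg_atTop (show 0 < 1 - α by linarith)).comp
        tendsto_natCast_atTop_atTop).const_mul α
    refine squeeze_zero' (Eventually.of_forall fun k => ?_) ?_ hz
    · rw [sub_nonneg]
      gcongr
      exact Nat.le_succ k
    · filter_upwards [eventually_gt_atTop 0] with k hk
      have hk0 : (0:ℝ) < k := by exact_mod_cast hk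
      have e : ((k + 1 : ℕ):ℝ) ^ α = (k:ℝ) ^ α * (1 + 1 / k) ^ α := by
        rw [← Real.mul_rpow (by positivity) (by positivity)]
        congr 1
        push_cast; field_simp
      have h2 : (1 + 1 / (k:ℝ)) ^ α ≤ 1 + α * (1 / k) :=
        rpow_one_add_le_one_add_mul_self (by linarith [show (0:ℝ) ≤ 1 / k by positivity])
          hα.le hα1.le
      have e2 : (k:ℝ) ^ (-(1 - α)) = (k:ℝ) ^ α * (1 / k) := by
        rw [neg_sub, Real.rpow_sub hk0, Real.rpow_one]; ring
      rw [e, e2]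
      have := mul_le_mul_of_nonneg_left h2 (show 0 ≤ (k:ℝ) ^ α by positivity)
      linarith
  have h2 : Tendsto (fun k : ℕ => (sparse α k : ℝ) / Real.exp ((k:ℝ) ^ α)) atTop (nhds 1) :=
    (tendsto_nat_ceil_div_atTop (R := ℝ)).comp
      (Real.tendsto_exp_atTop.comp (tendsto_rpow_natCast hα))
  have h3 := (Real.continuous_exp.tendsto 0).comp h1
  rw [Real.exp_zero] at h3
  have h4 := (((tendsto_add_atTop_iff_nat 1).2 h2).mul h3).div h2 one_ne_zero
  rw [mul_one, div_one] at h4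
  refine h4.congr fun k => ?_
  have : (sparse α k : ℝ) ≠ 0 := by exact_mod_cast (Nat.ceil_pos.2 (Real.exp_pos _)).ne'
  simp only [Function.comp, Pi.div_apply, Real.exp_sub]
  have := Real.exp_ne_zero ((k:ℝ) ^ α)
  have := Real.exp_ne_zero (((k + 1 : ℕ):ℝ) ^ α)
  field_simp

lemma tendsto_scale_ratio {α : ℝ} (hα : 0 < α) (hα1 : α < 1) :
    Tendsto (fun k => scale (sparse α (k + 1)) / scale (sparse α k)) atTop (nhds 1) := by
  have h1 := tendsto_sparse_ratio hα hα1
  have hL : Tendsto (fun k => Real.log (sparse α k)) atTop atTop :=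
    tendsto_log_natCast.comp (tendsto_sparse hα)
  have h2 : Tendsto (fun k => 1 + Real.log ((sparse α (k + 1) : ℝ) / sparse α k)
      * (Real.log (sparse α k))⁻¹) atTop (nhds 1) := by
    have h3 := (h1.log one_ne_zero).mul hL.inv_tendsto_atTop
    simpa using h3.const_add 1
  have h4 := h1.mul (h2.pow 2)
  simp only [one_pow, mul_one] at h4
  refine h4.congr' ?_
  filter_upwards [hL.eventually_ge_atTop 1] with k hk
  have hpos : ∀ j, (sparse α j : ℝ) ≠ 0 := fun j => by
    exact_mod_cast (Nat.ceil_pos.2 (Real.exp_pos _)).ne'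
  have hk0 : Real.log (sparse α k) ≠ 0 := by linarith
  have := hpos k
  rw [Real.log_div (hpos _) (hpos _)]
  unfold scale
  field_simp
  ring

/-- A monotone function that is asymptotic to `l * A` along a sequence on which `A` has
consecutive ratios tending to `1` is asymptotic to `l * A` along all integers. -/
lemma tendsto_of_sparse {u A : ℕ → ℝ} {n κ : ℕ → ℕ} {l : ℝ} (hu : Monotone u) (hu0 : ∀ N, 0 ≤ u N)
    (hA : Monotone A) (hA0 : ∀ᶠ N in atTop, 0 < A N) (hn : Tendsto n atTop atTop)
    (hκ : Tendsto κ atTop atTop)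
    (hcov : ∀ᶠ N in atTop, n (κ N) ≤ N ∧ N ≤ n (κ N + 1))
    (hlim : Tendsto (fun k => u (n k) / A (n k)) atTop (nhds l))
    (hratio : Tendsto (fun k => A (n (k + 1)) / A (n k)) atTop (nhds 1)) :
    Tendsto (fun N => u N / A N) atTop (nhds l) := by
  have hAn : ∀ᶠ k in atTop, 0 < A (n k) := hn.eventually hA0
  have hAn1 : ∀ᶠ k in atTop, 0 < A (n (k + 1)) := (tendsto_add_atTop_nat 1).eventually hAn
  have hlow : Tendsto (fun k => u (n k) / A (n (k + 1))) atTop (nhds l) := by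
    have h := hlim.div hratio one_ne_zero
    rw [div_one] at h
    refine h.congr' ?_
    filter_upwards [hAn, hAn1] with k h1 h2
    simp only [Pi.div_apply]
    field_simp
  have hup : Tendsto (fun k => u (n (k + 1)) / A (n k)) atTop (nhds l) := by
    have h := ((tendsto_add_atTop_iff_nat 1).2 hlim).mul hratio
    rw [mul_one] at h
    refine h.congr' ?_
    filter_upwards [hAn, hAn1] with k h1 h2
    field_simp
  refine tendsto_of_tendsto_of_tendsto_of_le_of_le' (hlow.comp hκ) (hup.comp hκ) ?_ ?_
  · filter_upwards [hcov, hA0] with N hN h0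
    exact div_le_div₀ (hu0 _) (hu hN.1) h0 (hA hN.2)
  · filter_upwards [hcov, hκ.eventually hAn] with N hN h0
    exact div_le_div₀ (hu0 _) (hu hN.2) h0 (hA hN.1)

lemma eventually_sparse_cover {α : ℝ} (hα : 0 < α) :
    ∀ᶠ N : ℕ in atTop, sparse α ⌊Real.log N ^ (1 / α)⌋₊ ≤ N
      ∧ N ≤ sparse α (⌊Real.log N ^ (1 / α)⌋₊ + 1) := by
  filter_upwards [eventually_gt_atTop 0] with N hN
  have hN0 : (0:ℝ) < N := by exact_mod_cast hN
  have hL := Real.log_natCast_nonneg N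
  set t := Real.log N ^ (1 / α) with ht
  have ht0 : 0 ≤ t := by positivity
  have hta : t ^ α = Real.log N := by
    rw [ht, ← Real.rpow_mul hL, one_div_mul_cancel hα.ne', Real.rpow_one]
  constructor
  · unfold sparse
    rw [Nat.ceil_le, ← Real.le_log_iff_exp_le hN0, ← hta]
    gcongr
    exact Nat.floor_le ht0
  · have h1 : Real.log N ≤ ((⌊t⌋₊ + 1 : ℕ):ℝ) ^ α := by
      rw [← hta]
      gcongr
      push_cast
      exact (Nat.lt_floor_add_one t).le
    rw [Real.log_le_iff_le_exp hN0] at h1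
    exact_mod_cast h1.trans (Nat.le_ceil _)

theorem truncated_sum_ae_convergence (ε : ℝ) (hε : ε ∈ Set.Ioo (0:ℝ) (1/2)) :
    ∀ᵐ x ∂(volume.restrict (Set.Ioo (0:ℝ) 1)),
      Tendsto
        (fun N : ℕ =>
          (∑ i ∈ Finset.Icc 1 N,
            if ((pq i x * pq (i + 1) x : ℕ) : ℝ) ≤ (N : ℝ) * Real.log N ^ (3 / 2 + ε) then
              ((pq i x * pq (i + 1) x : ℕ) : ℝ) else 0) /
            ((N : ℝ) * Real.log N ^ 2))
        atTop (nhds (1 / (2 * Real.log 2))) := by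
  obtain ⟨hε0, hε1⟩ := hε
  set s := 3 / 2 + ε with hs
  have hs1 : 1 ≤ s := by linarith
  have hs2 : s ≤ 2 := by linarith
  -- `3 - s > 1` leaves room for `α < 1` with `∑ k^(-α (3 - s)) < ∞`
  obtain ⟨α, hα, hα1⟩ := exists_between (show 1 / (3 - s) < 1 by
    rw [div_lt_one (by linarith)]; linarith)
  have hα0 : 0 < α := lt_trans (by apply one_div_pos.2; linarith) hα
  rw [div_lt_iff₀ (by linarith)] at hα
  apply ae_of_ae_gauss
  filter_upwards [ae_tendsto_fluct_sparse hs1 hs2 hα0 hα] with x hx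
  simp only [sum_eq_truncSum]
  have hscale : ∀ᶠ N in atTop, 0 < scale N := by
    filter_upwards [tendsto_log_natCast.eventually_ge_atTop 1] with N hN
    have := pos_of_one_le_log hN
    unfold scale; positivity
  refine tendsto_of_sparse (A := scale) (truncSum_mono (by linarith) x) (truncSum_nonneg s · x)
    scale_mono hscale (tendsto_sparse hα0) ?_ (eventually_sparse_cover hα0) ?_
    (tendsto_scale_ratio hα0 hα1)
  · exact tendsto_nat_floor_atTop.comp
      ((tendsto_rpow_atTop (by positivity)).comp tendsto_log_natCast)
  · have h := hx.add ((tendsto_mean (by linarith) hs2).comp (tendsto_sparse hα0))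
    rw [zero_add] at h
    refine h.congr fun k => ?_
    simp only [fluct, Function.comp]
    ring
end

section
/- Let φ : ℕ → ℝ₊ be increasing with φ(n) → ∞, let ψ(n) = log φ(n), and set x_n = ψ(n) − ψ(n−1) for n ≥ 2. Suppose x_n is monotonically decreasing, lim_{n→∞} x_n = 0, and lim_{n→∞} (x_n − x_{n−1})/x_n^2 = 0. Then the Hausdorff dimension of E(φ) is at least 1/2. -/
/-!
Put `D k = φ (k + 1) - φ k`. If the partial quotients satisfy `a_{k+1}(x) ~ √(D k)` and
`D (k + 1) / D k → 1`, then `a_{k+1}(x) a_{k+2}(x) ~ D k`, and summing gives `S n x ~ φ n`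
(`asympDigits_subset_Ephi`). The regularity of `log φ` is exactly what makes `D` tend to infinity
with ratio of consecutive terms tending to `1` (`increments_of_regular`), while `x_n → 0` makes
`log φ n = o(n)`.

It remains to see that, for any `s → ∞` with `s k ≤ exp k` eventually, the irrationals with
`a_{k+1}(x) ~ s k` have dimension at least `1 / 2` (`half_le_dimH_asympDigits`). Given `r < 1 / 2`,
choose `θ ∈ (2 r, 1)` and let the `k`-th digit range over about `s k ^ θ` consecutive integers
starting just above `s k`. Sending `y ∈ [0, 1)`, expanded in the mixed radix `s k ^ θ`, to the
continued fraction with the corresponding digits gives an injection `X`. If `y` and `z` first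
differ at place `n`, then `|y - z| ≤ ∏_{i < n} (s i ^ θ)⁻¹` (`radix_dist`), whereas
`|X y - X z| ≥ c ∏_{i ≤ n} (C s i)⁻²` (`cf_separation`). Since `2 r < θ` and `s n` is at most
exponential, `X⁻¹` is Hölder of exponent `r` (`exists_prod_bound`), and it maps onto `[0, 1)`, which
has dimension `1`; so the image of `X` has dimension at least `r`.
-/

open MeasureTheory Filter Real Set

/-- The level set `E(φ)` of points whose sums `S_n` grow like `φ(n)`. -/
def Ephi (φ : ℕ → ℝ) : Set ℝ :=
  {x : ℝ | x ∈ Set.Ioo (0:ℝ) 1 ∧ Irrational x ∧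
    Tendsto (fun n : ℕ => (S n x : ℝ) / φ n) atTop (nhds 1)}

/-! ### Continued fractions with digits at least `2` -/

/-- The `n`-th convergent `1 / (a 0 + 1 / (a 1 + ⋯ + 1 / a (n - 1)))`. -/
noncomputable def cfApprox : ℕ → (ℕ → ℕ) → ℝ
  | 0, _ => 0
  | n + 1, a => 1 / (a 0 + cfApprox n (fun k => a (k + 1)))

/-- The number `[0; a 0, a 1, …]` (digits indexed from `0`), as the limit of its convergents. -/
noncomputable def cf (a : ℕ → ℕ) : ℝ := limUnder atTop (fun n => cfApprox n a)

lemma cfApprox_mem (n : ℕ) : ∀ a : ℕ → ℕ, (∀ k, 2 ≤ a k) →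
    0 ≤ cfApprox n a ∧ cfApprox n a ≤ 1 / 2 := by
  induction n with
  | zero => intro a _; norm_num [cfApprox]
  | succ n ih =>
    intro a ha
    obtain ⟨h0, h1⟩ := ih (fun k => a (k + 1)) (fun k => ha _)
    have h2 : (2 : ℝ) ≤ a 0 := by exact_mod_cast ha 0
    simp only [cfApprox]
    refine ⟨by positivity, ?_⟩
    apply one_div_le_one_div_of_le <;> linarith

/-- Each branch `t ↦ 1 / (a + t)` with `a ≥ 2` contracts by a factor `4`. -/
lemma cfApprox_dist (n : ℕ) : ∀ a : ℕ → ℕ, (∀ k, 2 ≤ a k) →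
    dist (cfApprox n a) (cfApprox (n + 1) a) ≤ 1 * (1 / 4 : ℝ) ^ n := by
  induction n with
  | zero =>
    intro a ha
    obtain ⟨h0, h1⟩ := cfApprox_mem 1 a ha
    have h2 : cfApprox 0 a = 0 := rfl
    rw [Real.dist_eq, h2, abs_le]
    constructor <;> norm_num at * <;> linarith
  | succ n ih =>
    intro a ha
    have h := ih (fun k => a (k + 1)) (fun k => ha _)
    obtain ⟨h0, h1⟩ := cfApprox_mem n (fun k => a (k + 1)) (fun k => ha _)
    obtain ⟨h0', h1'⟩ := cfApprox_mem (n + 1) (fun k => a (k + 1)) (fun k => ha _)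
    have h2 : (2 : ℝ) ≤ a 0 := by exact_mod_cast ha 0
    rw [cfApprox, cfApprox.eq_2 a (n + 1)]
    set u := cfApprox n (fun k => a (k + 1))
    set v := cfApprox (n + 1) (fun k => a (k + 1))
    rw [Real.dist_eq] at h ⊢
    have e : 1 / ((a 0 : ℝ) + u) - 1 / (a 0 + v) = -(u - v) / ((a 0 + u) * (a 0 + v)) := by
      have : (a 0 : ℝ) + u ≠ 0 := by positivity
      have : (a 0 : ℝ) + v ≠ 0 := by positivity
      field_simp
      ring
    rw [e, abs_div, abs_neg, abs_of_pos (a := ((a 0 : ℝ) + u) * (a 0 + v)) (by positivity),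
      div_le_iff₀ (by positivity)]
    have h4 : (4 : ℝ) ≤ (a 0 + u) * (a 0 + v) := by nlinarith
    have h5 : (0 : ℝ) < (1 / 4) ^ n := by positivity
    calc |u - v| ≤ (1 / 4) ^ n := by linarith
      _ = 1 * (1 / 4) ^ (n + 1) * 4 := by ring
      _ ≤ _ := by gcongr

lemma tendsto_cfApprox (a : ℕ → ℕ) (ha : ∀ k, 2 ≤ a k) :
    Tendsto (fun n => cfApprox n a) atTop (nhds (cf a)) :=
  (cauchySeq_of_le_geometric (1 / 4) 1 (by norm_num)
    (fun n => cfApprox_dist n a ha)).tendsto_limUnder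

lemma cf_mem (a : ℕ → ℕ) (ha : ∀ k, 2 ≤ a k) : 0 ≤ cf a ∧ cf a ≤ 1 / 2 :=
  ⟨ge_of_tendsto' (tendsto_cfApprox a ha) fun n => (cfApprox_mem n a ha).1,
    le_of_tendsto' (tendsto_cfApprox a ha) fun n => (cfApprox_mem n a ha).2⟩

lemma cf_eq (a : ℕ → ℕ) (ha : ∀ k, 2 ≤ a k) :
    cf a = 1 / (a 0 + cf (fun k => a (k + 1))) := by
  have h2 : (2 : ℝ) ≤ a 0 := by exact_mod_cast ha 0
  have h0 := (cf_mem (fun k => a (k + 1)) (fun k => ha _)).1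
  refine tendsto_nhds_unique ((tendsto_add_atTop_iff_nat 1).2 (tendsto_cfApprox a ha)) ?_
  have h := tendsto_cfApprox (fun k => a (k + 1)) (fun k => ha _)
  simp only [cfApprox]
  exact tendsto_const_nhds.div (tendsto_const_nhds.add h) (by positivity)

lemma cf_pos (a : ℕ → ℕ) (ha : ∀ k, 2 ≤ a k) : 0 < cf a := by
  have h2 : (2 : ℝ) ≤ a 0 := by exact_mod_cast ha 0
  have h0 := (cf_mem (fun k => a (k + 1)) (fun k => ha _)).1
  rw [cf_eq a ha]
  positivity

lemma gaussMap_cf (a : ℕ → ℕ) (ha : ∀ k, 2 ≤ a k) :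
    gaussMap (cf a) = cf (fun k => a (k + 1)) := by
  obtain ⟨h0, h1⟩ := cf_mem (fun k => a (k + 1)) (fun k => ha _)
  have e : 1 / cf a = a 0 + cf (fun k => a (k + 1)) := by rw [cf_eq a ha, one_div_one_div]
  rw [gaussMap, if_neg (cf_pos a ha).ne', e, add_comm, Int.floor_add_natCast,
    Int.floor_eq_zero_iff.2 ⟨h0, by linarith⟩]
  simp

lemma gaussMap_iterate_cf (n : ℕ) : ∀ a : ℕ → ℕ, (∀ k, 2 ≤ a k) →
    gaussMap^[n] (cf a) = cf (fun k => a (k + n)) := by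
  induction n with
  | zero => intro a _; simp
  | succ n ih =>
    intro a ha
    rw [Function.iterate_succ_apply, gaussMap_cf a ha, ih _ (fun k => ha _)]
    simp only [add_assoc]

lemma pq_cf (a : ℕ → ℕ) (ha : ∀ k, 2 ≤ a k) (n : ℕ) : pq (n + 1) (cf a) = a n := by
  obtain ⟨h0, h1⟩ := cf_mem (fun k => a (k + 1 + n)) (fun k => ha _)
  rw [pq, Nat.add_sub_cancel, gaussMap_iterate_cf n a ha, cf_eq _ (fun k => ha _),
    one_div_one_div, add_comm, Nat.floor_add_natCast h0, Nat.floor_eq_zero.2 (by linarith)]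
  simp

/-- Two continued fractions whose digits first differ at place `n` are separated by at
least a multiple of the inverse square of the product of the bounds on the digits up to that place. -/
lemma cf_separation (n : ℕ) : ∀ (a b : ℕ → ℕ) (B : ℕ → ℝ), (∀ k, 2 ≤ a k) → (∀ k, 2 ≤ b k) →
    (∀ k, (a k : ℝ) + 1 ≤ B k) → (∀ k, (b k : ℝ) + 1 ≤ B k) →
    (∀ k < n, a k = b k) → a n ≠ b n →
    1 / (2 * (∏ i ∈ Finset.range (n + 1), B i) ^ 2) ≤ |cf a - cf b| := by
  have key : ∀ (a b : ℕ → ℕ) (B c : ℝ), (∀ k, 2 ≤ a k) → (∀ k, 2 ≤ b k) →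
      (a 0 : ℝ) + 1 ≤ B → (b 0 : ℝ) + 1 ≤ B → 0 ≤ c →
      c ≤ |((a 0 : ℝ) + cf (fun k => a (k + 1))) - (b 0 + cf (fun k => b (k + 1)))| →
      c / B ^ 2 ≤ |cf a - cf b| := by
    intro a b B c ha hb hA hB hc0 hc
    obtain ⟨h0, h1⟩ := cf_mem (fun k => a (k + 1)) (fun k => ha _)
    obtain ⟨h0', h1'⟩ := cf_mem (fun k => b (k + 1)) (fun k => hb _)
    have h2 : (2 : ℝ) ≤ a 0 := by exact_mod_cast ha 0
    have h2' : (2 : ℝ) ≤ b 0 := by exact_mod_cast hb 0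
    rw [cf_eq a ha, cf_eq b hb]
    set u := (a 0 : ℝ) + cf (fun k => a (k + 1))
    set v := (b 0 : ℝ) + cf (fun k => b (k + 1))
    have hu : 0 < u := by positivity
    have hv : 0 < v := by positivity
    have e : 1 / u - 1 / v = -(u - v) / (u * v) := by field_simp; ring
    rw [e, abs_div, abs_neg, abs_of_pos (a := u * v) (by positivity)]
    have huB : u ≤ B := by simp only [u]; linarith
    have hvB : v ≤ B := by simp only [v]; linarith
    have : u * v ≤ B ^ 2 := by rw [sq]; gcongr; linarith
    gcongr
  induction n with
  | zero =>
    intro a b B ha hb hA hB _ hne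
    obtain ⟨h0, h1⟩ := cf_mem (fun k => a (k + 1)) (fun k => ha _)
    obtain ⟨h0', h1'⟩ := cf_mem (fun k => b (k + 1)) (fun k => hb _)
    have := key a b (B 0) (1 / 2) ha hb (hA 0) (hB 0) (by norm_num) (by
      rcases Nat.lt_or_gt_of_ne hne with h | h
      · have h : (a 0 : ℝ) + 1 ≤ b 0 := by exact_mod_cast h
        rw [le_abs]; right; linarith
      · have h : (b 0 : ℝ) + 1 ≤ a 0 := by exact_mod_cast h
        rw [le_abs]; left; linarith)
    simpa [← one_div, div_div] using this
  | succ n ih =>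
    intro a b B ha hb hA hB heq hne
    have h := ih (fun k => a (k + 1)) (fun k => b (k + 1)) (fun k => B (k + 1)) (fun k => ha _)
      (fun k => hb _) (fun k => hA _) (fun k => hB _) (fun k hk => heq _ (by omega)) hne
    have := key a b (B 0) (1 / (2 * (∏ i ∈ Finset.range (n + 1), B (i + 1)) ^ 2)) ha hb (hA 0) (hB 0)
      (by positivity) (by
      rw [heq 0 (by omega), add_sub_add_left_eq_sub]
      exact h)
    rw [Finset.prod_range_succ']
    convert this using 1
    rw [div_div]
    ring

lemma cf_irrational (a : ℕ → ℕ) (ha : ∀ k, 2 ≤ a k) : Irrational (cf a) := by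
  -- The Gauss map sends `p / q` to a fraction with the smaller denominator `p`.
  have key : ∀ q : ℕ, ∀ (p : ℕ) (a : ℕ → ℕ), (∀ k, 2 ≤ a k) → cf a ≠ p / q := by
    intro q
    induction q using Nat.strong_induction_on with
    | _ q ih =>
      intro p a ha h
      have hpos := cf_pos a ha
      have hlt : cf a < 1 := lt_of_le_of_lt (cf_mem a ha).2 (by norm_num)
      have hq : (0 : ℝ) < q := by
        rcases Nat.eq_zero_or_pos q with h0 | h0
        · rw [h, h0] at hpos; simp at hpos
        · exact_mod_cast h0
      have hp : (0 : ℝ) < p := by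
        rw [h] at hpos
        exact (div_pos_iff_of_pos_right hq).1 hpos
      have hpq : p < q := by
        rw [h, div_lt_one hq] at hlt
        exact_mod_cast hlt
      have e := cf_eq a ha
      have h0 := (cf_mem (fun k => a (k + 1)) (fun k => ha _)).1
      have h2 : (2 : ℝ) ≤ a 0 := by exact_mod_cast ha 0
      have e2 : cf (fun k => a (k + 1)) = ((q : ℝ) - a 0 * p) / p := by
        have : (a 0 : ℝ) + cf (fun k => a (k + 1)) = q / p := by
          rw [← one_div_one_div ((a 0 : ℝ) + _), ← e, h, one_div_div]
        rw [sub_div, ← this]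
        field_simp
        ring
      have hle : a 0 * p ≤ q := by
        have : (0 : ℝ) ≤ (q : ℝ) - a 0 * p := by
          rw [e2] at h0
          by_contra! hneg
          exact absurd h0 (not_le.2 (div_neg_of_neg_of_pos hneg hp))
        have : (a 0 : ℝ) * p ≤ q := by linarith
        exact_mod_cast this
      refine ih p hpq (q - a 0 * p) _ (fun k => ha _) (e2.trans ?_)
      push_cast [Nat.cast_sub hle]
      ring
  rintro ⟨r, hr⟩
  have hr0 : 0 ≤ r := by
    have := (cf_mem a ha).1
    rw [← hr] at this
    exact_mod_cast this
  refine key r.den r.num.toNat a ha ?_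
  rw [← hr]
  have : ((r.num.toNat : ℤ) : ℝ) = (r.num : ℝ) := by
    rw [Int.toNat_of_nonneg (Rat.num_nonneg.2 hr0)]
  rw [← Int.cast_natCast (R := ℝ) r.num.toNat, this]
  exact Rat.cast_def r

/-! ### Mixed radix expansions -/

/-- The remainder of `y ∈ [0, 1)` after `n` digits of its expansion in the mixed radix `N`. -/
noncomputable def radixRem (N : ℕ → ℕ) : ℕ → ℝ → ℝ
  | 0, y => y
  | n + 1, y => Int.fract (N n * radixRem N n y)

/-- The `n`-th digit of `y ∈ [0, 1)` in the mixed radix `N`. -/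
noncomputable def radixDigit (N : ℕ → ℕ) (n : ℕ) (y : ℝ) : ℕ := ⌊N n * radixRem N n y⌋₊

lemma radixRem_mem (N : ℕ → ℕ) {y : ℝ} (hy : y ∈ Ico (0 : ℝ) 1) (n : ℕ) :
    radixRem N n y ∈ Ico (0 : ℝ) 1 := by
  cases n with
  | zero => exact hy
  | succ n => exact ⟨Int.fract_nonneg _, Int.fract_lt_one _⟩

lemma radixDigit_lt (N : ℕ → ℕ) (hN : ∀ n, 2 ≤ N n) {y : ℝ} (hy : y ∈ Ico (0 : ℝ) 1) (n : ℕ) :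
    radixDigit N n y < N n := by
  obtain ⟨h0, h1⟩ := radixRem_mem N hy n
  have : (2 : ℝ) ≤ N n := by exact_mod_cast hN n
  rw [radixDigit, Nat.floor_lt (by positivity)]
  nlinarith

lemma radix_sub (N : ℕ → ℕ) {y z : ℝ} (hy : y ∈ Ico (0 : ℝ) 1)
    (hz : z ∈ Ico (0 : ℝ) 1) (n : ℕ) (h : ∀ k < n, radixDigit N k y = radixDigit N k z) :
    (∏ i ∈ Finset.range n, (N i : ℝ)) * (y - z) = radixRem N n y - radixRem N n z := by
  induction n with
  | zero => simp [radixRem]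
  | succ n ih =>
    have h1 := ih fun k hk => h k (by omega)
    have h2 := h n (by omega)
    have hy0 : 0 ≤ N n * radixRem N n y := mul_nonneg (by positivity) (radixRem_mem N hy n).1
    have hz0 : 0 ≤ N n * radixRem N n z := mul_nonneg (by positivity) (radixRem_mem N hz n).1
    have h3 : (⌊N n * radixRem N n y⌋ : ℝ) = ⌊N n * radixRem N n z⌋ := by
      rw [← natCast_floor_eq_intCast_floor hy0, ← natCast_floor_eq_intCast_floor hz0]
      exact_mod_cast h2
    simp only [radixRem, Int.fract, h3]
    rw [Finset.prod_range_succ, mul_right_comm, h1]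
    ring

lemma radix_dist (N : ℕ → ℕ) (hN : ∀ n, 2 ≤ N n) {y z : ℝ} (hy : y ∈ Ico (0 : ℝ) 1)
    (hz : z ∈ Ico (0 : ℝ) 1) (n : ℕ) (h : ∀ k < n, radixDigit N k y = radixDigit N k z) :
    |y - z| ≤ 1 / ∏ i ∈ Finset.range n, (N i : ℝ) := by
  have hp : 0 < ∏ i ∈ Finset.range n, (N i : ℝ) :=
    Finset.prod_pos fun i _ => by exact_mod_cast (by have := hN i; omega : 0 < N i)
  obtain ⟨h0, h1⟩ := radixRem_mem N hy n
  obtain ⟨h0', h1'⟩ := radixRem_mem N hz n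
  rw [le_div_iff₀ hp, mul_comm, ← abs_of_pos hp, ← abs_mul, radix_sub N hy hz n h,
    abs_le]
  constructor <;> linarith

/-- Distinct points of `[0, 1)` have distinct mixed radix expansions. -/
lemma exists_radixDigit_ne (N : ℕ → ℕ) (hN : ∀ n, 2 ≤ N n) {y z : ℝ} (hy : y ∈ Ico (0 : ℝ) 1)
    (hz : z ∈ Ico (0 : ℝ) 1) (hne : y ≠ z) : ∃ n, radixDigit N n y ≠ radixDigit N n z := by
  by_contra! hcon
  have h0 : 0 < |y - z| := abs_pos.2 (sub_ne_zero.2 hne)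
  obtain ⟨n, hn⟩ := exists_pow_lt_of_lt_one h0 (by norm_num : (1 / 2 : ℝ) < 1)
  have h1 := radix_dist N hN hy hz n fun k _ => hcon k
  have h2 : (2 : ℝ) ^ n ≤ ∏ i ∈ Finset.range n, (N i : ℝ) := by
    calc (2 : ℝ) ^ n = ∏ i ∈ Finset.range n, (2 : ℝ) := by simp
      _ ≤ _ := Finset.prod_le_prod (fun _ _ => by norm_num) fun i _ => by exact_mod_cast hN i
  have h3 : 1 / ∏ i ∈ Finset.range n, (N i : ℝ) ≤ 1 / 2 ^ n := by gcongr
  rw [one_div_pow] at hn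
  linarith

/-! ### Dimension of the set of points with prescribed digit growth -/

/-- The set of irrationals in `(0, 1)` whose `(k + 1)`-st partial quotient is asymptotic
to `s k`. -/
def AsympDigits (s : ℕ → ℝ) : Set ℝ :=
  {x | x ∈ Ioo (0 : ℝ) 1 ∧ Irrational x ∧
    Tendsto (fun k => (pq (k + 1) x : ℝ) / s k) atTop (nhds 1)}

/-- The number of digits allowed at place `k`, about `s k ^ θ`. For `θ < 1` it is negligible
compared with `s k`, so that all allowed digits are asymptotic to `s k`. -/
noncomputable def width (θ : ℝ) (s : ℕ → ℝ) (k : ℕ) : ℕ := ⌊(s k) ^ θ⌋₊ + 2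

/-- Continued fraction digits encoding `y ∈ [0, 1)`: at place `k`, the `k`-th digit of `y` in the
mixed radix `width θ s`, shifted to lie just above `s k`. The summand `2` keeps all digits at
least `2`. -/
noncomputable def encodeDigit (θ : ℝ) (s : ℕ → ℝ) (y : ℝ) (k : ℕ) : ℕ :=
  ⌊s k⌋₊ + 2 + radixDigit (width θ s) k y

/-- A bound for the digits allowed at place `k`. -/
noncomputable def digitBound (θ : ℝ) (s : ℕ → ℝ) (k : ℕ) : ℝ :=
  ⌊s k⌋₊ + 2 + width θ s k

lemma two_le_width (θ : ℝ) (s : ℕ → ℝ) (k : ℕ) : 2 ≤ width θ s k := by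
  unfold width; omega

lemma two_le_encodeDigit (θ : ℝ) (s : ℕ → ℝ) (y : ℝ) (k : ℕ) : 2 ≤ encodeDigit θ s y k := by
  unfold encodeDigit; omega

lemma encodeDigit_le (θ : ℝ) (s : ℕ → ℝ) {y : ℝ} (hy : y ∈ Ico (0 : ℝ) 1) (k : ℕ) :
    (encodeDigit θ s y k : ℝ) + 1 ≤ digitBound θ s k := by
  have := radixDigit_lt (width θ s) (two_le_width θ s) hy k
  have : (radixDigit (width θ s) k y : ℝ) + 1 ≤ width θ s k := by exact_mod_cast this
  unfold encodeDigit digitBound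
  push_cast
  linarith

lemma encodeDigit_asymp {θ : ℝ} (hθ1 : θ < 1) {s : ℕ → ℝ}
    (hs : Tendsto s atTop atTop) {y : ℝ} (hy : y ∈ Ico (0 : ℝ) 1) :
    Tendsto (fun k => (encodeDigit θ s y k : ℝ) / s k) atTop (nhds 1) := by
  have h1 : Tendsto (fun k => (s k) ^ (-(1 - θ))) atTop (nhds 0) :=
    (tendsto_rpow_neg_atTop (by linarith)).comp hs
  have h2 : Tendsto (fun k => (s k)⁻¹) atTop (nhds 0) := hs.inv_tendsto_atTop
  have hup : Tendsto (fun k => 1 + (s k) ^ (-(1 - θ)) + 4 * (s k)⁻¹) atTop (nhds 1) := by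
    simpa using (h1.const_add 1).add (h2.const_mul 4)
  refine tendsto_of_tendsto_of_tendsto_of_le_of_le' tendsto_const_nhds hup ?_ ?_
  · filter_upwards [hs.eventually_gt_atTop 0] with k hk
    rw [le_div_iff₀ hk]
    unfold encodeDigit
    push_cast
    have := (Nat.lt_floor_add_one (s k)).le
    have : (0 : ℝ) ≤ radixDigit (width θ s) k y := by positivity
    linarith
  · filter_upwards [hs.eventually_gt_atTop 0] with k hk
    rw [div_le_iff₀ hk]
    have e : (s k) ^ (-(1 - θ)) * s k = (s k) ^ θ := by
      rw [← rpow_add_one hk.ne']; congr 1; ring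
    have e2 : (1 + (s k) ^ (-(1 - θ)) + 4 * (s k)⁻¹) * s k = s k + (s k) ^ θ + 4 := by
      rw [← e]; field_simp
    rw [e2]
    have h := encodeDigit_le θ s hy k
    have h3 := Nat.floor_le hk.le
    have h4 := Nat.floor_le (rpow_nonneg hk.le θ)
    unfold digitBound width at h
    push_cast at h
    linarith

lemma cf_encode_mem {θ : ℝ} (hθ1 : θ < 1) {s : ℕ → ℝ}
    (hs : Tendsto s atTop atTop) {y : ℝ} (hy : y ∈ Ico (0 : ℝ) 1) :
    cf (encodeDigit θ s y) ∈ AsympDigits s := by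
  have h2 := two_le_encodeDigit θ s y
  refine ⟨⟨cf_pos _ h2, lt_of_le_of_lt (cf_mem _ h2).2 (by norm_num)⟩, cf_irrational _ h2, ?_⟩
  simp only [pq_cf _ h2]
  exact encodeDigit_asymp hθ1 hs hy

/-- The number of admissible words of length `n` beats the power `2 * r` of the product of the
digit bounds up to place `n`: the surplus gained at each place below `n` tends to infinity, and
`s n ≤ exp n` bounds the loss at the last place. -/
lemma exists_prod_bound {r θ : ℝ} (hr : 0 < r) (hrθ : 2 * r < θ) (hθ1 : θ < 1) {s : ℕ → ℝ}
    (hs : Tendsto s atTop atTop) (hexp : ∀ᶠ k in atTop, s k ≤ Real.exp k) :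
    ∃ C : ℝ, 0 < C ∧ ∀ n, (∏ i ∈ Finset.range (n + 1), digitBound θ s i) ^ (2 * r) ≤
      C * ∏ i ∈ Finset.range n, (width θ s i : ℝ) := by
  have hD : ∀ i, 1 ≤ digitBound θ s i := by
    intro i
    have : (0 : ℝ) ≤ ⌊s i⌋₊ := by positivity
    have : (0 : ℝ) ≤ width θ s i := by positivity
    unfold digitBound; linarith
  have hW : ∀ i, (0 : ℝ) < width θ s i := fun i => by
    have := two_le_width θ s i
    exact_mod_cast (by omega : 0 < width θ s i)
  -- `u i` is the surplus at place `i`, on the logarithmic scale.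
  set u : ℕ → ℝ := fun i => Real.log (width θ s i) - 2 * r * Real.log (digitBound θ s i) with hu
  have hDle : ∀ᶠ k in atTop, digitBound θ s k ≤ 6 * s k := by
    filter_upwards [hs.eventually_ge_atTop 1] with k hk
    have h3 := Nat.floor_le (show 0 ≤ s k by linarith)
    have h4 := Nat.floor_le (rpow_nonneg (show 0 ≤ s k by linarith) θ)
    have h5 : (s k) ^ θ ≤ s k := by
      simpa using rpow_le_rpow_of_exponent_le hk hθ1.le
    unfold digitBound width
    push_cast
    linarith
  have hulim : ∀ᶠ k in atTop, 2 * r ≤ u k := by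
    have hl : Tendsto (fun k => (θ - 2 * r) * Real.log (s k) - 2 * r * Real.log 6) atTop atTop := by
      refine tendsto_atTop_add_const_right _ _ ?_
      exact (Real.tendsto_log_atTop.comp hs).const_mul_atTop (by linarith)
    filter_upwards [hl.eventually_ge_atTop (2 * r), hDle, hs.eventually_ge_atTop 1] with k h1 h2 h3
    refine h1.trans ?_
    have hs0 : 0 < s k := by linarith
    have h4 : Real.log (digitBound θ s k) ≤ Real.log 6 + Real.log (s k) := by
      rw [← Real.log_mul (by norm_num) hs0.ne']
      exact Real.log_le_log (by linarith [hD k]) h2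
    have h5 : θ * Real.log (s k) ≤ Real.log (width θ s k) := by
      rw [← Real.log_rpow hs0]
      refine Real.log_le_log (by positivity) ?_
      unfold width
      push_cast
      linarith [Nat.lt_floor_add_one ((s k) ^ θ)]
    simp only [hu]
    have h6 := mul_le_mul_of_nonneg_left h4 (by linarith : 0 ≤ 2 * r)
    linarith
  have hlogD : ∀ᶠ k : ℕ in atTop, Real.log (digitBound θ s k) ≤ k + Real.log 6 := by
    filter_upwards [hDle, hexp] with k h1 h2
    rw [add_comm, ← Real.log_exp k, ← Real.log_mul (by norm_num) (Real.exp_ne_zero _)]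
    exact Real.log_le_log (by linarith [hD k]) (by linarith)
  -- The logarithm of the ratio to be bounded.
  set v : ℕ → ℝ := fun n =>
    2 * r * Real.log (digitBound θ s n) - ∑ i ∈ Finset.range n, u i with hv
  have hbdd : ∃ C, ∀ n, v n ≤ C := by
    obtain ⟨K, hK⟩ := eventually_atTop.1 (hulim.and hlogD)
    have hbig : ∀ n, K ≤ n → v n ≤ 2 * r * (K + Real.log 6) - ∑ i ∈ Finset.range K, u i := by
      intro n hn
      have h1 : 2 * r * ((n : ℝ) - K) ≤ ∑ i ∈ Finset.Ico K n, u i := by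
        calc 2 * r * ((n : ℝ) - K) = ∑ i ∈ Finset.Ico K n, 2 * r := by
              simp [Nat.cast_sub hn]; ring
          _ ≤ _ := Finset.sum_le_sum fun i hi => (hK i (Finset.mem_Ico.1 hi).1).1
      have h2 := Finset.sum_range_add_sum_Ico u hn
      have h3 := mul_le_mul_of_nonneg_left (hK n hn).2 (by linarith : 0 ≤ 2 * r)
      simp only [hv]
      linarith
    obtain ⟨C, hC⟩ := ((Set.finite_Iio K).image v).bddAbove
    refine ⟨max C (2 * r * (K + Real.log 6) - ∑ i ∈ Finset.range K, u i), fun n => ?_⟩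
    rcases lt_or_ge n K with h | h
    · exact le_max_of_le_left (hC ⟨n, h, rfl⟩)
    · exact le_max_of_le_right (hbig n h)
  obtain ⟨C, hC⟩ := hbdd
  refine ⟨Real.exp C, Real.exp_pos _, fun n => ?_⟩
  have hPD : 0 < ∏ i ∈ Finset.range (n + 1), digitBound θ s i :=
    Finset.prod_pos fun i _ => by linarith [hD i]
  have hPW : 0 < ∏ i ∈ Finset.range n, (width θ s i : ℝ) := Finset.prod_pos fun i _ => hW i
  rw [← Real.log_le_log_iff (by positivity) (by positivity), Real.log_rpow hPD,
    Real.log_mul (Real.exp_ne_zero _) hPW.ne', Real.log_exp,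
    Real.log_prod (fun i _ => by linarith [hD i]), Real.log_prod (fun i _ => (hW i).ne'),
    Finset.sum_range_succ]
  have := hC n
  simp only [hv, hu, Finset.sum_sub_distrib, ← Finset.mul_sum] at this
  linarith

/-- If `s` tends to infinity at most exponentially, then the irrationals whose partial quotients
are asymptotic to `s` form a set of Hausdorff dimension at least `1 / 2`. -/
theorem half_le_dimH_asympDigits {s : ℕ → ℝ}
    (hs : Tendsto s atTop atTop) (hexp : ∀ᶠ k in atTop, s k ≤ Real.exp k) :
    1 / 2 ≤ dimH (AsympDigits s) := by
  refine le_of_forall_lt fun r' hr' => ?_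
  obtain ⟨r, hrr', hr2⟩ := ENNReal.lt_iff_exists_nnreal_btwn.1 hr'
  refine lt_of_lt_of_le hrr' ?_
  have hr0 : 0 < r := by
    rw [← ENNReal.coe_pos]; exact lt_of_le_of_lt zero_le hrr'
  have hr0' : (0 : ℝ) < r := hr0
  have hr1 : (r : ℝ) < 1 / 2 := by
    have := (ENNReal.toReal_lt_toReal ENNReal.coe_ne_top (by simp)).2 hr2
    simpa using this
  obtain ⟨θ, hrθ, hθ1⟩ := exists_between (show 2 * (r : ℝ) < 1 by linarith)
  obtain ⟨C, hC0, hC⟩ := exists_prod_bound hr0' hrθ hθ1 hs hexp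
  set X : ℝ → ℝ := fun y => cf (encodeDigit θ s y) with hX
  have hmem : X '' Ico 0 1 ⊆ AsympDigits s := by
    rintro _ ⟨y, hy, rfl⟩
    exact cf_encode_mem hθ1 hs hy
  -- The inverse of `X` is Hölder continuous of exponent `r`.
  have hH : ∀ y ∈ Ico (0 : ℝ) 1, ∀ z ∈ Ico (0 : ℝ) 1,
      |y - z| ≤ (C * 2 ^ (r : ℝ)) * |X y - X z| ^ (r : ℝ) := by
    intro y hy z hz
    rcases eq_or_ne y z with rfl | hne
    · simp only [sub_self, abs_zero]; positivity
    classical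
    have hex := exists_radixDigit_ne (width θ s) (two_le_width θ s) hy hz hne
    set n := Nat.find hex with hn
    have hlt : ∀ k < n, radixDigit (width θ s) k y = radixDigit (width θ s) k z :=
      fun k hk => not_not.1 (Nat.find_min hex hk)
    have h1 := radix_dist (width θ s) (two_le_width θ s) hy hz n hlt
    have h2 := cf_separation n (encodeDigit θ s y) (encodeDigit θ s z) (digitBound θ s)
      (two_le_encodeDigit θ s y) (two_le_encodeDigit θ s z) (encodeDigit_le θ s hy)
      (encodeDigit_le θ s hz) (fun k hk => by simp [encodeDigit, hlt k hk])
      (fun h => Nat.find_spec hex (by simpa [encodeDigit] using h))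
    have hPW : 0 < ∏ i ∈ Finset.range n, (width θ s i : ℝ) := Finset.prod_pos fun i _ => by
      have := two_le_width θ s i
      exact_mod_cast (by omega : 0 < width θ s i)
    have hPD : 0 < ∏ i ∈ Finset.range (n + 1), digitBound θ s i := Finset.prod_pos fun i _ => by
      unfold digitBound; positivity
    have h3 := hC n
    set P := ∏ i ∈ Finset.range (n + 1), digitBound θ s i
    set W := ∏ i ∈ Finset.range n, (width θ s i : ℝ)
    have h4 : (1 / (2 * P ^ 2)) ^ (r : ℝ) ≤ |X y - X z| ^ (r : ℝ) :=
      rpow_le_rpow (by positivity) h2 hr0'.le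
    have e : (2 : ℝ) ^ (r : ℝ) * (1 / (2 * P ^ 2)) ^ (r : ℝ) = 1 / P ^ (2 * (r : ℝ)) := by
      rw [← mul_rpow (by norm_num) (by positivity), rpow_mul hPD.le, rpow_two,
        show 2 * (1 / (2 * P ^ 2)) = (P ^ 2)⁻¹ by field_simp, inv_rpow (by positivity), one_div]
    calc |y - z| ≤ 1 / W := h1
      _ = C * (1 / (C * W)) := by field_simp
      _ ≤ C * (1 / P ^ (2 * (r : ℝ))) := by gcongr
      _ = (C * 2 ^ (r : ℝ)) * (1 / (2 * P ^ 2)) ^ (r : ℝ) := by rw [← e]; ring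
      _ ≤ _ := by gcongr
  have hinj : InjOn X (Ico 0 1) := by
    intro y hy z hz h
    have := hH y hy z hz
    rw [h, sub_self, abs_zero, zero_rpow hr0'.ne', mul_zero] at this
    exact sub_eq_zero.1 (abs_eq_zero.1 (le_antisymm this (abs_nonneg _)))
  set f := Function.invFunOn X (Ico 0 1) with hf
  have hfX : ∀ y ∈ Ico (0 : ℝ) 1, f (X y) = y := fun y hy => hinj.leftInvOn_invFunOn hy
  have himg : f '' (X '' Ico 0 1) = Ico 0 1 := hinj.leftInvOn_invFunOn.image_image
  have hHolder : HolderOnWith (C * 2 ^ (r : ℝ)).toNNReal r f (X '' Ico 0 1) := by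
    rintro _ ⟨y, hy, rfl⟩ _ ⟨z, hz, rfl⟩
    rw [hfX y hy, hfX z hz, edist_dist, edist_dist,
      ENNReal.ofReal_rpow_of_nonneg dist_nonneg hr0'.le]
    change _ ≤ ENNReal.ofReal (C * 2 ^ (r : ℝ)) * _
    rw [← ENNReal.ofReal_mul (by positivity)]
    exact ENNReal.ofReal_le_ofReal (hH y hy z hz)
  have h1 := hHolder.dimH_image_le hr0
  have h2 : dimH (Ico (0 : ℝ) 1) = 1 := by
    rw [Real.dimH_of_nonempty_interior (by simp)]
    simp
  rw [himg, h2, ENNReal.le_div_iff_mul_le (by left; simpa using hr0.ne') (by simp), one_mul] at h1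
  exact h1.trans (dimH_mono hmem)

/-! ### Increments of `φ` -/

/-- If the partial quotients of `x` are asymptotic to the square roots of the increments of `φ`,
then `S n x` is asymptotic to `φ n`. -/
lemma asympDigits_subset_Ephi {φ : ℕ → ℝ} (htop : Tendsto φ atTop atTop)
    (hD : Tendsto (fun k => φ (k + 1) - φ k) atTop atTop)
    (hratio : Tendsto (fun k => (φ (k + 2) - φ (k + 1)) / (φ (k + 1) - φ k)) atTop (nhds 1))
    (hmono : Monotone φ) :
    AsympDigits (fun k => √(φ (k + 1) - φ k)) ⊆ Ephi φ := by
  rintro x ⟨h01, hirr, hx⟩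
  refine ⟨h01, hirr, ?_⟩
  set D : ℕ → ℝ := fun k => φ (k + 1) - φ k with hDdef
  have hprod : Tendsto (fun k => ((pq (k + 1) x * pq (k + 2) x : ℕ) : ℝ) / D k) atTop (nhds 1) := by
    have h1 := hx.comp (tendsto_add_atTop_nat 1)
    have h2 := (hx.mul h1).mul hratio.sqrt
    simp only [mul_one, Real.sqrt_one] at h2
    refine h2.congr' ?_
    have hev := hD.eventually_gt_atTop 0
    filter_upwards [hev, (tendsto_add_atTop_nat 1).eventually hev] with k h3 h4
    simp only [Function.comp_apply]
    change 0 < φ (k + 1 + 1) - φ (k + 1) at h4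
    rw [Real.sqrt_div h4.le]
    have h5 : √(φ (k + 1) - φ k) ≠ 0 := (Real.sqrt_pos.2 h3).ne'
    have h6 : √(φ (k + 1 + 1) - φ (k + 1)) ≠ 0 := (Real.sqrt_pos.2 h4).ne'
    have h7 : D k = √(φ (k + 1) - φ k) * √(φ (k + 1) - φ k) := (Real.mul_self_sqrt h3.le).symm
    rw [h7]
    push_cast
    field_simp
  have hS : ∀ n, (S n x : ℝ) = ∑ k ∈ Finset.range n, ((pq (k + 1) x * pq (k + 2) x : ℕ) : ℝ) := by
    intro n
    rw [S, Finset.range_eq_Ico, Finset.sum_Ico_add' (fun i => ((pq i x * pq (i + 1) x : ℕ) : ℝ)) 0 n 1]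
    push_cast
    rfl
  have hsumD : ∀ n, ∑ k ∈ Finset.range n, D k = φ n - φ 0 := fun n => Finset.sum_range_sub φ n
  have hsumtop : Tendsto (fun n => ∑ k ∈ Finset.range n, D k) atTop atTop := by
    simp only [hsumD]
    exact tendsto_atTop_add_const_right _ _ htop
  -- Summing the equivalence of the increments.
  have hlittle : (fun k => ((pq (k + 1) x * pq (k + 2) x : ℕ) : ℝ) - D k) =o[atTop] D := by
    rw [Asymptotics.isLittleO_iff_tendsto']
    · have := hprod.sub_const 1
      rw [sub_self] at this
      refine this.congr' ?_
      filter_upwards [hD.eventually_gt_atTop 0] with k hk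
      rw [sub_div, div_self (show D k ≠ 0 from hk.ne')]
    · filter_upwards [hD.eventually_gt_atTop 0] with k hk h0
      exact absurd h0 hk.ne'
  have hsum := (hlittle.sum_range (fun k => sub_nonneg.2 (hmono (Nat.le_succ k))) hsumtop)
  have hφne : ∀ᶠ n in atTop, 0 < φ n := htop.eventually_gt_atTop 0
  have hc : Tendsto (fun n => φ 0 / φ n) atTop (nhds 0) := htop.const_div_atTop _
  have h3 := (hsum.tendsto_div_nhds_zero.add_const 1).mul (hc.const_sub 1)
  simp only [zero_add, sub_zero, mul_one] at h3
  refine h3.congr' ?_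
  filter_upwards [hφne, htop.eventually_gt_atTop (φ 0)] with n h4 h5
  rw [Finset.sum_sub_distrib, ← hS, hsumD]
  have : φ n - φ 0 ≠ 0 := (sub_pos.2 h5).ne'
  field_simp
  ring

/-- By Cesàro, a sequence with increments tending to `0` is `o(n)`; in particular it is eventually
at most `n`. -/
lemma eventually_le_of_increments {ψ : ℕ → ℝ}
    (hx0 : Tendsto (fun k => ψ (k + 1) - ψ k) atTop (nhds 0)) :
    ∀ᶠ n : ℕ in atTop, ψ n ≤ n := by
  have h := hx0.cesaro
  simp only [Finset.sum_range_sub] at h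
  obtain ⟨N, hN⟩ := exists_nat_ge (2 * ψ 0)
  filter_upwards [h.eventually_le_const (show (0 : ℝ) < 1 / 2 by norm_num),
    eventually_ge_atTop (max N 1)] with n h1 h2
  have h3 : (0 : ℝ) < n := by exact_mod_cast (le_max_right N 1).trans h2
  have h4 : (N : ℝ) ≤ n := by exact_mod_cast (le_max_left N 1).trans h2
  rw [inv_mul_le_iff₀ h3] at h1
  linarith

/-- The regularity of `ψ = log φ` passes to the increments of `φ`: with `x k = ψ (k + 1) - ψ k`,
consecutive `x k` have ratio tending to `1`, hence so do the increments
`φ (k + 1) - φ k = φ k * (exp (x k) - 1)`; and `φ k * x k` dominates a positive multiple of `√(φ k)`,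
so these increments tend to infinity. -/
lemma increments_of_regular {φ x : ℕ → ℝ} (hpos : ∀ n, 0 < φ n) (htop : Tendsto φ atTop atTop)
    (hφ : ∀ k, φ (k + 1) = φ k * Real.exp (x k)) (hx : ∀ᶠ k in atTop, 0 < x k)
    (hdec : ∀ᶠ k in atTop, x (k + 1) ≤ x k) (hx0 : Tendsto x atTop (nhds 0))
    (hx2 : Tendsto (fun k => (x (k + 1) - x k) / x (k + 1) ^ 2) atTop (nhds 0)) :
    Tendsto (fun k => φ (k + 1) - φ k) atTop atTop ∧
    Tendsto (fun k => (φ (k + 2) - φ (k + 1)) / (φ (k + 1) - φ k)) atTop (nhds 1) := by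
  have hshift := tendsto_add_atTop_nat 1
  have hx1 : ∀ᶠ k in atTop, 0 < x (k + 1) := hshift.eventually hx
  have hD : ∀ k, φ (k + 1) - φ k = φ k * (Real.exp (x k) - 1) := fun k => by rw [hφ]; ring
  constructor
  · -- The increments of `log (φ k * x k)` are eventually at least half those of `log φ k`.
    set w : ℕ → ℝ := fun k => Real.log (φ k) / 2 + Real.log (x k) with hw
    obtain ⟨K, hK⟩ := eventually_atTop.1 (hx.and (hx1.and (hdec.and
      ((hx2.eventually_const_le (show (-1 / 2 : ℝ) < 0 by norm_num))))))
    have hwmono : ∀ k, K ≤ k → w k ≤ w (k + 1) := by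
      intro k hk
      obtain ⟨h1, h2, h3, h4⟩ := hK k hk
      have h5 := Real.log_le_sub_one_of_pos (div_pos h1 h2)
      rw [Real.log_div h1.ne' h2.ne'] at h5
      have h6 : x k / x (k + 1) - 1 ≤ x (k + 1) / 2 := by
        rw [le_div_iff₀ (by positivity)] at h4
        rw [sub_le_iff_le_add, div_le_iff₀ h2]
        nlinarith
      simp only [hw]
      rw [hφ, Real.log_mul (hpos k).ne' (Real.exp_ne_zero _), Real.log_exp]
      linarith
    have hwK : ∀ k, K ≤ k → w K ≤ w k := by
      intro k hk
      induction k, hk using Nat.le_induction with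
      | base => exact le_rfl
      | succ k hk ih => exact ih.trans (hwmono k hk)
    have hlim : Tendsto (fun k => Real.exp (Real.log (φ k) / 2 + w K)) atTop atTop := by
      refine Real.tendsto_exp_atTop.comp (tendsto_atTop_add_const_right _ _ ?_)
      exact (Real.tendsto_log_atTop.comp htop).atTop_div_const (by norm_num)
    refine tendsto_atTop_mono' _ ?_ hlim
    filter_upwards [eventually_ge_atTop K] with k hk
    have h1 := (hK k hk).1
    calc Real.exp (Real.log (φ k) / 2 + w K) ≤ Real.exp (Real.log (φ k) + Real.log (x k)) := by
          apply Real.exp_le_exp.2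
          have := hwK k hk
          simp only [hw] at this ⊢
          linarith
      _ = φ k * x k := by rw [Real.exp_add, Real.exp_log (hpos k), Real.exp_log h1]
      _ ≤ φ (k + 1) - φ k := by
          rw [hD]
          have := Real.add_one_le_exp (x k)
          have := hpos k
          gcongr
          linarith
  · have hr : Tendsto (fun k => x (k + 1) / x k) atTop (nhds 1) := by
      have h1 := ((hx2.mul (hx0.comp hshift)).const_sub 1).inv₀ (by norm_num)
      simp only [mul_zero, sub_zero, inv_one] at h1
      refine h1.congr' ?_
      filter_upwards [hx, hx1] with k h2 h3
      simp only [Function.comp_apply]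
      rw [← inv_div (x k)]
      congr 1
      field_simp
      ring
    have hslope : Tendsto (fun k => (Real.exp (x k) - 1) / x k) atTop (nhds 1) := by
      have h1 := (hasDerivAt_iff_tendsto_slope.1 (Real.hasDerivAt_exp 0))
      rw [Real.exp_zero] at h1
      have h2 : Tendsto x atTop (nhdsWithin 0 {0}ᶜ) :=
        tendsto_nhdsWithin_iff.2 ⟨hx0, hx.mono fun k hk => hk.ne'⟩
      refine (h1.comp h2).congr fun k => ?_
      simp [slope_def_field]
    have hexp : Tendsto (fun k => Real.exp (x k)) atTop (nhds 1) := by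
      have h := (Real.continuous_exp.tendsto 0).comp hx0
      rwa [Real.exp_zero] at h
    have h1 := (hexp.mul ((hslope.comp hshift).div hslope one_ne_zero)).mul hr
    simp only [mul_one, div_one] at h1
    refine h1.congr' ?_
    filter_upwards [hx, hx1] with k h2 h3
    rw [show φ (k + 2) - φ (k + 1) = _ from hD (k + 1), hD, hφ]
    simp only [Function.comp_apply, Pi.div_apply]
    have h4 := hpos k
    have h5 : Real.exp (x k) - 1 ≠ 0 := by
      have := Real.add_one_lt_exp h2.ne'
      exact (by linarith : (0 : ℝ) < Real.exp (x k) - 1).ne'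
    field_simp

/-- The increments of a concave sequence tending to infinity are positive. -/
lemma increments_pos {ψ : ℕ → ℝ} (htop : Tendsto ψ atTop atTop)
    (hdec : ∀ k, 1 ≤ k → ψ (k + 2) - ψ (k + 1) ≤ ψ (k + 1) - ψ k) {k : ℕ} (hk : 1 ≤ k) :
    0 < ψ (k + 1) - ψ k := by
  by_contra! hneg
  have h : ∀ m, k ≤ m → ψ (m + 1) - ψ m ≤ 0 ∧ ψ m ≤ ψ k := by
    intro m hm
    induction m, hm using Nat.le_induction with
    | base => exact ⟨hneg, le_rfl⟩
    | succ m hm ih => exact ⟨(hdec m (hk.trans hm)).trans ih.1, by linarith [ih.1, ih.2]⟩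
  obtain ⟨m, h1, h2⟩ := ((htop.eventually_gt_atTop (ψ k)).and (eventually_ge_atTop k)).exists
  exact absurd (h m h2).2 (not_le.2 h1)

theorem dimH_Ephi_lower_half (φ : ℕ → ℝ)
    (hpos : ∀ n, 0 < φ n) (hmono : Monotone φ)
    (htop : Tendsto φ atTop atTop)
    (hdec : ∀ n : ℕ, 2 ≤ n →
      Real.log (φ (n + 1)) - Real.log (φ n) ≤ Real.log (φ n) - Real.log (φ (n - 1)))
    (hx0 : Tendsto (fun n : ℕ => Real.log (φ n) - Real.log (φ (n - 1))) atTop (nhds 0))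
    (hx2 : Tendsto
      (fun n : ℕ =>
        ((Real.log (φ n) - Real.log (φ (n - 1))) -
          (Real.log (φ (n - 1)) - Real.log (φ (n - 2)))) /
          (Real.log (φ n) - Real.log (φ (n - 1))) ^ 2)
      atTop (nhds 0)) :
    1 / 2 ≤ dimH (Ephi φ) := by
  set ψ : ℕ → ℝ := fun n => Real.log (φ n) with hψ
  set x : ℕ → ℝ := fun k => ψ (k + 1) - ψ k with hxdef
  have hψtop : Tendsto ψ atTop atTop := Real.tendsto_log_atTop.comp htop
  have hdec' : ∀ k, 1 ≤ k → ψ (k + 2) - ψ (k + 1) ≤ ψ (k + 1) - ψ k :=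
    fun k hk => hdec (k + 1) (by omega)
  have hx0' : Tendsto x atTop (nhds 0) := hx0.comp (tendsto_add_atTop_nat 1)
  have hx2' : Tendsto (fun k => (x (k + 1) - x k) / x (k + 1) ^ 2) atTop (nhds 0) :=
    hx2.comp (tendsto_add_atTop_nat 2)
  have hφ : ∀ k, φ (k + 1) = φ k * Real.exp (x k) := fun k => by
    simp only [hxdef, hψ]
    rw [Real.exp_sub, Real.exp_log (hpos _), Real.exp_log (hpos _), mul_div_cancel₀ _ (hpos k).ne']
  obtain ⟨hD, hratio⟩ := increments_of_regular hpos htop hφ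
    ((eventually_ge_atTop 1).mono fun k hk => increments_pos hψtop hdec' hk)
    ((eventually_ge_atTop 1).mono fun k hk => hdec' k hk) hx0' hx2'
  refine le_trans (half_le_dimH_asympDigits (Real.tendsto_sqrt_atTop.comp hD) ?_)
    (dimH_mono (asympDigits_subset_Ephi htop hD hratio hmono))
  filter_upwards [(tendsto_add_atTop_nat 1).eventually (eventually_le_of_increments hx0'),
    eventually_ge_atTop 1] with k hk h1
  have h2 : φ (k + 1) ≤ Real.exp ((k + 1 : ℕ) : ℝ) := (Real.log_le_iff_le_exp (hpos _)).1 hk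
  have h3 : (1 : ℝ) ≤ k := by exact_mod_cast h1
  rw [Function.comp_apply, Real.sqrt_le_left (Real.exp_pos _).le, ← Real.exp_nat_mul]
  calc φ (k + 1) - φ k ≤ φ (k + 1) := by linarith [hpos k]
    _ ≤ _ := h2
    _ ≤ _ := Real.exp_le_exp.2 (by push_cast; linarith)
end

section
/- Let φ : ℕ → ℝ₊ be increasing with φ(n) → ∞ and let ψ(n) = log φ(n). Suppose that ψ(n+1) − ψ(n) is monotonically increasing in n and that lim_{n→∞} (ψ(n+1) − ψ(n))/(ψ(n) − ψ(n−1)) = α for some α ≥ 1. Then the Hausdorff dimension of E(φ) is at least 1/(1+α). -/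
/-!
If `a_n a_{n+1} ∼ φ n - φ (n-1)`, then `S_n ∼ φ n` by Stolz–Cesàro. So choose real numbers
`b n ≥ 0` with `b n + b (n+1) = log (φ (n+1) - φ n)` for large `n` (`exists_log_sizes`); since the
increments `d n` of `log φ` are nondecreasing and eventually positive, `b n → ∞`. Every `x` with
`a_{n+1}(x)` between `exp (b n)` and `exp (b n) + exp ((1 - δ) * b n) + O(1)` then lies in `E(φ)`
(`tendsto_S_div`).

The set of such `x` is a Cantor set with `N n ≈ exp ((1 - δ) * b n)` choices at step `n`. Reading
the choices as mixed-radix digits gives a map of the Cantor set onto `[0,1)`. If `x` and `x'` first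
differ at step `n`, by `m` in the partial quotient, then `|x - x'|` is at least
`m / (2 * (B 0 ⋯ B n)^2)` with `B i ≍ exp (b i)`, while the images are at distance at most
`2 * m / (N 0 ⋯ N n)`. Hence the map is `s`-Hölder (`holder_bound`), and the Cantor set has
dimension at least `s` (`cantor_dim`), as soon as, up to an additive constant,
`2 * s * ∑_{i ≤ n} (b i + L) ≤ (1 - δ) * (s * b n + ∑_{i < n} b i)`.

The ratio hypothesis enters through `b (n+1) ≤ (α + η) * b n + C` for every `η > 0`. It holds because
`b (n+2) - b n = d (n+1) + lam (n+1) - lam n`, where `lam` is monotone and bounded above, and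
`d (n+1) ≤ (α + η) * d n` eventually. Summing, `b n` is at most about `(α - 1 + η) * ∑_{i < n} b i`,
so the Hölder condition holds for every `s < 1 / (1 + α)` once `δ` is small (`exists_delta`).
-/


open MeasureTheory Filter Real Set

/-! ### Continued fractions with prescribed partial quotients -/

/-- Every sequence of positive integers is the sequence of partial quotients of some point; `X i`
plays the role of the `i`-th iterate of that point under the Gauss map. -/
lemma exists_cf (a : ℕ → ℕ) (ha : ∀ i, 1 ≤ a i) :
    ∃ X : ℕ → ℝ, ∀ i, 0 < X i ∧ X i < 1 ∧ X i * (a i + X (i + 1)) = 1 := by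
  -- Compactness of `[0,1]^ℕ`: `t n` is the set of sequences solving the first `n` equations.
  let t : ℕ → Set (ℕ → ℝ) := fun n =>
    Set.pi Set.univ (fun _ => Set.Icc (0:ℝ) 1) ∩ {y | ∀ i < n, y i * (a i + y (i + 1)) = 1}
  have hne : ∀ n (a : ℕ → ℕ), (∀ i, 1 ≤ a i) →
      ∃ y : ℕ → ℝ, (∀ i, y i ∈ Set.Icc (0:ℝ) 1) ∧ ∀ i < n, y i * (a i + y (i + 1)) = 1 := by
    intro n
    induction n with
    | zero => intro a _; exact ⟨fun _ => 0, fun i => by simp, fun i hi => by omega⟩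
    | succ n ih =>
      intro a ha
      obtain ⟨y, hy, hy'⟩ := ih (fun i => a (i + 1)) (fun i => ha _)
      have h0 : (1:ℝ) ≤ a 0 + y 0 := by
        have := (hy 0).1
        have h1 : (1:ℝ) ≤ a 0 := by exact_mod_cast ha 0
        linarith
      refine ⟨fun i => Nat.casesOn i (1 / (a 0 + y 0)) y, fun i => ?_, fun i hi => ?_⟩
      · cases i with
        | zero =>
          refine ⟨one_div_nonneg.2 (by linarith), ?_⟩
          change 1 / (a 0 + y 0) ≤ 1
          rw [div_le_one (by linarith)]; exact h0
        | succ i => exact hy i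
      · cases i with
        | zero =>
          change 1 / (a 0 + y 0) * (a 0 + y 0) = 1
          field_simp
        | succ i => exact hy' i (by omega)
  have hcl : ∀ i, IsClosed {y : ℕ → ℝ | ∀ k < i, y k * (a k + y (k + 1)) = 1} := by
    intro i
    simp only [Set.ofPred_forall]
    refine isClosed_iInter fun k => isClosed_iInter fun _ => ?_
    exact isClosed_eq (by fun_prop) (by fun_prop)
  have hcp : IsCompact (Set.pi Set.univ (fun _ : ℕ => Set.Icc (0:ℝ) 1)) :=
    isCompact_univ_pi fun _ => isCompact_Icc
  obtain ⟨X, hX⟩ := IsCompact.nonempty_iInter_of_sequence_nonempty_isCompact_isClosed t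
    (fun i y hy => ⟨hy.1, fun k hk => hy.2 k (by omega)⟩)
    (fun i => by
      obtain ⟨y, h1, h2⟩ := hne i a ha
      exact ⟨y, fun k _ => h1 k, h2⟩)
    (hcp.inter_right (hcl 0)) (fun i => hcp.isClosed.inter (hcl i))
  simp only [Set.mem_iInter] at hX
  have hI : ∀ i, X i ∈ Set.Icc (0:ℝ) 1 := fun i => (hX 0).1 i trivial
  have hE : ∀ i, X i * (a i + X (i + 1)) = 1 := fun i => (hX (i + 1)).2 i (by omega)
  have hp : ∀ i, 0 < X i := fun i => by
    rcases (hI i).1.lt_or_eq with h | h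
    · exact h
    · have := hE i
      rw [← h] at this; simp at this
  refine ⟨X, fun i => ⟨hp i, ?_, hE i⟩⟩
  have h1 : (1:ℝ) ≤ a i := by exact_mod_cast ha i
  have := hE i
  have h2 := hp (i + 1)
  have h3 := hp i
  nlinarith [mul_pos h2 h3]

/-- `X` is the Gauss orbit of the continued fraction with partial quotients `a 0, a 1, …`. -/
def IsCF (a : ℕ → ℕ) (X : ℕ → ℝ) : Prop :=
  ∀ i, 0 < X i ∧ X i < 1 ∧ X i * (a i + X (i + 1)) = 1

lemma IsCF.inv {a : ℕ → ℕ} {X : ℕ → ℝ} (h : IsCF a X) (i : ℕ) : 1 / X i = a i + X (i + 1) := by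
  have := (h i).2.2
  have h0 := (h i).1
  field_simp
  linarith

lemma IsCF.iterate {a : ℕ → ℕ} {X : ℕ → ℝ} (h : IsCF a X) (i : ℕ) :
    gaussMap^[i] (X 0) = X i := by
  induction i with
  | zero => rfl
  | succ i ih =>
    rw [Function.iterate_succ_apply', ih, gaussMap, if_neg (h i).1.ne', h.inv i]
    have : ⌊(a i : ℝ) + X (i + 1)⌋ = (a i : ℤ) := by
      rw [Int.floor_eq_iff]
      push_cast
      exact ⟨by linarith [(h (i + 1)).1], by linarith [(h (i + 1)).2.1]⟩
    rw [this]; push_cast; ring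

lemma IsCF.pq_eq {a : ℕ → ℕ} {X : ℕ → ℝ} (h : IsCF a X) (i : ℕ) : pq (i + 1) (X 0) = a i := by
  rw [pq, Nat.add_sub_cancel, h.iterate, h.inv, Nat.floor_eq_iff]
  · exact ⟨by linarith [(h (i + 1)).1], by linarith [(h (i + 1)).2.1]⟩
  · have := (h (i + 1)).1
    positivity

/-- Infinite descent: the Gauss orbit of a rational point has strictly decreasing denominators. -/
lemma IsCF.irrational {a : ℕ → ℕ} {X : ℕ → ℝ} (h : IsCF a X) : Irrational (X 0) := by
  have key : ∀ q : ℕ, ∀ i, ∀ p : ℤ, X i * q = p → q = 0 := by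
    intro q
    induction q using Nat.strong_induction_on with
    | _ q ih =>
      intro i p hp
      by_contra hq
      have hq' : (0:ℝ) < q := by exact_mod_cast Nat.pos_of_ne_zero hq
      obtain ⟨h0, h1, h2⟩ := h i
      have hp0 : (0:ℝ) < p := by rw [← hp]; positivity
      have hpq : (p:ℝ) < q := by rw [← hp]; nlinarith
      have hp0' : 0 < p := by exact_mod_cast hp0
      lift p to ℕ using hp0'.le
      have hpq' : p < q := by exact_mod_cast hpq
      have := ih p hpq' (i + 1) ((q:ℤ) - a i * p) (by
        push_cast at hp ⊢
        rw [← hp]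
        linear_combination (q:ℝ) * h2)
      omega
  rintro ⟨r, hr⟩
  have := key r.den 0 r.num (by rw [← hr]; exact_mod_cast Rat.mul_den_eq_num r)
  exact r.den_ne_zero this

/-- The map `x ↦ 1 / x` expands distances by at most `B ^ 2` on points with first partial quotient
at most `B - 1`; note `1 / X i = a i + X (i + 1)`. -/
lemma IsCF.step {a a' : ℕ → ℕ} {X X' : ℕ → ℝ} (h : IsCF a X) (h' : IsCF a' X') {i : ℕ} {B : ℝ}
    (hB : (a i : ℝ) + 1 ≤ B) (hB' : (a' i : ℝ) + 1 ≤ B) :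
    |((a' i : ℝ) + X' (i + 1)) - (a i + X (i + 1))| ≤ B ^ 2 * |X i - X' i| := by
  obtain ⟨h0, h1, h2⟩ := h i
  obtain ⟨h0', h1', h2'⟩ := h' i
  have e : ((a' i : ℝ) + X' (i + 1)) - (a i + X (i + 1)) =
      ((a i + X (i + 1)) * (a' i + X' (i + 1))) * (X i - X' i) := by
    linear_combination (-(a' i : ℝ) - X' (i + 1)) * h2 + ((a i : ℝ) + X (i + 1)) * h2'
  have p1 := (h (i + 1)).1
  have p1' := (h' (i + 1)).1
  have q1 := (h (i + 1)).2.1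
  have q1' := (h' (i + 1)).2.1
  have n1 : (0:ℝ) ≤ a i := Nat.cast_nonneg _
  have n1' : (0:ℝ) ≤ a' i := Nat.cast_nonneg _
  rw [e, abs_mul, abs_of_nonneg (by positivity)]
  refine mul_le_mul_of_nonneg_right ?_ (abs_nonneg _)
  rw [sq]
  exact mul_le_mul (by linarith) (by linarith) (by positivity) (by linarith)

lemma IsCF.dist_le {a a' : ℕ → ℕ} {X X' : ℕ → ℝ} (h : IsCF a X) (h' : IsCF a' X') {B : ℕ → ℝ}
    (hB : ∀ i, (a i : ℝ) + 1 ≤ B i) (n : ℕ) (heq : ∀ k < n, a k = a' k) :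
    |X n - X' n| ≤ (∏ i ∈ Finset.range n, B i) ^ 2 * |X 0 - X' 0| := by
  induction n with
  | zero => simp
  | succ n ih =>
    have e := heq n (by omega)
    have := h.step h' (hB n) (e ▸ hB n)
    rw [e, add_sub_add_left_eq_sub, abs_sub_comm] at this
    refine this.trans ?_
    rw [Finset.prod_range_succ, mul_pow, mul_comm (_ ^ 2) (B n ^ 2), mul_assoc]
    exact mul_le_mul_of_nonneg_left (ih fun k hk => heq k (by omega)) (sq_nonneg _)

/-! ### Mixed-radix expansions -/

/-- The orbit of `y` under the mixed-radix expansion with bases `N 0, N 1, …`. -/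
noncomputable def radix (N : ℕ → ℕ) (y : ℝ) : ℕ → ℝ
  | 0 => y
  | n + 1 => Int.fract (N n * radix N y n)

/-- The `n`-th mixed-radix digit of `y`. -/
noncomputable def digit (N : ℕ → ℕ) (y : ℝ) (n : ℕ) : ℕ := ⌊N n * radix N y n⌋₊

lemma radix_mem {N : ℕ → ℕ} {y : ℝ} (hy : y ∈ Set.Ico (0:ℝ) 1) (n : ℕ) :
    radix N y n ∈ Set.Ico (0:ℝ) 1 := by
  cases n with
  | zero => exact hy
  | succ n => exact ⟨Int.fract_nonneg _, Int.fract_lt_one _⟩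

lemma radix_step {N : ℕ → ℕ} {y : ℝ} (hy : y ∈ Set.Ico (0:ℝ) 1) (n : ℕ) :
    N n * radix N y n = digit N y n + radix N y (n + 1) := by
  have h0 : (0:ℝ) ≤ N n * radix N y n := mul_nonneg (Nat.cast_nonneg _) (radix_mem hy n).1
  rw [digit, natCast_floor_eq_intCast_floor h0]
  exact (Int.floor_add_fract _).symm

lemma digit_lt {N : ℕ → ℕ} {y : ℝ} (hN : ∀ i, 2 ≤ N i) (hy : y ∈ Set.Ico (0:ℝ) 1) (n : ℕ) :
    digit N y n < N n := by
  have h := radix_mem (N := N) hy n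
  have hp : (0:ℝ) < N n := by exact_mod_cast (by linarith [hN n] : 0 < N n)
  rw [digit, Nat.floor_lt (mul_nonneg hp.le h.1)]
  nlinarith [h.2]

lemma radix_dist_s14 {N : ℕ → ℕ} {y y' : ℝ} (hy : y ∈ Set.Ico (0:ℝ) 1) (hy' : y' ∈ Set.Ico (0:ℝ) 1)
    (n : ℕ) (heq : ∀ k < n, digit N y k = digit N y' k) :
    (∏ i ∈ Finset.range n, (N i : ℝ)) * (y - y') = radix N y n - radix N y' n := by
  induction n with
  | zero => simp [radix]
  | succ n ih =>
    have h1 := radix_step (N := N) hy n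
    have h2 := radix_step (N := N) hy' n
    rw [heq n (by omega)] at h1
    rw [Finset.prod_range_succ]
    linear_combination (N n : ℝ) * ih (fun k hk => heq k (by omega)) + h1 - h2

/-- Two points of `[0,1)` with the same mixed-radix digits coincide. -/
lemma exists_digit_ne {N : ℕ → ℕ} (hN : ∀ i, 2 ≤ N i) {y y' : ℝ} (hy : y ∈ Set.Ico (0:ℝ) 1)
    (hy' : y' ∈ Set.Ico (0:ℝ) 1) (hne : y ≠ y') : ∃ n, digit N y n ≠ digit N y' n := by
  by_contra! h
  have hpos : 0 < |y - y'| := abs_pos.2 (sub_ne_zero.2 hne)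
  have h1 : ∀ n : ℕ, (2:ℝ) ^ n * |y - y'| ≤ 1 := by
    intro n
    have e := radix_dist_s14 hy hy' n fun k _ => h k
    have hr := radix_mem (N := N) hy n
    have hr' := radix_mem (N := N) hy' n
    have hP : (2:ℝ) ^ n ≤ ∏ i ∈ Finset.range n, (N i : ℝ) := by
      have := Finset.prod_le_prod (s := Finset.range n) (f := fun _ => (2:ℝ))
        (g := fun i => (N i : ℝ)) (fun _ _ => by norm_num) (fun i _ => by exact_mod_cast hN i)
      simpa using this
    calc (2:ℝ) ^ n * |y - y'| ≤ (∏ i ∈ Finset.range n, (N i : ℝ)) * |y - y'| :=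
          mul_le_mul_of_nonneg_right hP hpos.le
      _ = |radix N y n - radix N y' n| := by
          rw [← e, abs_mul, abs_of_nonneg (le_trans (by positivity) hP)]
      _ ≤ 1 := by
          rw [abs_le]; constructor <;> linarith [hr.1, hr.2, hr'.1, hr'.2]
  obtain ⟨n, hn⟩ := pow_unbounded_of_one_lt (1 / |y - y'|) (by norm_num : (1:ℝ) < 2)
  rw [div_lt_iff₀ hpos] at hn
  linarith [h1 n]

/-! ### Dimension of sets of continued fractions with restricted partial quotients -/

/-- The Hölder estimate: if two points of `[0,1)` have mixed-radix digits `c, c'` and `X, X'` are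
the Gauss orbits with partial quotients `A + c, A + c'`, then the distance between the two points is
at most a constant times the `s`-th power of the distance between the continued fractions. -/
lemma holder_bound {A N : ℕ → ℕ} {B : ℕ → ℝ} {s K : ℝ} (hs : 0 ≤ s) (hs1 : s ≤ 1)
    (hA : ∀ i, 2 ≤ A i) (hN : ∀ i, 2 ≤ N i) (hB : ∀ i, (A i : ℝ) + N i ≤ B i)
    (hK : ∀ n, ((∏ i ∈ Finset.range (n + 1), B i) ^ 2) ^ s ≤
      K * ((N n : ℝ) ^ s * ∏ i ∈ Finset.range n, (N i : ℝ)))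
    {y y' : ℝ} (hy : y ∈ Set.Ico (0:ℝ) 1) (hy' : y' ∈ Set.Ico (0:ℝ) 1) {X X' : ℕ → ℝ}
    (hX : IsCF (fun i => A i + digit N y i) X) (hX' : IsCF (fun i => A i + digit N y' i) X') :
    |y - y'| ≤ 4 * K * |X 0 - X' 0| ^ s := by
  have hK0 : 0 ≤ K := by
    have h := (Real.rpow_nonneg (sq_nonneg (∏ i ∈ Finset.range (0 + 1), B i)) s).trans (hK 0)
    have hN0 : (0:ℝ) < N 0 := by exact_mod_cast (by linarith [hN 0] : 0 < N 0)
    have h2 : 0 < (N 0 : ℝ) ^ s * ∏ i ∈ Finset.range 0, (N i : ℝ) := by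
      simpa using Real.rpow_pos_of_pos hN0 s
    exact nonneg_of_mul_nonneg_left h h2
  rcases eq_or_ne y y' with rfl | hne
  · simp; positivity
  classical
  have hex := exists_digit_ne hN hy hy' hne
  set n := Nat.find hex with hn
  have hdiff : digit N y n ≠ digit N y' n := Nat.find_spec hex
  have heq : ∀ k < n, digit N y k = digit N y' k := fun k hk => by
    have := Nat.find_min hex hk
    push Not at this
    exact this
  have hBd : ∀ (z : ℝ), z ∈ Set.Ico (0:ℝ) 1 → ∀ i, ((A i + digit N z i : ℕ) : ℝ) + 1 ≤ B i := by
    intro z hz i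
    refine le_trans ?_ (hB i)
    have := digit_lt hN hz i
    exact_mod_cast (by omega : A i + digit N z i + 1 ≤ A i + N i)
  have hd1 := hX.dist_le hX' (hBd y hy) n fun k hk => by simp only [heq k hk]
  have hd2 := hX.step hX' (hBd y hy n) (hBd y' hy' n)
  have hsmall : ∀ (z : ℝ) (Z : ℕ → ℝ), IsCF (fun i => A i + digit N z i) Z → ∀ i, Z i ≤ 1 / 2 := by
    intro z Z hZ i
    have h1 := hZ i
    have h2 : (2:ℝ) ≤ ((A i + digit N z i : ℕ) : ℝ) := by exact_mod_cast (hA i).trans (by omega)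
    nlinarith [(hZ (i + 1)).1, h1.1, h1.2.2, mul_pos h1.1 (hZ (i + 1)).1]
  have s1 := hsmall y X hX (n + 1)
  have s1' := hsmall y' X' hX' (n + 1)
  have p1 := (hX (n + 1)).1
  have p1' := (hX' (n + 1)).1
  set c : ℝ := (digit N y n : ℝ) with hc
  set c' : ℝ := (digit N y' n : ℝ) with hc'
  have hm : 1 ≤ |c - c'| := by
    have h1 : (digit N y n : ℤ) - digit N y' n ≠ 0 := sub_ne_zero.2 (by exact_mod_cast hdiff)
    have h2 := Int.one_le_abs h1
    have h3 : ((1:ℤ):ℝ) ≤ ((|(digit N y n : ℤ) - digit N y' n| : ℤ) : ℝ) := by exact_mod_cast h2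
    push_cast at h3
    exact h3
  set m := |c - c'| with hmdef
  have hNn : (0:ℝ) < N n := by exact_mod_cast (by linarith [hN n] : 0 < N n)
  have hmN : m ≤ N n := by
    have h1 : c < N n := Nat.cast_lt.2 (digit_lt hN hy n)
    have h2 : c' < N n := Nat.cast_lt.2 (digit_lt hN hy' n)
    have h3 : 0 ≤ c := Nat.cast_nonneg _
    have h4 : 0 ≤ c' := Nat.cast_nonneg _
    rw [hmdef, abs_le]; constructor <;> linarith
  set Q := ∏ i ∈ Finset.range (n + 1), B i with hQ
  set P := ∏ i ∈ Finset.range n, (N i : ℝ) with hP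
  have hPpos : 0 < P := Finset.prod_pos fun i _ => by
    exact_mod_cast (by linarith [hN i] : 0 < N i)
  -- The first differing partial quotients separate the two continued fractions.
  have hx : m ≤ 2 * (Q ^ 2 * |X 0 - X' 0|) := by
    have e1 : m - 1 / 2 ≤ |((A n + digit N y' n : ℕ) : ℝ) + X' (n + 1) -
        (((A n + digit N y n : ℕ) : ℝ) + X (n + 1))| := by
      push_cast
      rw [← hc, ← hc']
      have t := abs_sub_abs_le_abs_sub (c - c') (X' (n + 1) - X (n + 1))
      have t2 : |X' (n + 1) - X (n + 1)| ≤ 1 / 2 := by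
        rw [abs_le]; constructor <;> linarith
      have t3 : (A n + c' + X' (n + 1) - (A n + c + X (n + 1)) : ℝ) =
        -((c - c') - (X' (n + 1) - X (n + 1))) := by ring
      rw [t3, abs_neg]
      linarith
    have e2 : Q ^ 2 * |X 0 - X' 0| =
        B n ^ 2 * ((∏ i ∈ Finset.range n, B i) ^ 2 * |X 0 - X' 0|) := by
      rw [hQ, Finset.prod_range_succ]; ring
    have e3 := mul_le_mul_of_nonneg_left hd1 (sq_nonneg (B n))
    have e4 := e1.trans hd2
    linarith
  have hyy : P * |y - y'| ≤ 2 * (m / N n) := by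
    have e := radix_dist_s14 hy hy' n heq
    have e1 := radix_step (N := N) hy n
    have e2 := radix_step (N := N) hy' n
    have r1 := radix_mem (N := N) hy (n + 1)
    have r2 := radix_mem (N := N) hy' (n + 1)
    have e3 : P * |y - y'| = |P * (y - y')| := by rw [abs_mul, abs_of_pos hPpos]
    rw [e3, e, ← mul_div_assoc, le_div_iff₀ hNn]
    have e4 : |radix N y n - radix N y' n| * N n =
        |(c - c') + (radix N y (n + 1) - radix N y' (n + 1))| := by
      have e5 : (c - c') + (radix N y (n + 1) - radix N y' (n + 1)) =
          (radix N y n - radix N y' n) * N n := by linear_combination e2 - e1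
      rw [e5, abs_mul, abs_of_pos hNn]
    rw [e4]
    refine (abs_add_le _ _).trans ?_
    have : |radix N y (n + 1) - radix N y' (n + 1)| ≤ 1 := by
      rw [abs_le]; constructor <;> linarith [r1.1, r1.2, r2.1, r2.2]
    linarith
  have hms : m / N n ≤ (m / N n) ^ s := by
    have h0 : 0 < m / N n := by positivity
    have h1 : m / N n ≤ 1 := by rw [div_le_one hNn]; exact hmN
    calc m / N n = (m / N n) ^ (1:ℝ) := (Real.rpow_one _).symm
      _ ≤ (m / N n) ^ s := Real.rpow_le_rpow_of_exponent_ge h0 h1 hs1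
  have hms2 : m ^ s ≤ 2 * ((Q ^ 2) ^ s * |X 0 - X' 0| ^ s) := by
    calc m ^ s ≤ (2 * (Q ^ 2 * |X 0 - X' 0|)) ^ s := Real.rpow_le_rpow (by positivity) hx hs
      _ = 2 ^ s * ((Q ^ 2) ^ s * |X 0 - X' 0| ^ s) := by
          rw [Real.mul_rpow (by positivity) (by positivity),
            Real.mul_rpow (by positivity) (by positivity)]
      _ ≤ 2 * ((Q ^ 2) ^ s * |X 0 - X' 0| ^ s) := by
          refine mul_le_mul_of_nonneg_right ?_ (by positivity)
          calc (2:ℝ) ^ s ≤ 2 ^ (1:ℝ) := Real.rpow_le_rpow_of_exponent_le (by norm_num) hs1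
            _ = 2 := Real.rpow_one _
  have hNs : (0:ℝ) < (N n : ℝ) ^ s := Real.rpow_pos_of_pos hNn s
  have hfin : P * (N n : ℝ) ^ s * |y - y'| ≤
      P * (N n : ℝ) ^ s * (4 * K * |X 0 - X' 0| ^ s) := by
    calc P * (N n : ℝ) ^ s * |y - y'| = (N n : ℝ) ^ s * (P * |y - y'|) := by ring
      _ ≤ (N n : ℝ) ^ s * (2 * (m / N n) ^ s) := mul_le_mul_of_nonneg_left (by linarith) hNs.le
      _ = 2 * m ^ s := by
          rw [Real.div_rpow (by positivity) hNn.le]; field_simp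
      _ ≤ 4 * ((Q ^ 2) ^ s * |X 0 - X' 0| ^ s) := by linarith
      _ ≤ 4 * ((K * ((N n : ℝ) ^ s * P)) * |X 0 - X' 0| ^ s) := by
          gcongr
          exact hK n
      _ = _ := by ring
  exact le_of_mul_le_mul_left hfin (by positivity)

/-- Lower bound for the dimension of the set of continued fractions with `a_{i+1}` ranging over
`[A i, A i + N i)`: the map sending such a continued fraction to the number with mixed-radix digits
`a_{i+1} - A i` is `s`-Hölder onto `[0,1)`. -/
lemma cantor_dim {A N : ℕ → ℕ} {B : ℕ → ℝ} {s : NNReal} {K : ℝ} (hs : 0 < s) (hs1 : s ≤ 1)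
    (hA : ∀ i, 2 ≤ A i) (hN : ∀ i, 2 ≤ N i) (hB : ∀ i, (A i : ℝ) + N i ≤ B i)
    (hK : ∀ n, ((∏ i ∈ Finset.range (n + 1), B i) ^ 2) ^ (s : ℝ) ≤
      K * ((N n : ℝ) ^ (s : ℝ) * ∏ i ∈ Finset.range n, (N i : ℝ))) :
    (s : ENNReal) ≤ dimH {x : ℝ | x ∈ Set.Ioo (0:ℝ) 1 ∧ Irrational x ∧
      ∀ i, A i ≤ pq (i + 1) x ∧ pq (i + 1) x < A i + N i} := by
  choose X hX using fun y : ℝ => exists_cf (fun i => A i + digit N y i)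
    (fun i => by have := hA i; omega)
  have hX' : ∀ y, IsCF (fun i => A i + digit N y i) (X y) := hX
  set g : ℝ → ℝ := fun y => X y 0 with hg
  have hhol : ∀ y ∈ Set.Ico (0:ℝ) 1, ∀ y' ∈ Set.Ico (0:ℝ) 1,
      |y - y'| ≤ 4 * K * |g y - g y'| ^ (s : ℝ) := fun y hy y' hy' =>
    holder_bound s.2 (by exact_mod_cast hs1) hA hN hB hK hy hy' (hX' y) (hX' y')
  have hinj : Set.InjOn g (Set.Ico (0:ℝ) 1) := by
    intro y hy y' hy' h
    have := hhol y hy y' hy'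
    rw [h, sub_self, abs_zero, Real.zero_rpow (by exact_mod_cast hs.ne'), mul_zero] at this
    exact sub_eq_zero.1 (abs_nonpos_iff.1 this)
  have hleft := hinj.leftInvOn_invFunOn
  set f := Function.invFunOn g (Set.Ico (0:ℝ) 1) with hf
  have hH : HolderOnWith (Real.toNNReal (4 * K)) s f (g '' Set.Ico (0:ℝ) 1) := by
    rintro _ ⟨y, hy, rfl⟩ _ ⟨y', hy', rfl⟩
    have e1 : ENNReal.ofReal (dist (g y) (g y')) ^ (s : ℝ) =
        ENNReal.ofReal (dist (g y) (g y') ^ (s : ℝ)) :=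
      ENNReal.ofReal_rpow_of_nonneg dist_nonneg s.2
    rw [hleft hy, hleft hy', edist_dist, edist_dist, e1]
    rw [show ((Real.toNNReal (4 * K) : NNReal) : ENNReal) = ENNReal.ofReal (4 * K) from rfl,
      ← ENNReal.ofReal_mul' (Real.rpow_nonneg dist_nonneg _)]
    exact ENNReal.ofReal_le_ofReal (hhol y hy y' hy')
  have h1 := hH.dimH_image_le hs
  have h2 : f '' (g '' Set.Ico (0:ℝ) 1) = Set.Ico (0:ℝ) 1 := hleft.image_image
  have h3 : dimH (Set.Ico (0:ℝ) 1) = 1 := by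
    rw [Real.dimH_of_nonempty_interior (by simp)]; simp
  rw [h2, h3] at h1
  have h4 : (s : ENNReal) ≤ dimH (g '' Set.Ico (0:ℝ) 1) := by
    rw [ENNReal.le_div_iff_mul_le (Or.inl (by exact_mod_cast hs.ne')) (Or.inl ENNReal.coe_ne_top)]
      at h1
    simpa using h1
  refine h4.trans (dimH_mono ?_)
  rintro _ ⟨y, hy, rfl⟩
  refine ⟨⟨(hX y 0).1, (hX y 0).2.1⟩, (hX' y).irrational, fun i => ?_⟩
  rw [(hX' y).pq_eq i]
  have := digit_lt hN hy i
  constructor <;> omega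

/-! ### Asymptotics of the target sizes -/

/-- A function on `ℕ` bounded above along the tail is bounded above. -/
lemma exists_upper_bound {f : ℕ → ℝ} {c : ℝ} (h : ∀ᶠ n in atTop, f n ≤ c) : ∃ C, ∀ n, f n ≤ C := by
  have : IsBoundedUnder (· ≤ ·) atTop f := ⟨c, by simpa using h⟩
  obtain ⟨C, hC⟩ := this.bddAbove_range
  exact ⟨C, fun n => hC ⟨n, rfl⟩⟩

/-- The logarithms `b n` of the target sizes of the partial quotients: they solve
`exp (b n) * exp (b (n + 1)) = φ (n + 1) - φ n` for large `n`, tend to infinity, and grow at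
rate at most `α` up to bounded errors. -/
lemma exists_log_sizes (φ : ℕ → ℝ) (α : ℝ)
    (hpos : ∀ n, 0 < φ n) (htop : Tendsto φ atTop atTop) (hα : 1 ≤ α)
    (hinc : ∀ n : ℕ,
      Real.log (φ (n + 1)) - Real.log (φ n) ≤ Real.log (φ (n + 2)) - Real.log (φ (n + 1)))
    (hratio : Tendsto
      (fun n : ℕ =>
        (Real.log (φ (n + 1)) - Real.log (φ n)) /
          (Real.log (φ n) - Real.log (φ (n - 1))))
      atTop (nhds α)) :
    ∃ b : ℕ → ℝ, (∀ i, 0 ≤ b i) ∧ Tendsto b atTop atTop ∧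
      (∀ᶠ n in atTop, Real.exp (b n + b (n + 1)) = φ (n + 1) - φ n) ∧
      ∀ η > 0, ∃ C, ∀ n, b (n + 1) ≤ (α + η) * b n + C := by
  set d : ℕ → ℝ := fun n => Real.log (φ (n + 1)) - Real.log (φ n) with hd
  have hdm : Monotone d := monotone_nat_of_le_succ hinc
  have hφd : ∀ n, φ (n + 1) = φ n * Real.exp (d n) := fun n => by
    rw [hd]; simp only
    rw [Real.exp_sub, Real.exp_log (hpos _), Real.exp_log (hpos _)]
    have := (hpos n).ne'
    field_simp
  -- If all increments were nonpositive, `φ` would be bounded.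
  obtain ⟨M₀, hM₀⟩ : ∃ M, 0 < d M := by
    by_contra! h
    have hanti : Antitone φ := antitone_nat_of_succ_le fun n => by
      rw [hφd n]
      exact mul_le_of_le_one_right (hpos n).le (Real.exp_le_one_iff.2 (h n))
    obtain ⟨n, hn⟩ := (htop.eventually_gt_atTop (φ 0)).exists
    exact absurd (hanti (Nat.zero_le n)) (not_le.2 hn)
  set ρ := d M₀ with hρ
  have hdρ : ∀ n, M₀ ≤ n → ρ ≤ d n := fun n hn => hdm hn
  have hu : ∀ᶠ n in atTop, 1 ≤ φ (n + 1) - φ n := by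
    filter_upwards [htop.eventually_ge_atTop (1 / ρ), eventually_ge_atTop M₀] with n h1 h2
    rw [div_le_iff₀ hM₀] at h1
    have h3 := Real.add_one_le_exp (d n)
    have h4 := hdρ n h2
    rw [hφd n]
    nlinarith [hpos n]
  obtain ⟨M, hM⟩ := eventually_atTop.1 (hu.and (eventually_ge_atTop M₀))
  set v : ℕ → ℝ := fun n => Real.log (φ (n + 1) - φ n) with hv
  -- `lam n = log (1 - φ n / φ (n + 1))` is nonpositive and nondecreasing.
  set lam : ℕ → ℝ := fun n => v n - Real.log (φ (n + 1)) with hlam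
  have hlam' : ∀ n, M ≤ n → lam n = Real.log (1 - Real.exp (-d n)) := fun n hn => by
    have h1 : 0 < d n := hM₀.trans_le (hdρ n (hM n hn).2)
    have h2 : 0 < 1 - Real.exp (-d n) := by
      have := Real.exp_lt_one_iff.2 (neg_lt_zero.2 h1); linarith
    have h3 : φ (n + 1) - φ n = φ (n + 1) * (1 - Real.exp (-d n)) := by
      rw [hφd n, Real.exp_neg]
      have := (Real.exp_pos (d n)).ne'
      field_simp
    rw [hlam]; simp only [hv]
    rw [h3, Real.log_mul (hpos _).ne' h2.ne']; ring
  have hlam0 : ∀ n, M ≤ n → lam n ≤ 0 := fun n hn => by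
    have h1 : 0 < d n := hM₀.trans_le (hdρ n (hM n hn).2)
    have h2 := Real.exp_lt_one_iff.2 (neg_lt_zero.2 h1)
    rw [hlam' n hn]
    exact Real.log_nonpos (by linarith) (by linarith [Real.exp_pos (-d n)])
  have hlamm : ∀ n, M ≤ n → lam n ≤ lam (n + 1) := fun n hn => by
    have h1 : 0 < d n := hM₀.trans_le (hdρ n (hM n hn).2)
    have h2 := Real.exp_lt_one_iff.2 (neg_lt_zero.2 h1)
    rw [hlam' n hn, hlam' (n + 1) (by omega)]
    refine Real.log_le_log (by linarith) ?_
    have := Real.exp_le_exp.2 (neg_le_neg (hdm (Nat.le_succ n)))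
    simp only [Nat.succ_eq_add_one] at this
    linarith
  have hvd : ∀ n, v (n + 1) - v n = lam (n + 1) - lam n + d (n + 1) := fun n => by
    simp only [hlam, hd]; ring
  -- From `M` on, `b` solves `b n + b (n + 1) = v n`, started at `b M = 0`.
  let b : ℕ → ℝ := fun n => Nat.rec 0 (fun n r => if n < M then 0 else v n - r) n
  have hb1 : ∀ n, b (n + 1) = if n < M then 0 else v n - b n := fun n => rfl
  have hbs : ∀ n, M ≤ n → b (n + 1) = v n - b n := fun n hn => by
    rw [hb1, if_neg (by omega)]
  have hb0 : ∀ n, n ≤ M → b n = 0 := fun n hn => by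
    cases n with
    | zero => rfl
    | succ n => rw [hb1, if_pos (by omega)]
  have hb2 : ∀ n, M ≤ n → b (n + 2) = b n + (lam (n + 1) - lam n) + d (n + 1) := fun n hn => by
    have h1 := hbs n hn
    have h2 := hbs (n + 1) (by omega)
    have h3 := hvd n
    have h4 : b (n + 2) = b (n + 1 + 1) := rfl
    linarith
  have hlow : ∀ k : ℕ, (0 ≤ b (M + k) ∧ ρ * ((k:ℝ) - 1) / 2 ≤ b (M + k)) ∧
      (0 ≤ b (M + (k + 1)) ∧ ρ * (((k + 1 : ℕ):ℝ) - 1) / 2 ≤ b (M + (k + 1))) := by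
    intro k
    induction k with
    | zero =>
      have e0 : b (M + 0) = 0 := hb0 _ le_rfl
      have e1 : 0 ≤ b (M + (0 + 1)) := by
        have h1 := hbs M le_rfl
        have h2 := hb0 M le_rfl
        have h3 : 0 ≤ v M := Real.log_nonneg (hM M le_rfl).1
        have h4 : b (M + (0 + 1)) = b (M + 1) := rfl
        linarith
      refine ⟨⟨e0.ge, ?_⟩, e1, ?_⟩
      · rw [e0]; push_cast; linarith
      · simpa using e1
    | succ k ih =>
      refine ⟨ih.2, ?_⟩
      have h1 := hb2 (M + k) (by omega)
      have h2 := hlamm (M + k) (by omega)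
      have h3 := hdρ (M + k + 1) (by have := (hM M le_rfl).2; omega)
      have h4 : b (M + (k + 1 + 1)) = b (M + k + 2) := rfl
      rw [h4, h1]
      refine ⟨by linarith [ih.1.1], ?_⟩
      have := ih.1.2
      push_cast
      linarith
  have hb_nonneg : ∀ i, 0 ≤ b i := fun i => by
    rcases le_total i M with h | h
    · exact (hb0 i h).ge
    · obtain ⟨k, rfl⟩ := Nat.exists_eq_add_of_le h
      exact (hlow k).1.1
  have hb_top : Tendsto b atTop atTop := by
    rw [← tendsto_add_atTop_iff_nat M]
    refine tendsto_atTop_mono (f := fun k : ℕ => ρ * ((k:ℝ) - 1) / 2)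
      (fun k => by rw [add_comm]; exact (hlow k).1.2) ?_
    have h1 : Tendsto (fun k : ℕ => (k:ℝ) - 1) atTop atTop :=
      tendsto_atTop_add_const_right _ (-1) tendsto_natCast_atTop_atTop
    exact (h1.const_mul_atTop hM₀).atTop_div_const (by norm_num)
  refine ⟨b, hb_nonneg, hb_top, ?_, ?_⟩
  · filter_upwards [eventually_ge_atTop M] with n hn
    have h1 := (hM n hn).1
    rw [hbs n hn, add_sub_cancel, hv]
    exact Real.exp_log (by linarith)
  · intro η hη
    have hr : Tendsto (fun n => d (n + 1) / d n) atTop (nhds α) := by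
      have := hratio.comp (tendsto_add_atTop_nat 1)
      exact this
    have hev : ∀ᶠ n in atTop, d (n + 1) ≤ (α + η) * d n := by
      filter_upwards [hr.eventually_lt_const (by linarith : α < α + η),
        eventually_ge_atTop M₀] with n h1 h2
      have h3 : 0 < d n := hM₀.trans_le (hdρ n h2)
      rw [div_lt_iff₀ h3] at h1
      exact h1.le
    obtain ⟨n₁, hn₁⟩ := eventually_atTop.1 (hev.and (eventually_ge_atTop M))
    -- `h` decreases along steps of length two: the correction `lam` telescopes.
    set h : ℕ → ℝ := fun n => b (n + 1) - (α + η) * b n - lam n with hh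
    have hstep : ∀ n, n₁ ≤ n → h (n + 2) ≤ h n := fun n hn => by
      have hMn := (hn₁ n hn).2
      have e1 := hb2 n hMn
      have e2 : b (n + 2 + 1) = b (n + 1) + (lam (n + 2) - lam (n + 1)) + d (n + 2) :=
        hb2 (n + 1) (by omega)
      have e3 : d (n + 2) ≤ (α + η) * d (n + 1) := (hn₁ (n + 1) (by omega)).1
      have e4 := hlamm n hMn
      simp only [hh]
      rw [e1, e2]
      nlinarith
    have hbd : ∀ k, h (n₁ + k) ≤ max (h n₁) (h (n₁ + 1)) ∧
        h (n₁ + (k + 1)) ≤ max (h n₁) (h (n₁ + 1)) := by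
      intro k
      induction k with
      | zero => exact ⟨le_max_left _ _, le_max_right _ _⟩
      | succ k ih => exact ⟨ih.2, (hstep (n₁ + k) (by omega)).trans ih.1⟩
    obtain ⟨C, hC⟩ := exists_upper_bound (f := fun n => b (n + 1) - (α + η) * b n)
      (c := max (h n₁) (h (n₁ + 1))) (by
        filter_upwards [eventually_ge_atTop n₁] with n hn
        obtain ⟨k, rfl⟩ := Nat.exists_eq_add_of_le hn
        have h1 := (hbd k).1
        have h2 := hlam0 (n₁ + k) (hn₁ _ hn).2
        have h3 : h (n₁ + k) = b (n₁ + k + 1) - (α + η) * b (n₁ + k) - lam (n₁ + k) := rfl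
        linarith)
    exact ⟨C, fun n => by linarith [hC n]⟩

/-- The logarithmic form of the Hölder condition in `cantor_dim`. -/
lemma exists_delta {b : ℕ → ℝ} {α s L : ℝ} (hα : 1 ≤ α) (hs : 0 < s) (hsα : s < 1 / (1 + α))
    (hL : 0 ≤ L) (hb : ∀ i, 0 ≤ b i) (hbt : Tendsto b atTop atTop)
    (hgr : ∀ η > 0, ∃ C, ∀ n, b (n + 1) ≤ (α + η) * b n + C) :
    ∃ δ, 0 < δ ∧ δ < 1 ∧ ∃ C, ∀ n, 2 * s * ∑ i ∈ Finset.range (n + 1), (b i + L) ≤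
      C + (1 - δ) * (s * b n + ∑ i ∈ Finset.range n, b i) := by
  rw [lt_div_iff₀ (by linarith)] at hsα
  -- At `δ = 0` this inequality reads `s * (1 + α) < 1`.
  obtain ⟨δ, hδ0, hδ1, hδ⟩ : ∃ δ : ℝ, 0 < δ ∧ δ < 1 ∧
      s * (2 + (1 + δ) * (α - 1 + δ) + 2 * δ) < 1 - δ := by
    have hc : Tendsto (fun δ : ℝ => s * (2 + (1 + δ) * (α - 1 + δ) + 2 * δ) - (1 - δ))
        (nhds 0) (nhds (s * (2 + (1 + 0) * (α - 1 + 0) + 2 * 0) - (1 - 0))) :=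
      Continuous.tendsto (by fun_prop) 0
    have h1 := hc.eventually_lt_const (u := 0) (by linarith)
    have h2 : ∀ᶠ δ : ℝ in nhdsWithin 0 (Set.Ioi 0), 0 < δ := self_mem_nhdsWithin
    have h3 : ∀ᶠ δ : ℝ in nhdsWithin 0 (Set.Ioi 0), δ < 1 :=
      (eventually_lt_nhds one_pos).filter_mono nhdsWithin_le_nhds
    obtain ⟨δ, h4, h5, h6⟩ := ((h1.filter_mono nhdsWithin_le_nhds).and (h2.and h3)).exists
    exact ⟨δ, h5, h6, by linarith⟩
  refine ⟨δ, hδ0, hδ1, ?_⟩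
  obtain ⟨C₀, hC₀⟩ := hgr δ hδ0
  set C := max C₀ 0 with hC
  have hC0 : 0 ≤ C := le_max_right _ _
  set σ : ℕ → ℝ := fun n => ∑ i ∈ Finset.range n, b i with hσ
  have hsum : ∀ n : ℕ, b n ≤ b 0 + (α - 1 + δ) * σ n + C * n := by
    intro n
    induction n with
    | zero => simp [hσ]
    | succ n ih =>
      have h1 := hC₀ n
      have h2 : C₀ ≤ C := le_max_left _ _
      have h3 : σ (n + 1) = σ n + b n := Finset.sum_range_succ _ _
      rw [h3]; push_cast
      linarith
  have hσt : Tendsto σ atTop atTop := by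
    rw [← tendsto_add_atTop_iff_nat 1]
    refine tendsto_atTop_mono (fun n => ?_) hbt
    have h3 : σ (n + 1) = σ n + b n := Finset.sum_range_succ _ _
    have h4 : 0 ≤ σ n := Finset.sum_nonneg fun i _ => hb i
    linarith
  have hno : (fun n : ℕ => (n:ℝ)) =o[atTop] σ := by
    have h1 : (fun _ : ℕ => (1:ℝ)) =o[atTop] b :=
      Asymptotics.isLittleO_const_left.2 (Or.inr (tendsto_norm_atTop_atTop.comp hbt))
    have h2 := h1.sum_range (fun i => hb i) hσt
    simpa using h2
  set D := (1 + δ) * C + 2 * L with hD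
  have hD0 : 0 ≤ D := by positivity
  have hε : 0 < δ / (D + 1) := by positivity
  have hev1 := hno.bound hε
  have hev2 := hσt.eventually_ge_atTop (((1 + δ) * b 0 + 2 * L) / δ)
  have hfin : ∀ᶠ n in atTop, 2 * s * ∑ i ∈ Finset.range (n + 1), (b i + L) -
      (1 - δ) * (s * b n + ∑ i ∈ Finset.range n, b i) ≤ 0 := by
    filter_upwards [hev1, hev2] with n h1 h2
    have hσ0 : 0 ≤ σ n := Finset.sum_nonneg fun i _ => hb i
    have e : ∑ i ∈ Finset.range (n + 1), (b i + L) = σ n + b n + (n + 1) * L := by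
      rw [Finset.sum_add_distrib, Finset.sum_range_succ]
      simp [hσ]
    have h1' : D * n ≤ δ * σ n := by
      rw [Real.norm_of_nonneg (Nat.cast_nonneg n), Real.norm_of_nonneg hσ0, div_mul_eq_mul_div,
        le_div_iff₀ (by linarith)] at h1
      have : (0:ℝ) ≤ n := Nat.cast_nonneg n
      nlinarith
    rw [div_le_iff₀ hδ0] at h2
    have h3 := mul_le_mul_of_nonneg_left (hsum n) (by linarith : (0:ℝ) ≤ 1 + δ)
    have h4 : 2 * σ n + (1 + δ) * b n + 2 * (n + 1) * L ≤
        (2 + (1 + δ) * (α - 1 + δ) + 2 * δ) * σ n := by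
      have : D * n = (1 + δ) * C * n + 2 * L * n := by rw [hD]; ring
      linarith
    have h5 := mul_le_mul_of_nonneg_left h4 hs.le
    have h6 := mul_le_mul_of_nonneg_right hδ.le hσ0
    rw [e]
    linarith
  obtain ⟨C', hC'⟩ := exists_upper_bound hfin
  exact ⟨C', fun n => by linarith [hC' n]⟩

/-! ### Membership in the level set and the dimension bound -/

lemma S_eq_sum (n : ℕ) (x : ℝ) :
    S n x = ∑ i ∈ Finset.range n, pq (i + 1) x * pq (i + 2) x := by
  rw [S]
  induction n with
  | zero => simp
  | succ n ih => rw [Finset.sum_Icc_succ_top (by omega), ih, Finset.sum_range_succ]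

/-- If `a_{n+1} / exp (b n) → 1` and `exp (b n + b (n + 1)) = φ (n + 1) - φ n` for large `n`, then
`S_n ∼ φ n` by Stolz–Cesàro. -/
lemma tendsto_S_div {φ b : ℕ → ℝ} {x : ℝ} (hpos : ∀ n, 0 < φ n) (hmono : Monotone φ)
    (htop : Tendsto φ atTop atTop)
    (hbφ : ∀ᶠ n in atTop, Real.exp (b n + b (n + 1)) = φ (n + 1) - φ n)
    (ha : Tendsto (fun n => (pq (n + 1) x : ℝ) / Real.exp (b n)) atTop (nhds 1)) :
    Tendsto (fun n : ℕ => (S n x : ℝ) / φ n) atTop (nhds 1) := by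
  have h1 : Tendsto (fun n => ((pq (n + 1) x : ℝ) * pq (n + 2) x) / (φ (n + 1) - φ n))
      atTop (nhds 1) := by
    have := ha.mul (ha.comp (tendsto_add_atTop_nat 1))
    rw [one_mul] at this
    refine this.congr' ?_
    filter_upwards [hbφ] with n hn
    rw [← hn, Real.exp_add, Function.comp_apply, div_mul_div_comm]
  have h2 : Asymptotics.IsEquivalent atTop (fun n => (pq (n + 1) x : ℝ) * pq (n + 2) x)
      (fun n => φ (n + 1) - φ n) := Asymptotics.isEquivalent_of_tendsto_one h1
  have hφ0 : Tendsto (fun n => φ n - φ 0) atTop atTop :=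
    tendsto_atTop_add_const_right _ (-φ 0) htop
  have h3 := h2.isLittleO.sum_range (fun i => sub_nonneg.2 (hmono (Nat.le_succ i)))
    (by simpa only [Finset.sum_range_sub] using hφ0)
  simp only [Finset.sum_range_sub] at h3
  have h4 : Asymptotics.IsEquivalent atTop (fun n => (S n x : ℝ)) (fun n => φ n - φ 0) := by
    refine h3.congr_left fun n => ?_
    simp only [Pi.sub_apply, Finset.sum_sub_distrib, S_eq_sum]
    rw [← Finset.sum_range_sub φ n, Finset.sum_sub_distrib]
    push_cast
    rfl
  have h5 : Asymptotics.IsEquivalent atTop (fun n => φ n - φ 0) φ := by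
    have : (fun _ : ℕ => -φ 0) =o[atTop] φ :=
      Asymptotics.isLittleO_const_left.2 (Or.inr (tendsto_norm_atTop_atTop.comp htop))
    refine this.congr_left fun n => ?_
    simp
  exact (Asymptotics.isEquivalent_iff_tendsto_one
    (Eventually.of_forall fun n => (hpos n).ne')).1 (h4.trans h5)

theorem dimH_Ephi_lower_one_div_one_add (φ : ℕ → ℝ) (α : ℝ)
    (hpos : ∀ n, 0 < φ n) (hmono : Monotone φ)
    (htop : Tendsto φ atTop atTop)
    (hα : 1 ≤ α)
    (hinc : ∀ n : ℕ,
      Real.log (φ (n + 1)) - Real.log (φ n) ≤ Real.log (φ (n + 2)) - Real.log (φ (n + 1)))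
    (hratio : Tendsto
      (fun n : ℕ =>
        (Real.log (φ (n + 1)) - Real.log (φ n)) /
          (Real.log (φ n) - Real.log (φ (n - 1))))
      atTop (nhds α)) :
    ENNReal.ofReal (1 / (1 + α)) ≤ dimH (Ephi φ) := by
  obtain ⟨b, hb, hbt, hbφ, hgr⟩ := exists_log_sizes φ α hpos htop hα hinc hratio
  refine ENNReal.le_of_forall_nnreal_lt fun s hs => ?_
  rcases eq_or_ne s 0 with rfl | hs0
  · simp
  have hs0' : 0 < s := pos_iff_ne_zero.2 hs0
  have hsα : (s:ℝ) < 1 / (1 + α) := by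
    rw [← ENNReal.ofReal_coe_nnreal] at hs
    exact (ENNReal.ofReal_lt_ofReal_iff (by positivity)).1 hs
  have hs1 : (s:ℝ) ≤ 1 := hsα.le.trans (by rw [div_le_one (by linarith)]; linarith)
  obtain ⟨δ, hδ0, hδ1, C, hC⟩ := exists_delta (L := Real.log 5) hα (by exact_mod_cast hs0') hsα
    (Real.log_nonneg (by norm_num)) hb hbt hgr
  -- The partial quotients `a_{i+1}` range over about `exp (b i) ^ (1 - δ)` integers starting at about
  -- `exp (b i)`; the `+ 1`s ensure `A i ≥ 2` and `N i ≥ 2`.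
  set A : ℕ → ℕ := fun i => ⌈Real.exp (b i)⌉₊ + 1 with hA
  set N : ℕ → ℕ := fun i => ⌊Real.exp ((1 - δ) * b i)⌋₊ + 1 with hN
  set B : ℕ → ℝ := fun i => Real.exp (b i + Real.log 5) with hB
  have hx1 : ∀ i, 1 ≤ Real.exp (b i) := fun i => Real.one_le_exp (hb i)
  have hy1 : ∀ i, 1 ≤ Real.exp ((1 - δ) * b i) := fun i =>
    Real.one_le_exp (mul_nonneg (by linarith) (hb i))
  have hyx : ∀ i, Real.exp ((1 - δ) * b i) ≤ Real.exp (b i) := fun i =>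
    Real.exp_le_exp.2 (by nlinarith [hb i])
  have hAu : ∀ i, (A i : ℝ) ≤ Real.exp (b i) + 2 := fun i => by
    have := (Nat.ceil_lt_add_one (Real.exp_pos (b i)).le).le
    simp only [hA]; push_cast; linarith
  have hAl : ∀ i, Real.exp (b i) ≤ A i := fun i => by
    have := Nat.le_ceil (Real.exp (b i))
    simp only [hA]; push_cast; linarith
  have hNu : ∀ i, (N i : ℝ) ≤ Real.exp ((1 - δ) * b i) + 1 := fun i => by
    have := Nat.floor_le (Real.exp_pos ((1 - δ) * b i)).le
    simp only [hN]; push_cast; linarith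
  have hNl : ∀ i, Real.exp ((1 - δ) * b i) ≤ N i := fun i => by
    have := (Nat.lt_floor_add_one (Real.exp ((1 - δ) * b i))).le
    simp only [hN]; push_cast; linarith
  have hmain : (s : ENNReal) ≤ dimH {x : ℝ | x ∈ Set.Ioo (0:ℝ) 1 ∧ Irrational x ∧
      ∀ i, A i ≤ pq (i + 1) x ∧ pq (i + 1) x < A i + N i} := by
    refine cantor_dim (B := B) (K := Real.exp C) hs0' (by exact_mod_cast hs1) (fun i => ?_)
      (fun i => ?_) (fun i => ?_) (fun n => ?_)
    · have : 0 < ⌈Real.exp (b i)⌉₊ := Nat.ceil_pos.2 (Real.exp_pos _)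
      simp only [hA]; omega
    · have : 0 < ⌊Real.exp ((1 - δ) * b i)⌋₊ := Nat.floor_pos.2 (hy1 i)
      simp only [hN]; omega
    · have : B i = Real.exp (b i) * 5 := by
        simp only [hB]; rw [Real.exp_add, Real.exp_log (by norm_num)]
      rw [this]
      linarith [hAu i, hNu i, hyx i, hx1 i]
    · have e1 : ((∏ i ∈ Finset.range (n + 1), B i) ^ 2) ^ (s:ℝ) =
          Real.exp (2 * s * ∑ i ∈ Finset.range (n + 1), (b i + Real.log 5)) := by
        simp only [hB]
        rw [← Real.exp_sum, ← Real.exp_nat_mul, ← Real.exp_mul]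
        congr 1; push_cast; ring
      have e2 : Real.exp (C + (1 - δ) * (s * b n + ∑ i ∈ Finset.range n, b i)) =
          Real.exp C * (Real.exp ((1 - δ) * b n) ^ (s:ℝ) *
            ∏ i ∈ Finset.range n, Real.exp ((1 - δ) * b i)) := by
        rw [← Real.exp_sum, ← Real.exp_mul, ← Real.exp_add, ← Real.exp_add, ← Finset.mul_sum]
        congr 1; ring
      rw [e1]
      refine (Real.exp_le_exp.2 (hC n)).trans ?_
      rw [e2]
      refine mul_le_mul_of_nonneg_left ?_ (Real.exp_pos C).le
      refine mul_le_mul (Real.rpow_le_rpow (Real.exp_pos _).le (hNl n) s.2) ?_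
        (Finset.prod_nonneg fun i _ => (Real.exp_pos _).le)
        (Real.rpow_nonneg (Nat.cast_nonneg _) _)
      exact Finset.prod_le_prod (fun i _ => (Real.exp_pos _).le) fun i _ => hNl i
  refine hmain.trans (dimH_mono ?_)
  rintro x ⟨hx, hirr, hxa⟩
  refine ⟨hx, hirr, tendsto_S_div hpos hmono htop hbφ ?_⟩
  have hlim : Tendsto (fun n => 1 + 3 * Real.exp (-b n) + Real.exp (-(δ * b n))) atTop
      (nhds 1) := by
    have h1 : Tendsto (fun n => Real.exp (-b n)) atTop (nhds 0) :=
      Real.tendsto_exp_neg_atTop_nhds_zero.comp hbt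
    have h2 : Tendsto (fun n => Real.exp (-(δ * b n))) atTop (nhds 0) :=
      Real.tendsto_exp_neg_atTop_nhds_zero.comp (hbt.const_mul_atTop hδ0)
    simpa using ((h1.const_mul 3).const_add 1).add h2
  refine tendsto_of_tendsto_of_tendsto_of_le_of_le tendsto_const_nhds hlim (fun n => ?_)
    (fun n => ?_)
  · have h1 : (A n : ℝ) ≤ pq (n + 1) x := by exact_mod_cast (hxa n).1
    change 1 ≤ (pq (n + 1) x : ℝ) / Real.exp (b n)
    rw [one_le_div (Real.exp_pos _)]
    exact (hAl n).trans h1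
  · have h1 : (pq (n + 1) x : ℝ) ≤ A n + N n := by exact_mod_cast (hxa n).2.le
    change (pq (n + 1) x : ℝ) / Real.exp (b n) ≤ 1 + 3 * Real.exp (-b n) + Real.exp (-(δ * b n))
    rw [div_le_iff₀ (Real.exp_pos _)]
    have e1 : Real.exp (-b n) * Real.exp (b n) = 1 := by
      rw [← Real.exp_add]; simp
    have e2 : Real.exp (-(δ * b n)) * Real.exp (b n) = Real.exp ((1 - δ) * b n) := by
      rw [← Real.exp_add]; congr 1; ring
    have e3 : (1 + 3 * Real.exp (-b n) + Real.exp (-(δ * b n))) * Real.exp (b n) =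
        Real.exp (b n) + 3 + Real.exp ((1 - δ) * b n) := by
      linear_combination 3 * e1 + e2
    rw [e3]
    linarith [hAu n, hNu n]
end
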